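/- arXiv:2407.02365 — 2 statements merged into one kernel-verified Lean document; each statement's English description precedes it below -/
import Mathlib

section
/- Let k ∈ (0,1). Then I_1^+ = −2(1−2k²) and I_2^+ = 16(1 − k² + k⁴). Moreover, if k² is a rational number, then Kuznetsov's moment integral I_n^+ is a rational number for every n ∈ ℕ. -/
/-!
With `a = K`, `b = K'` and the kernels `w_{p,q}(s) = 1 / (cos ps + cosh qs)`, the substitution
`x = s²` turns the moments into Taylor coefficients at `0` of
`F(u) = ∫₀^∞ sin(su) w_{a,b}(s) ds + ∫₀^∞ sinh(su) w_{b,a}(s) ds`,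
namely `I_n^+ = (-1)^n F⁽²ⁿ⁺¹⁾(0)` (`Iplus_eq`). The function `F` is holomorphic on the rectangle
`|Re u| < a`, `|Im u| < b`, and it turns out to be an elliptic function: it satisfies
`F'² = F⁴ + 2(1 - 2k²)F² + 1`, `F(0) = 0`, `F'(0) = 1`. Differentiating this equation repeatedly
expresses `F⁽²ⁿ⁺¹⁾(0)` as an integer polynomial in `2(1 - 2k²)` (`genF_odd_zero`), which gives both
the two explicit values and the rationality.

The differential equation is proved for arbitrary `a, b > 0` with unknown coefficients first. Since
`cosh as + cos bs = 2 cosh(sω) cosh(sω̄)` for `ω = (a - bi)/2`, rotating the path of integration by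
a right angle shows that `F(u + a ± bi) = -F(u)` whenever both points lie in the rectangle
(`genF_antiperiodic`). The same rotation shows that at `u = a` the expansion of `F` is
`-1/v + r v + O(v³)`, `v = u - a`, without a constant or a quadratic term (`remF_even_eq_zero`).
Hence, with `B = 6r`, the function `F'² - F⁴ - B F²` is even, invariant under `a ± bi`, and has a
finite limit at the four vertices `±a, ±bi` of a fundamental diamond. The maximum principle makes it
constant (`liouville_rect`), so `F'² = F⁴ + B F² + A` with `A = F'(0)²`.

On `[0, a)` the function `F` is a real solution that blows up at `a`, so
`a = ∫₀^∞ dt/√(t⁴ + Bt² + A)` (`blowup_time`); the symmetry `u ↦ iu` gives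
`b = ∫₀^∞ dt/√(t⁴ - Bt² + A)`. The half-angle substitution shows that `K` and `K'` have these forms
with `A = 1`, `B = 2(1 - 2k²)` (`ellipticK_eq_quarticInt`). The integrals are strictly decreasing in
`A` and in the coefficient of `t²`, so the pair `(a, b)` determines `(A, B)` (`quartic_unique`).
-/

open MeasureTheory Real

/-- The complete elliptic integral of the first kind `K(k)`. -/
noncomputable def ellipticK (k : ℝ) : ℝ :=
  ∫ θ in (0 : ℝ)..(π / 2), (1 - k ^ 2 * Real.sin θ ^ 2) ^ (-(1 / 2) : ℝ)

/-- Kuznetsov's moment integral `I_n^+`, realizing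
`(1/2)∫_ℝ x^n dx/(cos(√x K) + cosh(√x K'))` with `√x = i√(−x)` for `x < 0`. -/
noncomputable def Iplus (k : ℝ) (n : ℕ) : ℝ :=
  (1 / 2) * (∫ x in Set.Ioi (0 : ℝ), x ^ n /
      (Real.cos (ellipticK k * Real.sqrt x) +
        Real.cosh (ellipticK (Real.sqrt (1 - k ^ 2)) * Real.sqrt x)))
  + ((-1 : ℝ) ^ n / 2) * (∫ x in Set.Ioi (0 : ℝ), x ^ n /
      (Real.cosh (ellipticK k * Real.sqrt x) +
        Real.cos (ellipticK (Real.sqrt (1 - k ^ 2)) * Real.sqrt x)))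

/-- Kuznetsov's moment integral `I_n^−`, realizing
`∫_ℝ x^{n+1} dx/(cos(√x K) − cosh(√x K'))` with `√x = i√(−x)` for `x < 0`. -/
noncomputable def Iminus (k : ℝ) (n : ℕ) : ℝ :=
  (∫ x in Set.Ioi (0 : ℝ), x ^ (n + 1) /
      (Real.cos (ellipticK k * Real.sqrt x) -
        Real.cosh (ellipticK (Real.sqrt (1 - k ^ 2)) * Real.sqrt x)))
  + (-1 : ℝ) ^ (n + 1) * (∫ x in Set.Ioi (0 : ℝ), x ^ (n + 1) /
      (Real.cosh (ellipticK k * Real.sqrt x) -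
        Real.cos (ellipticK (Real.sqrt (1 - k ^ 2)) * Real.sqrt x)))

namespace Kuznetsov

open Filter Topology

/-! ### Laplace transforms of exponentially decaying weights -/

/-- The `n`-th derivative of the Laplace transform `u ↦ ∫₀^∞ e^{su} w(s) ds`, written as the moment
integral `∫₀^∞ sⁿ e^{su} w(s) ds`. -/
noncomputable def lap (w : ℝ → ℝ) (n : ℕ) (u : ℂ) : ℂ :=
  ∫ s in Set.Ioi (0 : ℝ), (s : ℂ) ^ n * Complex.exp (s * u) * (w s : ℂ)

/-- The weight `w` is continuous and `O(e^{-cs})` on `[0, ∞)`. -/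
def ExpDecay (w : ℝ → ℝ) (c : ℝ) : Prop :=
  Continuous w ∧ ∃ C : ℝ, 0 ≤ C ∧ ∀ s : ℝ, 0 ≤ s → |w s| ≤ C * Real.exp (-c * s)

lemma integrableOn_pow_mul_exp (n : ℕ) {ε : ℝ} (hε : 0 < ε) :
    IntegrableOn (fun s : ℝ => s ^ n * Real.exp (-ε * s)) (Set.Ioi 0) := by
  have := integrableOn_rpow_mul_exp_neg_mul_rpow (p := 1) (s := n) (b := ε)
    (by have : (0 : ℝ) ≤ n := n.cast_nonneg
        linarith) one_pos hε
  simpa using this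

lemma lap_integrand_continuous {w : ℝ → ℝ} (hw : Continuous w) (n : ℕ) (u : ℂ) :
    Continuous fun s : ℝ => (s : ℂ) ^ n * Complex.exp (s * u) * (w s : ℂ) := by
  fun_prop

lemma lap_integrand_bound {w : ℝ → ℝ} {c C : ℝ}
    (hC : ∀ s : ℝ, 0 ≤ s → |w s| ≤ C * Real.exp (-c * s)) (n : ℕ) {u : ℂ} {ε : ℝ}
    (hu : u.re ≤ c - ε) {s : ℝ} (hs : 0 < s) :
    ‖(s : ℂ) ^ n * Complex.exp (s * u) * (w s : ℂ)‖ ≤ C * (s ^ n * Real.exp (-ε * s)) := by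
  have h1 : ‖(s : ℂ) ^ n * Complex.exp (s * u) * (w s : ℂ)‖
      = s ^ n * Real.exp (s * u.re) * |w s| := by
    simp [Complex.norm_exp, abs_of_pos hs]
  have hCn : 0 ≤ C := by
    have := (abs_nonneg _).trans (hC 0 le_rfl)
    simpa using this
  rw [h1]
  calc s ^ n * Real.exp (s * u.re) * |w s|
      ≤ s ^ n * Real.exp (s * u.re) * (C * Real.exp (-c * s)) := by
        gcongr; exact hC s hs.le
    _ = C * (s ^ n * Real.exp (s * u.re + -c * s)) := by rw [Real.exp_add]; ring
    _ ≤ C * (s ^ n * Real.exp (-ε * s)) := by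
        gcongr; nlinarith

lemma lap_integrable {w : ℝ → ℝ} {c : ℝ} (hw : ExpDecay w c) (n : ℕ) {u : ℂ} (hu : u.re < c) :
    IntegrableOn (fun s : ℝ => (s : ℂ) ^ n * Complex.exp (s * u) * (w s : ℂ)) (Set.Ioi 0) := by
  obtain ⟨hc, C, -, hC⟩ := hw
  refine Integrable.mono' ((integrableOn_pow_mul_exp n (sub_pos.2 hu)).const_mul C)
    (lap_integrand_continuous hc n u).aestronglyMeasurable ?_
  filter_upwards [ae_restrict_mem measurableSet_Ioi] with s hs
  exact lap_integrand_bound hC n (by linarith) hs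

lemma hasDerivAt_lap {w : ℝ → ℝ} {c : ℝ} (hw : ExpDecay w c) (n : ℕ) {u : ℂ} (hu : u.re < c) :
    HasDerivAt (lap w n) (lap w (n + 1) u) u := by
  have hint := lap_integrable hw n hu
  obtain ⟨hc, C, -, hC⟩ := hw
  set ε := (c - u.re) / 2 with hε
  have hε0 : 0 < ε := by linarith
  refine (hasDerivAt_integral_of_dominated_loc_of_deriv_le (𝕜 := ℂ) (E := ℂ)
    (μ := volume.restrict (Set.Ioi (0 : ℝ))) (s := {z : ℂ | z.re < u.re + ε}) (x₀ := u)
    (F := fun z (s : ℝ) => (s : ℂ) ^ n * Complex.exp (s * z) * (w s : ℂ))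
    (F' := fun z (s : ℝ) => (s : ℂ) ^ (n + 1) * Complex.exp (s * z) * (w s : ℂ))
    (bound := fun s => C * (s ^ (n + 1) * Real.exp (-ε * s))) ?_ ?_ ?_ ?_ ?_ ?_ ?_).2
  · exact (isOpen_lt Complex.continuous_re continuous_const).mem_nhds (by simp [hε0])
  · exact Filter.Eventually.of_forall fun z =>
      (lap_integrand_continuous hc n z).aestronglyMeasurable
  · exact hint
  · exact (lap_integrand_continuous hc (n + 1) u).aestronglyMeasurable
  · filter_upwards [ae_restrict_mem measurableSet_Ioi] with s hs z hz
    refine lap_integrand_bound hC (n + 1) ?_ hs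
    have : z.re < u.re + ε := hz
    linarith
  · exact (integrableOn_pow_mul_exp (n + 1) hε0).const_mul C
  · refine Filter.Eventually.of_forall fun s z _ => ?_
    have h := (((hasDerivAt_id z).const_mul (s : ℂ)).cexp.const_mul ((s : ℂ) ^ n)).mul_const
      (w s : ℂ)
    exact h.congr_deriv (by simp only [id]; ring)

lemma lap_conj (w : ℝ → ℝ) (n : ℕ) (u : ℂ) :
    lap w n ((starRingEnd ℂ) u) = (starRingEnd ℂ) (lap w n u) := by
  unfold lap
  rw [← integral_conj]
  congr 1
  ext s
  simp [← Complex.exp_conj]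

lemma lap_zero_arg (w : ℝ → ℝ) (n : ℕ) :
    lap w n 0 = ((∫ s in Set.Ioi (0 : ℝ), s ^ n * w s : ℝ) : ℂ) := by
  unfold lap
  rw [← integral_complex_ofReal]
  congr 1
  ext s
  simp

/-! ### Rotation of the half-line by a right angle -/

lemma tendsto_mul_exp_neg {c : ℝ} (hc : 0 < c) (C : ℝ) :
    Filter.Tendsto (fun R : ℝ => C * Real.exp (-c * R) * R) Filter.atTop (nhds 0) := by
  have := (Real.tendsto_pow_mul_exp_neg_atTop_nhds_zero 1).comp
    (Filter.tendsto_id.const_mul_atTop hc)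
  have h2 := this.const_mul (C / c)
  rw [mul_zero] at h2
  refine h2.congr fun R => ?_
  simp only [Function.comp, id, pow_one, neg_mul]
  field_simp

/-- Cauchy's theorem on the squares `[0, R]²`, `R → ∞`: a function which is holomorphic and
exponentially decaying in the closed first quadrant has the same integral along both axes. -/
lemma quadrant_rotation {h : ℂ → ℂ} {C c : ℝ} (hc : 0 < c)
    (hd : ∀ z : ℂ, 0 ≤ z.re → 0 ≤ z.im → DifferentiableAt ℂ h z)
    (hb : ∀ x y : ℝ, 0 ≤ x → 0 ≤ y → ‖h (x + y * Complex.I)‖ ≤ C * Real.exp (-c * (x + y))) :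
    IntegrableOn (fun x : ℝ => h x) (Set.Ioi 0) ∧
    IntegrableOn (fun y : ℝ => h (y * Complex.I)) (Set.Ioi 0) ∧
    ∫ x in Set.Ioi (0 : ℝ), h x = Complex.I * ∫ y in Set.Ioi (0 : ℝ), h (y * Complex.I) := by
  have hC : 0 ≤ C := by
    have := (norm_nonneg _).trans (hb 0 0 le_rfl le_rfl)
    simpa using this
  have hexp : IntegrableOn (fun s : ℝ => C * Real.exp (-c * s)) (Set.Ioi 0) := by
    simpa [IntegrableOn] using (integrableOn_pow_mul_exp 0 hc).const_mul C
  have hcx : ContinuousOn (fun x : ℝ => h x) (Set.Ioi 0) := fun x hx =>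
    ((hd x (by simpa using le_of_lt hx) (by simp)).continuousAt.comp (f := fun x : ℝ => (x : ℂ))
      (by fun_prop)).continuousWithinAt
  have hcy : ContinuousOn (fun y : ℝ => h (y * Complex.I)) (Set.Ioi 0) := fun y hy =>
    ((hd (y * Complex.I) (by simp) (by simpa using le_of_lt hy)).continuousAt.comp
      (f := fun y : ℝ => (y * Complex.I : ℂ)) (by fun_prop)).continuousWithinAt
  have hix : IntegrableOn (fun x : ℝ => h x) (Set.Ioi 0) := by
    refine Integrable.mono' hexp (hcx.aestronglyMeasurable measurableSet_Ioi) ?_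
    filter_upwards [ae_restrict_mem measurableSet_Ioi] with s hs
    simpa using hb s 0 (le_of_lt hs) le_rfl
  have hiy : IntegrableOn (fun y : ℝ => h (y * Complex.I)) (Set.Ioi 0) := by
    refine Integrable.mono' hexp (hcy.aestronglyMeasurable measurableSet_Ioi) ?_
    filter_upwards [ae_restrict_mem measurableSet_Ioi] with s hs
    simpa using hb 0 s le_rfl (le_of_lt hs)
  have t1 := intervalIntegral_tendsto_integral_Ioi 0 hix Filter.tendsto_id
  have t2 := (intervalIntegral_tendsto_integral_Ioi 0 hiy Filter.tendsto_id).const_mul Complex.I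
  have key : ∀ R : ℝ, 0 ≤ R →
      (∫ x in (0 : ℝ)..R, h x) - Complex.I * (∫ y in (0 : ℝ)..R, h (y * Complex.I))
      = (∫ x in (0 : ℝ)..R, h (x + R * Complex.I))
        - Complex.I * ∫ y in (0 : ℝ)..R, h (R + y * Complex.I) := by
    intro R hR
    have := Complex.integral_boundary_rect_eq_zero_of_differentiableOn h 0 (R + R * Complex.I)
      (fun z hz => by
        simp only [Complex.mem_reProdIm, Complex.zero_re, Complex.zero_im, Complex.add_re,
          Complex.ofReal_re, Complex.mul_re, Complex.I_re, Complex.ofReal_im, Complex.I_im,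
          Complex.add_im, Complex.mul_im, mul_zero, mul_one, sub_zero, add_zero,
          zero_add, Set.uIcc_of_le hR, Set.mem_Icc] at hz
        exact (hd z hz.1.1 hz.2.1).differentiableWithinAt)
    simp at this
    linear_combination this
  have t3 : Filter.Tendsto (fun R : ℝ => (∫ x in (0 : ℝ)..R, h (x + R * Complex.I))
        - Complex.I * ∫ y in (0 : ℝ)..R, h (R + y * Complex.I)) Filter.atTop (nhds 0) := by
    refine squeeze_zero_norm' ?_ (tendsto_mul_exp_neg hc (2 * C))
    filter_upwards [Filter.eventually_ge_atTop 0] with R hR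
    have b1 : ‖∫ x in (0 : ℝ)..R, h (x + R * Complex.I)‖ ≤ C * Real.exp (-c * R) * |R - 0| := by
      refine intervalIntegral.norm_integral_le_of_norm_le_const fun x hx => ?_
      rw [Set.uIoc_of_le hR] at hx
      refine (hb x R hx.1.le hR).trans ?_
      gcongr C * Real.exp ?_
      nlinarith [hx.1]
    have b2 : ‖∫ y in (0 : ℝ)..R, h (R + y * Complex.I)‖ ≤ C * Real.exp (-c * R) * |R - 0| := by
      refine intervalIntegral.norm_integral_le_of_norm_le_const fun x hx => ?_
      rw [Set.uIoc_of_le hR] at hx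
      refine (hb R x hR hx.1.le).trans ?_
      gcongr C * Real.exp ?_
      nlinarith [hx.1]
    rw [sub_zero, abs_of_nonneg hR] at b1 b2
    refine (norm_sub_le _ _).trans ?_
    rw [norm_mul, Complex.norm_I, one_mul]
    linarith
  have t4 := (t1.sub t2).congr' (by
    filter_upwards [Filter.eventually_ge_atTop 0] with R hR using key R hR)
  exact ⟨hix, hiy, sub_eq_zero.1 (tendsto_nhds_unique t4 t3)⟩

/-! ### The kernels -/

/-- The kernel `1 / (cos(ps) + cosh(qs))`. -/
noncomputable def weight (p q s : ℝ) : ℝ := (Real.cos (p * s) + Real.cosh (q * s))⁻¹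

/-- The quarter period `(a - bi)/2`. For real `s` the kernel denominators factor as
`cosh(as) + cos(bs) = 2 cosh(sω) cosh(s ω̄)`. -/
noncomputable def omg (a b : ℝ) : ℂ := (a - b * Complex.I) / 2

lemma two_mul_norm_cosh_sq (z : ℂ) :
    2 * ‖Complex.cosh z‖ ^ 2 = Real.cosh (2 * z.re) + Real.cos (2 * z.im) := by
  have h : Complex.cosh z = (Real.cosh z.re * Real.cos z.im : ℝ)
      + (Real.sinh z.re * Real.sin z.im : ℝ) * Complex.I := by
    conv_lhs => rw [← Complex.re_add_im z, Complex.cosh_add, Complex.cosh_mul_I,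
      Complex.sinh_mul_I]
    push_cast
    ring
  rw [h, ← Complex.normSq_eq_norm_sq, Complex.normSq_add_mul_I, Real.cosh_two_mul,
    Real.cos_two_mul]
  have h1 := Real.cosh_sq z.re
  have h2 := Real.sin_sq z.im
  rw [mul_pow, mul_pow, h1, h2]
  ring

lemma mul_omg_re (a b x y : ℝ) : (((x : ℂ) + y * Complex.I) * omg a b).re = (a * x + b * y) / 2 := by
  simp [omg]
  ring

lemma mul_omg_im (a b x y : ℝ) : (((x : ℂ) + y * Complex.I) * omg a b).im = (a * y - b * x) / 2 := by
  simp [omg]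
  ring

lemma cosh_omg_ne_zero {a b : ℝ} (ha : 0 < a) (hb : 0 < b) {x y : ℝ} (hx : 0 ≤ x) (hy : 0 ≤ y) :
    Complex.cosh (((x : ℂ) + y * Complex.I) * omg a b) ≠ 0 := by
  intro h
  have := two_mul_norm_cosh_sq (((x : ℂ) + y * Complex.I) * omg a b)
  rw [h, mul_omg_re, mul_omg_im] at this
  simp only [norm_zero] at this
  rcases eq_or_ne (a * x + b * y) 0 with h0 | h0
  · have hx0 : x = 0 := by nlinarith [mul_nonneg ha.le hx, mul_nonneg hb.le hy]
    have hy0 : y = 0 := by nlinarith [mul_nonneg ha.le hx, mul_nonneg hb.le hy]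
    subst hx0; subst hy0
    norm_num at this
  · have h1 : 1 < Real.cosh (2 * ((a * x + b * y) / 2)) :=
      Real.one_lt_cosh.2 (by intro h2; apply h0; linarith)
    have h2 := Real.neg_one_le_cos (2 * ((a * y - b * x) / 2))
    norm_num at this
    linarith

lemma inv_cosh_omg_bound {a b : ℝ} (ha : 0 < a) (hb : 0 < b) :
    ∃ C : ℝ, 0 ≤ C ∧ ∀ x y : ℝ, 0 ≤ x → 0 ≤ y →
      ‖(Complex.cosh (((x : ℂ) + y * Complex.I) * omg a b))⁻¹‖
        ≤ C * Real.exp (-((a * x + b * y) / 2)) := by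
  have hcont : ContinuousOn
      (fun p : ℝ × ℝ => (Complex.cosh (((p.1 : ℂ) + p.2 * Complex.I) * omg a b))⁻¹)
      (Set.Icc 0 (2 / a) ×ˢ Set.Icc 0 (2 / b)) := by
    refine ContinuousOn.inv₀ (by fun_prop) ?_
    rintro ⟨x, y⟩ ⟨hx, hy⟩
    exact cosh_omg_ne_zero ha hb hx.1 hy.1
  obtain ⟨M, hM⟩ := (isCompact_Icc.prod isCompact_Icc).exists_bound_of_continuousOn hcont
  refine ⟨max 3 (M * Real.exp 1), le_max_of_le_left (by norm_num), fun x y hx hy => ?_⟩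
  have hax : 0 ≤ a * x := by positivity
  have hby : 0 ≤ b * y := by positivity
  rcases le_total (a * x + b * y) 2 with h2 | h2
  · have h := hM (x, y) ⟨⟨hx, by rw [le_div_iff₀ ha]; linarith⟩,
      ⟨hy, by rw [le_div_iff₀ hb]; linarith⟩⟩
    have hM0 : 0 ≤ M := (norm_nonneg _).trans h
    refine h.trans ?_
    calc M = M * Real.exp 1 * Real.exp (-1) := by
          rw [mul_assoc, ← Real.exp_add]; simp
      _ ≤ max 3 (M * Real.exp 1) * Real.exp (-((a * x + b * y) / 2)) := by
          gcongr
          · exact le_max_right _ _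
          · linarith
  · set X := a * x + b * y with hX
    have h := two_mul_norm_cosh_sq (((x : ℂ) + y * Complex.I) * omg a b)
    rw [mul_omg_re, mul_omg_im, ← hX] at h
    have h3 := Real.neg_one_le_cos (2 * ((a * y - b * x) / 2))
    have h4 : Real.cosh (2 * (X / 2)) = (Real.exp X + Real.exp (-X)) / 2 := by
      rw [Real.cosh_eq]; ring_nf
    have h5 : 4 ≤ Real.exp X := by
      have := Real.quadratic_le_exp_of_nonneg (x := X) (by linarith)
      nlinarith
    have h6 := Real.exp_pos (-X)
    have h7 : Real.exp X = Real.exp (X / 2) ^ 2 := by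
      rw [← Real.exp_nat_mul]; ring_nf
    set N := ‖Complex.cosh (((x : ℂ) + y * Complex.I) * omg a b)‖ with hN
    have h8 : Real.exp (X / 2) ≤ 3 * N := by
      refine abs_le_of_sq_le_sq' ?_ (by positivity) |>.2
      nlinarith
    have hNpos : 0 < N := by
      have := Real.exp_pos (X / 2)
      linarith
    rw [norm_inv, ← hN]
    calc N⁻¹ ≤ 3 * Real.exp (-(X / 2)) := by
          rw [Real.exp_neg, inv_le_iff_one_le_mul₀ hNpos, mul_comm (3 : ℝ), mul_assoc,
            ← div_eq_inv_mul, le_div_iff₀ (Real.exp_pos _)]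
          linarith
      _ ≤ _ := by
          gcongr
          exact le_max_left _ _

lemma weight_den_eq (a b s : ℝ) :
    Real.cos (b * s) + Real.cosh (a * s) = 2 * ‖Complex.cosh (s * omg a b)‖ ^ 2 := by
  have h := two_mul_norm_cosh_sq (((s : ℂ) + (0 : ℝ) * Complex.I) * omg a b)
  rw [mul_omg_re, mul_omg_im] at h
  simp only [Complex.ofReal_zero, zero_mul, add_zero] at h
  rw [h, add_comm, ← Real.cos_neg (b * s)]
  congr 2 <;> ring

lemma weight_den_pos {q : ℝ} (p : ℝ) (hq : 0 < q) (s : ℝ) :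
    0 < Real.cos (p * s) + Real.cosh (q * s) := by
  rcases eq_or_ne s 0 with rfl | hs
  · simp
  · have h1 : 1 < Real.cosh (q * s) := Real.one_lt_cosh.2 (mul_ne_zero hq.ne' hs)
    linarith [Real.neg_one_le_cos (p * s)]

lemma weight_pos {q : ℝ} (p : ℝ) (hq : 0 < q) (s : ℝ) : 0 < weight p q s :=
  inv_pos.2 (weight_den_pos p hq s)

lemma weight_continuous {q : ℝ} (p : ℝ) (hq : 0 < q) : Continuous (weight p q) := by
  unfold weight
  exact Continuous.inv₀ (by fun_prop) fun s => (weight_den_pos p hq s).ne'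

lemma weight_decay {a b : ℝ} (ha : 0 < a) (hb : 0 < b) : ExpDecay (weight b a) a := by
  refine ⟨weight_continuous b ha, ?_⟩
  obtain ⟨C, hC0, hC⟩ := inv_cosh_omg_bound ha hb
  refine ⟨C ^ 2 / 2, by positivity, fun s hs => ?_⟩
  have h := hC s 0 hs le_rfl
  simp only [Complex.ofReal_zero, zero_mul, add_zero, mul_zero] at h
  rw [abs_of_pos (weight_pos b ha s), weight, weight_den_eq, mul_inv, ← inv_pow, ← norm_inv]
  have e : Real.exp (-a * s) = Real.exp (-(a * s / 2)) ^ 2 := by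
    rw [← Real.exp_nat_mul]; ring_nf
  rw [e]
  calc 2⁻¹ * ‖(Complex.cosh (s * omg a b))⁻¹‖ ^ 2
      ≤ 2⁻¹ * (C * Real.exp (-(a * s / 2))) ^ 2 := by gcongr
    _ = _ := by ring

/-- The kernel with its leading exponential removed; it decays twice as fast. -/
noncomputable def weightRem (p q s : ℝ) : ℝ := weight p q s - 2 * Real.exp (-q * s)

lemma weightRem_decay {a b : ℝ} (ha : 0 < a) (hb : 0 < b) :
    ExpDecay (weightRem b a) (2 * a) := by
  obtain ⟨hc, C, hC0, hC⟩ := weight_decay ha hb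
  refine ⟨by unfold weightRem; fun_prop, C * 3, by positivity, fun s hs => ?_⟩
  have hd := weight_den_pos b ha s
  have key : weightRem b a s = weight b a s * (-(2 * Real.exp (-a * s) * Real.cos (b * s))
      - Real.exp (-a * s) ^ 2) := by
    have hcosh : 2 * Real.exp (-a * s) * Real.cosh (a * s) = 1 + Real.exp (-a * s) ^ 2 := by
      have : Real.exp (-a * s) * Real.exp (a * s) = 1 := by
        rw [← Real.exp_add]; simp
      rw [Real.cosh_eq, show -(a * s) = -a * s by ring]
      linear_combination this
    unfold weightRem
    have hw : weight b a s * (Real.cos (b * s) + Real.cosh (a * s)) = 1 := inv_mul_cancel₀ hd.ne'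
    linear_combination 2 * Real.exp (-a * s) * hw - weight b a s * hcosh
  rw [key, abs_mul]
  have he1 : Real.exp (-a * s) ≤ 1 := Real.exp_le_one_iff.2 (by nlinarith)
  have he0 := Real.exp_pos (-a * s)
  have hbd : |-(2 * Real.exp (-a * s) * Real.cos (b * s)) - Real.exp (-a * s) ^ 2|
      ≤ 3 * Real.exp (-a * s) := by
    have h1 := Real.cos_le_one (b * s)
    have h2 := Real.neg_one_le_cos (b * s)
    rw [abs_le]
    constructor <;> nlinarith
  calc |weight b a s| * |-(2 * Real.exp (-a * s) * Real.cos (b * s)) - Real.exp (-a * s) ^ 2|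
      ≤ (C * Real.exp (-a * s)) * (3 * Real.exp (-a * s)) := by
        gcongr; exact hC s hs
    _ = C * 3 * Real.exp (-(2 * a) * s) := by
        rw [show -(2 * a) * s = -a * s + -a * s by ring, Real.exp_add]; ring

/-! ### The generating function of the moments -/

/-- `genF a b n` is the `n`-th derivative of
`f(u) = ∫₀^∞ sin(su)/(cos(as) + cosh(bs)) ds + ∫₀^∞ sinh(su)/(cosh(as) + cos(bs)) ds`,
holomorphic on the rectangle `|Re u| < a`, `|Im u| < b`. -/
noncomputable def genF (a b : ℝ) (n : ℕ) (u : ℂ) : ℂ :=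
  (Complex.I ^ n * lap (weight a b) n (Complex.I * u)
    - (-Complex.I) ^ n * lap (weight a b) n (-(Complex.I * u))) / (2 * Complex.I)
  + (lap (weight b a) n u - (-1) ^ n * lap (weight b a) n (-u)) / 2

/-- The open rectangle with vertices `±a ± bi`. -/
def rect (a b : ℝ) : Set ℂ := {u | |u.re| < a ∧ |u.im| < b}

lemma mem_rect {a b : ℝ} {u : ℂ} : u ∈ rect a b ↔ |u.re| < a ∧ |u.im| < b := Iff.rfl

lemma isOpen_rect (a b : ℝ) : IsOpen (rect a b) := by
  have h1 : IsOpen {u : ℂ | |u.re| < a} := isOpen_lt (by fun_prop) continuous_const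
  have h2 : IsOpen {u : ℂ | |u.im| < b} := isOpen_lt (by fun_prop) continuous_const
  exact h1.inter h2

lemma neg_mem_rect {a b : ℝ} {u : ℂ} (hu : u ∈ rect a b) : -u ∈ rect a b := by
  simpa [mem_rect] using hu

lemma conj_mem_rect {a b : ℝ} {u : ℂ} (hu : u ∈ rect a b) : (starRingEnd ℂ) u ∈ rect a b := by
  simpa [mem_rect] using hu

lemma zero_mem_rect {a b : ℝ} (ha : 0 < a) (hb : 0 < b) : (0 : ℂ) ∈ rect a b := by
  simp [mem_rect, ha, hb]

lemma convex_rect (a b : ℝ) : Convex ℝ (rect a b) := by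
  have : rect a b = Complex.reLm ⁻¹' (Set.Ioo (-a) a) ∩ Complex.imLm ⁻¹' (Set.Ioo (-b) b) := by
    ext u
    simp [mem_rect, abs_lt]
  rw [this]
  exact ((convex_Ioo _ _).linear_preimage _).inter ((convex_Ioo _ _).linear_preimage _)

lemma lap_comp_mul_hasDerivAt {w : ℝ → ℝ} {c : ℝ} (hw : ExpDecay w c) (n : ℕ) (k : ℂ) {u : ℂ}
    (hu : (k * u).re < c) :
    HasDerivAt (fun z => k ^ n * lap w n (k * z)) (k ^ (n + 1) * lap w (n + 1) (k * u)) u := by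
  have h := ((hasDerivAt_lap hw n hu).comp u ((hasDerivAt_id u).const_mul k)).const_mul (k ^ n)
  exact h.congr_deriv (by simp only [pow_succ]; ring)

lemma genF_part1_hasDerivAt {a b : ℝ} (ha : 0 < a) (hb : 0 < b) (n : ℕ) {u : ℂ}
    (h2 : |u.im| < b) :
    HasDerivAt (fun u => (Complex.I ^ n * lap (weight a b) n (Complex.I * u)
      - (-Complex.I) ^ n * lap (weight a b) n (-(Complex.I * u))) / (2 * Complex.I))
      ((Complex.I ^ (n + 1) * lap (weight a b) (n + 1) (Complex.I * u)
      - (-Complex.I) ^ (n + 1) * lap (weight a b) (n + 1) (-(Complex.I * u))) / (2 * Complex.I))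
      u := by
  rw [abs_lt] at h2
  have d1 := lap_comp_mul_hasDerivAt (weight_decay hb ha) n Complex.I (u := u)
    (by simp; linarith)
  have d2 := lap_comp_mul_hasDerivAt (weight_decay hb ha) n (-Complex.I) (u := u)
    (by simp; linarith)
  simp only [neg_mul] at d2
  exact (d1.sub d2).div_const (2 * Complex.I)

lemma hasDerivAt_genF {a b : ℝ} (ha : 0 < a) (hb : 0 < b) (n : ℕ) {u : ℂ} (hu : u ∈ rect a b) :
    HasDerivAt (genF a b n) (genF a b (n + 1) u) u := by
  obtain ⟨h1, h2⟩ := hu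
  rw [abs_lt] at h1
  have d3 := hasDerivAt_lap (weight_decay ha hb) n (u := u) (by linarith)
  have d4 := lap_comp_mul_hasDerivAt (weight_decay ha hb) n (-1) (u := u)
    (by simp; linarith)
  simp only [neg_mul, one_mul] at d4
  have := (genF_part1_hasDerivAt ha hb n h2).add ((d3.sub d4).div_const 2)
  exact this.congr_deriv (by unfold genF; ring)

lemma genF_neg (a b : ℝ) (n : ℕ) (u : ℂ) : genF a b n (-u) = -((-1) ^ n * genF a b n u) := by
  have h : (-Complex.I) ^ n = (-1) ^ n * Complex.I ^ n := by rw [← mul_pow]; ring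
  have h' : ((-1 : ℂ) ^ n) * (-1) ^ n = 1 := by rw [← mul_pow]; simp
  unfold genF
  rw [h]
  simp only [mul_neg, neg_neg]
  linear_combination (-(Complex.I ^ n * lap (weight a b) n (-(Complex.I * u))) / (2 * Complex.I)
    - lap (weight b a) n (-u) / 2) * h'

lemma genF_conj (a b : ℝ) (n : ℕ) (u : ℂ) :
    genF a b n ((starRingEnd ℂ) u) = (starRingEnd ℂ) (genF a b n u) := by
  have e1 : Complex.I * (starRingEnd ℂ) u = (starRingEnd ℂ) (-(Complex.I * u)) := by simp
  have e2 : -(Complex.I * (starRingEnd ℂ) u) = (starRingEnd ℂ) (Complex.I * u) := by simp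
  have e3 : -(starRingEnd ℂ) u = (starRingEnd ℂ) (-u) := by simp
  unfold genF
  rw [e2, e1, e3, lap_conj, lap_conj, lap_conj, lap_conj]
  simp only [ map_add, map_sub, map_mul, map_div₀, map_pow, map_neg, Complex.conj_I,
    map_one, map_ofNat, neg_neg]
  congr 1
  rw [mul_neg, div_neg, ← neg_div, neg_sub]

lemma genF_rot_zero (a b : ℝ) (u : ℂ) :
    genF a b 0 (Complex.I * u) = Complex.I * genF b a 0 u := by
  have e : Complex.I * (Complex.I * u) = -u := by rw [← mul_assoc, Complex.I_mul_I]; ring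
  unfold genF
  rw [e]
  simp only [pow_zero, one_mul, neg_neg]
  field_simp
  linear_combination (lap (weight a b) 0 (-u) - lap (weight a b) 0 u) * Complex.I_sq

lemma genF_rot_one (a b : ℝ) (u : ℂ) :
    genF a b 1 (Complex.I * u) = genF b a 1 u := by
  have e : Complex.I * (Complex.I * u) = -u := by rw [← mul_assoc, Complex.I_mul_I]; ring
  unfold genF
  rw [e]
  simp only [pow_one, neg_neg]
  field_simp
  ring

lemma genF_zero_odd (a b : ℝ) (m : ℕ) :
    genF a b (2 * m + 1) 0 = (((-1) ^ m * (∫ s in Set.Ioi (0 : ℝ), s ^ (2 * m + 1) * weight a b s)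
      + ∫ s in Set.Ioi (0 : ℝ), s ^ (2 * m + 1) * weight b a s : ℝ) : ℂ) := by
  unfold genF
  rw [mul_zero, neg_zero, lap_zero_arg, lap_zero_arg, Odd.neg_pow ⟨m, rfl⟩, Odd.neg_one_pow ⟨m, rfl⟩,
    pow_succ, pow_mul, Complex.I_sq]
  push_cast
  field_simp
  ring

/-! ### Antiperiodicity -/

lemma norm_sinh_le (z : ℂ) : ‖Complex.sinh z‖ ≤ Real.exp |z.re| := by
  rw [Complex.sinh]
  have h1 : ‖Complex.exp z‖ ≤ Real.exp |z.re| := by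
    rw [Complex.norm_exp]; exact Real.exp_le_exp.2 (le_abs_self _)
  have h2 : ‖Complex.exp (-z)‖ ≤ Real.exp |z.re| := by
    rw [Complex.norm_exp]; exact Real.exp_le_exp.2 (by simpa using neg_le_abs z.re)
  rw [norm_div, Complex.norm_ofNat]
  have := norm_sub_le (Complex.exp z) (Complex.exp (-z))
  linarith

/-- The conjugate quarter period `(a + bi)/2`. -/
noncomputable def omgc (a b : ℝ) : ℂ := (a + b * Complex.I) / 2

lemma conj_omg (a b : ℝ) : (starRingEnd ℂ) (omg a b) = omgc a b := by
  simp only [omg, omgc, map_div₀, map_sub, map_mul, Complex.conj_ofReal, Complex.conj_I, map_ofNat]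
  ring

lemma weight_mul_cosh {a b : ℝ} (ha : 0 < a) (s : ℝ) :
    (weight b a s : ℂ) * (2 * Complex.cosh (s * omg a b) * Complex.cosh (s * omgc a b)) = 1 := by
  have h : 2 * Complex.cosh (s * omg a b) * Complex.cosh (s * omgc a b)
      = ((Real.cos (b * s) + Real.cosh (a * s) : ℝ) : ℂ) := by
    have h1 := Complex.cosh_add (s * omg a b) (s * omgc a b)
    have h2 := Complex.cosh_sub (s * omgc a b) (s * omg a b)
    rw [show s * omg a b + s * omgc a b = ((a * s : ℝ) : ℂ) by
      simp only [omg, omgc]; push_cast; ring] at h1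
    rw [show s * omgc a b - s * omg a b = ((b * s : ℝ) : ℂ) * Complex.I by
      simp only [omg, omgc]; push_cast; ring, Complex.cosh_mul_I] at h2
    rw [Complex.ofReal_add, Complex.ofReal_cos, Complex.ofReal_cosh]
    linear_combination -h1 - h2
  rw [h, weight, ← Complex.ofReal_mul, inv_mul_cancel₀ (weight_den_pos b ha s).ne',
    Complex.ofReal_one]

lemma weight_mul_cos {a b : ℝ} (hb : 0 < b) (s : ℝ) :
    (weight a b s : ℂ) * (2 * Complex.cos (s * omg a b) * Complex.cos (s * omgc a b)) = 1 := by
  have h : 2 * Complex.cos (s * omg a b) * Complex.cos (s * omgc a b)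
      = ((Real.cos (a * s) + Real.cosh (b * s) : ℝ) : ℂ) := by
    have h1 := Complex.cos_add (s * omg a b) (s * omgc a b)
    have h2 := Complex.cos_sub (s * omgc a b) (s * omg a b)
    rw [show s * omg a b + s * omgc a b = ((a * s : ℝ) : ℂ) by
      simp only [omg, omgc]; push_cast; ring] at h1
    rw [show s * omgc a b - s * omg a b = ((b * s : ℝ) : ℂ) * Complex.I by
      simp only [omg, omgc]; push_cast; ring, Complex.cos_mul_I] at h2
    rw [Complex.ofReal_add, Complex.ofReal_cos, Complex.ofReal_cosh]
    linear_combination -h1 - h2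
  rw [h, weight, ← Complex.ofReal_mul, inv_mul_cancel₀ (weight_den_pos a hb s).ne',
    Complex.ofReal_one]

lemma genF_zero_integrable {a b : ℝ} (ha : 0 < a) (hb : 0 < b) {u : ℂ} (hu : u ∈ rect a b) :
    IntegrableOn (fun s : ℝ => Complex.sin (s * u) * weight a b s) (Set.Ioi 0) ∧
    IntegrableOn (fun s : ℝ => Complex.sinh (s * u) * weight b a s) (Set.Ioi 0) ∧
    genF a b 0 u = (∫ s in Set.Ioi (0 : ℝ), Complex.sin (s * u) * weight a b s)
      + ∫ s in Set.Ioi (0 : ℝ), Complex.sinh (s * u) * weight b a s := by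
  obtain ⟨h1, h2⟩ := hu
  rw [abs_lt] at h1 h2
  have i1 := lap_integrable (weight_decay hb ha) 0 (u := Complex.I * u) (by simp; linarith)
  have i2 := lap_integrable (weight_decay hb ha) 0 (u := -(Complex.I * u)) (by simp; linarith)
  have i3 := lap_integrable (weight_decay ha hb) 0 (u := u) (by linarith)
  have i4 := lap_integrable (weight_decay ha hb) 0 (u := -u) (by simp; linarith)
  have e1 : (fun s : ℝ => Complex.sin (s * u) * weight a b s) = fun s : ℝ =>
      ((s : ℂ) ^ 0 * Complex.exp (s * (Complex.I * u)) * (weight a b s : ℂ)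
      - (s : ℂ) ^ 0 * Complex.exp (s * -(Complex.I * u)) * (weight a b s : ℂ))
        / (2 * Complex.I) := by
    ext s
    rw [Complex.sin, show -(s * u) * Complex.I = s * -(Complex.I * u) by ring,
      show s * u * Complex.I = s * (Complex.I * u) by ring]
    rw [eq_div_iff (by simp)]
    linear_combination (Complex.exp (s * -(Complex.I * u)) - Complex.exp (s * (Complex.I * u)))
      * (weight a b s : ℂ) * Complex.I_sq
  have e2 : (fun s : ℝ => Complex.sinh (s * u) * weight b a s) = fun s : ℝ =>
      ((s : ℂ) ^ 0 * Complex.exp (s * u) * (weight b a s : ℂ)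
      - (s : ℂ) ^ 0 * Complex.exp (s * -u) * (weight b a s : ℂ)) / 2 := by
    ext s
    rw [Complex.sinh, mul_neg]
    ring
  rw [e1, e2]
  refine ⟨(i1.sub i2).div_const _, (i3.sub i4).div_const _, ?_⟩
  rw [integral_div, integral_div, integral_sub i1 i2, integral_sub i3 i4]
  simp [genF, lap]

/-- After multiplication by the kernels, `f(v + ω̄) + f(v - ω̄)` becomes the difference of the
integrals of `sinh(sv)/cosh(sω)` along the two axes bounding the first quadrant, where this
function has no poles. -/
lemma genF_half_shift {a b : ℝ} (ha : 0 < a) (hb : 0 < b) {v : ℂ} (h1 : |v.re| < a / 2)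
    (h2 : |v.im| < b / 2) :
    genF a b 0 (v + omgc a b) + genF a b 0 (v - omgc a b) = 0 := by
  obtain ⟨C, hC0, hC⟩ := inv_cosh_omg_bound ha hb
  set c := min (a / 2 - |v.re|) (b / 2 - |v.im|) with hc
  have hc0 : 0 < c := lt_min (by linarith) (by linarith)
  obtain ⟨r1, r2, r3⟩ := quadrant_rotation
    (h := fun s => Complex.sinh (s * v) * (Complex.cosh (s * omg a b))⁻¹) (C := C) (c := c) hc0
    (fun z hx hy => by
      have hne := cosh_omg_ne_zero ha hb hx hy
      rw [Complex.re_add_im] at hne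
      have hd : DifferentiableAt ℂ (fun s : ℂ => Complex.cosh (s * omg a b)) z := by fun_prop
      have hd2 : DifferentiableAt ℂ (fun s : ℂ => Complex.sinh (s * v)) z := by fun_prop
      exact hd2.mul (hd.inv hne))
    (fun x y hx hy => by
      rw [norm_mul]
      have hre : |(((x : ℂ) + y * Complex.I) * v).re| ≤ x * |v.re| + y * |v.im| := by
        have : (((x : ℂ) + y * Complex.I) * v).re = x * v.re - y * v.im := by simp
        rw [this]
        refine (abs_sub _ _).trans ?_
        rw [abs_mul, abs_mul, abs_of_nonneg hx, abs_of_nonneg hy]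
      calc _ ≤ Real.exp (x * |v.re| + y * |v.im|) * (C * Real.exp (-((a * x + b * y) / 2))) :=
            mul_le_mul ((norm_sinh_le _).trans (Real.exp_le_exp.2 hre)) (hC x y hx hy)
              (norm_nonneg _) (Real.exp_pos _).le
        _ = C * Real.exp (x * |v.re| + y * |v.im| + -((a * x + b * y) / 2)) := by
            rw [Real.exp_add (x * |v.re| + y * |v.im|)]; ring
        _ ≤ C * Real.exp (-c * (x + y)) := by
            gcongr
            have c1 : c ≤ a / 2 - |v.re| := min_le_left _ _
            have c2 : c ≤ b / 2 - |v.im| := min_le_right _ _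
            nlinarith)
  rw [abs_lt] at h1 h2
  have m1 : v + omgc a b ∈ rect a b := by
    constructor <;> simp [omgc, abs_lt] <;> constructor <;> linarith
  have m2 : v - omgc a b ∈ rect a b := by
    constructor <;> simp [omgc, abs_lt] <;> constructor <;> linarith
  obtain ⟨p1, p2, p3⟩ := genF_zero_integrable ha hb m1
  obtain ⟨q1, q2, q3⟩ := genF_zero_integrable ha hb m2
  have s1 : (∫ s in Set.Ioi (0 : ℝ), Complex.sin (s * (v + omgc a b)) * weight a b s)
      + (∫ s in Set.Ioi (0 : ℝ), Complex.sin (s * (v - omgc a b)) * weight a b s)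
      = - (Complex.I * ∫ y in Set.Ioi (0 : ℝ),
        Complex.sinh (y * Complex.I * v) * (Complex.cosh (y * Complex.I * omg a b))⁻¹) := by
    rw [← integral_add p1 q1, ← integral_const_mul, ← integral_neg]
    congr 1
    ext s
    have hw := weight_mul_cos (a := a) hb s
    have hne : Complex.cos (s * omg a b) ≠ 0 := by
      intro h; rw [h] at hw; simp at hw
    rw [show (s : ℂ) * Complex.I * v = s * v * Complex.I by ring,
      show (s : ℂ) * Complex.I * omg a b = s * omg a b * Complex.I by ring,
      Complex.sinh_mul_I, Complex.cosh_mul_I, mul_add, mul_sub, Complex.sin_add, Complex.sin_sub]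
    field_simp
    linear_combination Complex.sin (s * v) * (hw + Complex.I_sq)
  have s2 : (∫ s in Set.Ioi (0 : ℝ), Complex.sinh (s * (v + omgc a b)) * weight b a s)
      + (∫ s in Set.Ioi (0 : ℝ), Complex.sinh (s * (v - omgc a b)) * weight b a s)
      = ∫ s in Set.Ioi (0 : ℝ), Complex.sinh (s * v) * (Complex.cosh (s * omg a b))⁻¹ := by
    rw [← integral_add p2 q2]
    congr 1
    ext s
    have hw := weight_mul_cosh (b := b) ha s
    have hne : Complex.cosh (s * omg a b) ≠ 0 := by
      intro h; rw [h] at hw; simp at hw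
    rw [mul_add, mul_sub, Complex.sinh_add, Complex.sinh_sub]
    field_simp
    linear_combination Complex.sinh (s * v) * hw
  rw [p3, q3]
  linear_combination s1 + s2 + r3

lemma genF_antiperiodic {a b : ℝ} (ha : 0 < a) (hb : 0 < b) {u : ℂ} (hu : u ∈ rect a b)
    (hu' : u + (a + b * Complex.I) ∈ rect a b) :
    genF a b 0 (u + (a + b * Complex.I)) = -genF a b 0 u := by
  simp only [mem_rect, abs_lt, Complex.add_re, Complex.ofReal_re, Complex.mul_re, Complex.I_re,
    mul_zero, Complex.ofReal_im, Complex.I_im, mul_one, sub_self, add_zero, Complex.add_im,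
    Complex.mul_im, zero_add] at hu hu'
  have h := genF_half_shift ha hb (v := u + omgc a b)
    (by simp [omgc, abs_lt]; constructor <;> linarith)
    (by simp [omgc, abs_lt]; constructor <;> linarith)
  rw [add_sub_cancel_right, add_assoc,
    show omgc a b + omgc a b = a + b * Complex.I by simp only [omgc]; ring] at h
  exact eq_neg_of_add_eq_zero_left h

lemma genF_antiperiodic' {a b : ℝ} (ha : 0 < a) (hb : 0 < b) {u : ℂ} (hu : u ∈ rect a b)
    (hu' : u + (a - b * Complex.I) ∈ rect a b) :
    genF a b 0 (u + (a - b * Complex.I)) = -genF a b 0 u := by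
  have e : (starRingEnd ℂ) (u + (a - b * Complex.I))
      = (starRingEnd ℂ) u + (a + b * Complex.I) := by simp
  have h := genF_antiperiodic ha hb (conj_mem_rect hu) (by rw [← e]; exact conj_mem_rect hu')
  rw [← e, genF_conj, genF_conj, ← map_neg] at h
  exact (starRingEnd ℂ).injective h

lemma genF_one_antiperiodic {a b : ℝ} (ha : 0 < a) (hb : 0 < b) {p : ℂ}
    (hp : ∀ u ∈ rect a b, u + p ∈ rect a b → genF a b 0 (u + p) = -genF a b 0 u) {u : ℂ}
    (hu : u ∈ rect a b) (hu' : u + p ∈ rect a b) : genF a b 1 (u + p) = -genF a b 1 u := by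
  have d1 : HasDerivAt (fun z => genF a b 0 (z + p)) (genF a b 1 (u + p)) u :=
    (hasDerivAt_genF ha hb 0 hu').comp_add_const u p
  have d2 := (hasDerivAt_genF ha hb 0 hu).neg
  refine d1.unique (d2.congr_of_eventuallyEq ?_)
  have o1 : ∀ᶠ z in nhds u, z ∈ rect a b := (isOpen_rect a b).mem_nhds hu
  have o2 : ∀ᶠ z in nhds u, z + p ∈ rect a b :=
    (continuous_add_const p).continuousAt.eventually ((isOpen_rect a b).mem_nhds hu')
  filter_upwards [o1, o2] with z h1 h2
  exact hp z h1 h2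

/-- The first integral `f'² - f⁴ - B f²` of the differential equation `f'' = 2f³ + Bf`. -/
noncomputable def ener (a b : ℝ) (B : ℂ) (u : ℂ) : ℂ :=
  genF a b 1 u ^ 2 - genF a b 0 u ^ 4 - B * genF a b 0 u ^ 2

lemma ener_shift {a b : ℝ} (ha : 0 < a) (hb : 0 < b) (B : ℂ) {u : ℂ} (hu : u ∈ rect a b)
    (hu' : u + (a + b * Complex.I) ∈ rect a b) :
    ener a b B (u + (a + b * Complex.I)) = ener a b B u := by
  unfold ener
  rw [genF_antiperiodic ha hb hu hu',
    genF_one_antiperiodic ha hb (fun u => genF_antiperiodic ha hb) hu hu']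
  ring

lemma ener_shift' {a b : ℝ} (ha : 0 < a) (hb : 0 < b) (B : ℂ) {u : ℂ} (hu : u ∈ rect a b)
    (hu' : u + (a - b * Complex.I) ∈ rect a b) :
    ener a b B (u + (a - b * Complex.I)) = ener a b B u := by
  unfold ener
  rw [genF_antiperiodic' ha hb hu hu',
    genF_one_antiperiodic ha hb (fun u => genF_antiperiodic' ha hb) hu hu']
  ring

lemma ener_neg (a b : ℝ) (B u : ℂ) : ener a b B (-u) = ener a b B u := by
  unfold ener
  rw [genF_neg, genF_neg]
  ring

lemma ener_differentiableOn {a b : ℝ} (ha : 0 < a) (hb : 0 < b) (B : ℂ) :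
    DifferentiableOn ℂ (ener a b B) (rect a b) := by
  intro u hu
  have d0 := (hasDerivAt_genF ha hb 0 hu).differentiableAt
  have d1 := (hasDerivAt_genF ha hb 1 hu).differentiableAt
  unfold ener
  exact (((d1.pow 2).sub (d0.pow 4)).sub ((d0.pow 2).const_mul B)).differentiableWithinAt

/-! ### The principal part at the pole `a` -/

/-- The `n`-th derivative of the regular part of `genF a b 0` at `a`: the leading exponential
`2e^{-as}` of the second kernel, which produces the pole `1/(a - u)`, is removed. -/
noncomputable def remF (a b : ℝ) (n : ℕ) (u : ℂ) : ℂ :=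
  (Complex.I ^ n * lap (weight a b) n (Complex.I * u)
    - (-Complex.I) ^ n * lap (weight a b) n (-(Complex.I * u))) / (2 * Complex.I)
  + (lap (weightRem b a) n u - (-1) ^ n * lap (weight b a) n (-u)) / 2

lemma hasDerivAt_remF {a b : ℝ} (ha : 0 < a) (hb : 0 < b) (n : ℕ) {u : ℂ} (h1 : -a < u.re)
    (h2 : u.re < 2 * a) (h3 : |u.im| < b) :
    HasDerivAt (remF a b n) (remF a b (n + 1) u) u := by
  have d3 := hasDerivAt_lap (weightRem_decay ha hb) n h2
  have d4 := lap_comp_mul_hasDerivAt (weight_decay ha hb) n (-1) (u := u) (by simp; linarith)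
  simp only [neg_mul, one_mul] at d4
  have := (genF_part1_hasDerivAt ha hb n h3).add ((d3.sub d4).div_const 2)
  exact this.congr_deriv (by unfold remF; ring)

lemma remF_conj (a b : ℝ) (n : ℕ) (u : ℂ) :
    remF a b n ((starRingEnd ℂ) u) = (starRingEnd ℂ) (remF a b n u) := by
  have e1 : Complex.I * (starRingEnd ℂ) u = (starRingEnd ℂ) (-(Complex.I * u)) := by simp
  have e2 : -(Complex.I * (starRingEnd ℂ) u) = (starRingEnd ℂ) (Complex.I * u) := by simp
  have e3 : -(starRingEnd ℂ) u = (starRingEnd ℂ) (-u) := by simp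
  unfold remF
  rw [e2, e1, e3, lap_conj, lap_conj, lap_conj, lap_conj]
  simp only [ map_add, map_sub, map_mul, map_div₀, map_pow, map_neg, Complex.conj_I,
    map_one, map_ofNat, neg_neg]
  congr 1
  rw [mul_neg, div_neg, ← neg_div, neg_sub]

lemma genF_zero_eq {a b : ℝ} (ha : 0 < a) (hb : 0 < b) {u : ℂ} (hu : u ∈ rect a b) :
    genF a b 0 u = 1 / (a - u) + remF a b 0 u := by
  have hre : u.re < a := (abs_lt.1 hu.1).2
  have hne : ((u : ℂ) - a) ≠ 0 := by
    intro h
    have := congrArg Complex.re h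
    simp at this; linarith
  have hre' : ((u : ℂ) - a).re < 0 := by simp; linarith
  have key : lap (weight b a) 0 u = lap (weightRem b a) 0 u + 2 / (a - u) := by
    have h1 : (2 : ℂ) / (a - u)
        = ∫ s in Set.Ioi (0 : ℝ), 2 * Complex.exp ((u - a) * s) := by
      rw [integral_const_mul, integral_exp_mul_complex_Ioi hre']
      have : (a : ℂ) - u ≠ 0 := by rw [← neg_sub]; exact neg_ne_zero.2 hne
      simp
      field_simp
      ring
    rw [h1]
    unfold lap
    rw [← integral_add (lap_integrable (weightRem_decay ha hb) 0 (by linarith))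
      ((integrableOn_exp_mul_complex_Ioi hre' 0).const_mul 2)]
    congr 1
    ext s
    simp only [weightRem]
    push_cast
    rw [show ((u : ℂ) - a) * s = s * u + -a * s by ring, Complex.exp_add]
    ring
  unfold genF remF
  rw [key]
  ring

lemma genF_one_eq {a b : ℝ} (ha : 0 < a) (hb : 0 < b) {u : ℂ} (hu : u ∈ rect a b) :
    genF a b 1 u = 1 / (a - u) ^ 2 + remF a b 1 u := by
  have hre : u.re < a := (abs_lt.1 hu.1).2
  have hne : (a : ℂ) - u ≠ 0 := by
    intro h
    have := congrArg Complex.re h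
    simp at this; linarith
  have h1 := hasDerivAt_genF ha hb 0 hu
  have h2 := ((hasDerivAt_id u).const_sub (a : ℂ)).fun_inv hne |>.add
    (hasDerivAt_remF ha hb 0 (abs_lt.1 hu.1).1 (by linarith) hu.2)
  have h3 : genF a b 0 =ᶠ[nhds u] (fun y => ((a : ℂ) - id y)⁻¹) + remF a b 0 := by
    filter_upwards [(isOpen_rect a b).mem_nhds hu] with v hv
    rw [genF_zero_eq ha hb hv]; simp
  have := h1.unique (h2.congr_of_eventuallyEq h3)
  rw [this]; simp

lemma conj_omgc (a b : ℝ) : (starRingEnd ℂ) (omgc a b) = omg a b := by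
  rw [← conj_omg, Complex.conj_conj]

/-- The even Taylor coefficients of the regular part at `a` vanish. The two halves are, up to
sign, the real parts of the integrals of one holomorphic function along the two sides of a quadrant. -/
lemma remF_even_eq_zero {a b : ℝ} (ha : 0 < a) (hb : 0 < b) (j : ℕ) : remF a b (2 * j) a = 0 := by
  set ω := omg a b with hω
  set n := 2 * j with hn
  set T : ℂ → ℂ := fun z => z ^ n * (-(Complex.exp (-(z * ω)) * (Complex.cosh (z * ω))⁻¹)) with hT
  obtain ⟨C, hC0, hC⟩ := inv_cosh_omg_bound ha hb
  set c := min a b / 2 with hc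
  have hmin : 0 < min a b := lt_min ha hb
  have hcpos : 0 < c := by positivity
  obtain ⟨i1, i2, i3⟩ := quadrant_rotation (h := T) (C := C * (n.factorial / c ^ n)) hcpos
    (by
      intro z hx hy
      have hne : Complex.cosh (z * ω) ≠ 0 := by
        have := cosh_omg_ne_zero ha hb hx hy
        rwa [Complex.re_add_im] at this
      simp only [hT]
      fun_prop (disch := assumption))
    (by
      intro x y hx hy
      have hxy : 0 ≤ x + y := by positivity
      simp only [hT, norm_mul, norm_neg, norm_pow]
      have e1 : ‖(x : ℂ) + y * Complex.I‖ ≤ x + y := by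
        refine (norm_add_le _ _).trans ?_
        simp [abs_of_nonneg hx, abs_of_nonneg hy]
      have e2 : ‖Complex.exp (-((x + y * Complex.I) * ω))‖ = rexp (-((a * x + b * y) / 2)) := by
        rw [Complex.norm_exp, Complex.neg_re, hω, mul_omg_re]
      have e3 : rexp (-((a * x + b * y) / 2)) ≤ rexp (-(c * (x + y))) := by
        apply Real.exp_le_exp.2
        have := mul_le_mul_of_nonneg_right (min_le_left a b) hx
        have := mul_le_mul_of_nonneg_right (min_le_right a b) hy
        rw [hc]; linarith
      have e4 : (x + y) ^ n ≤ n.factorial / c ^ n * rexp (c * (x + y)) := by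
        have := Real.pow_div_factorial_le_exp (c * (x + y)) (by positivity) n
        rw [div_le_iff₀ (by positivity), mul_pow] at this
        rw [div_mul_eq_mul_div, le_div_iff₀ (by positivity)]
        linarith
      rw [e2]
      calc ‖(x : ℂ) + y * Complex.I‖ ^ n * (rexp (-((a * x + b * y) / 2))
            * ‖(Complex.cosh ((x + y * Complex.I) * ω))⁻¹‖)
          ≤ (n.factorial / c ^ n * rexp (c * (x + y))) *
            (rexp (-(c * (x + y))) * (C * rexp (-(c * (x + y))))) := by
            refine mul_le_mul ((pow_le_pow_left₀ (norm_nonneg _) e1 n).trans e4)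
              (mul_le_mul e3 ((hC x y hx hy).trans (mul_le_mul_of_nonneg_left e3 hC0))
                (norm_nonneg _) (by positivity)) (by positivity) (by positivity)
        _ = C * (n.factorial / c ^ n) * rexp (-c * (x + y)) := by
            have : rexp (c * (x + y)) * rexp (-(c * (x + y))) = 1 := by
              rw [← Real.exp_add]; simp
            rw [show -c * (x + y) = -(c * (x + y)) by ring]
            linear_combination (C * (n.factorial / c ^ n) * rexp (-(c * (x + y)))) * this)
  have hIn : Complex.I ^ n = (-1) ^ j := by rw [hn, pow_mul, Complex.I_sq]
  have hIn' : (-Complex.I) ^ n = (-1) ^ j := by rw [hn, pow_mul, neg_sq, Complex.I_sq]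
  have hn1 : (-1 : ℂ) ^ n = 1 := by rw [hn, pow_mul]; simp
  -- on the real axis, `2 Re T` is twice the integrand of the `sinh` half of `remF`
  have r1 : ∀ s : ℝ, T s + (starRingEnd ℂ) (T s)
      = (s : ℂ) ^ n * Complex.exp (s * a) * (weightRem b a s : ℂ)
        - (s : ℂ) ^ n * Complex.exp (s * -a) * (weight b a s : ℂ) := by
    intro s
    have hw := weight_mul_cosh (b := b) ha s
    have k1 : (Complex.cosh (s * omg a b))⁻¹ = 2 * weight b a s * Complex.cosh (s * omgc a b) :=
      inv_eq_of_mul_eq_one_right (by linear_combination hw)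
    have hden : (weight b a s : ℂ) * (Complex.cos (b * s) + Complex.cosh (a * s)) = 1 := by
      have := inv_mul_cancel₀ (weight_den_pos b ha s).ne'
      rw [← weight] at this
      exact_mod_cast this
    have hexp : Complex.exp (s * a) * Complex.exp (-a * s) = 1 := by
      rw [← Complex.exp_add, show (s : ℂ) * a + -a * s = 0 by ring, Complex.exp_zero]
    simp only [hT, hω, map_mul, map_neg, map_pow, map_ofNat, ← Complex.exp_conj, ← Complex.cosh_conj,
      Complex.conj_ofReal, conj_omg, conj_omgc, k1, weightRem]
    push_cast
    rw [show (s : ℂ) * -a = -a * s by ring]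
    have m1 : Complex.exp (-(s * omg a b)) * (2 * Complex.cosh (s * omgc a b))
        = Complex.exp (b * s * Complex.I) + Complex.exp (-a * s) := by
      rw [Complex.two_cosh, mul_add, ← Complex.exp_add, ← Complex.exp_add]
      congr 2 <;> simp only [omg, omgc] <;> ring
    have m2 : Complex.exp (-(s * omgc a b)) * (2 * Complex.cosh (s * omg a b))
        = Complex.exp (-(b * s) * Complex.I) + Complex.exp (-a * s) := by
      rw [Complex.two_cosh, mul_add, ← Complex.exp_add, ← Complex.exp_add]
      congr 2 <;> simp only [omg, omgc] <;> ring
    have m3 := Complex.two_cos (b * s)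
    have m4 := Complex.two_cosh (a * s)
    rw [show (a : ℂ) * s = s * a by ring, show -((s : ℂ) * a) = -a * s by ring] at m4
    rw [show (a : ℂ) * s = s * a by ring] at hden
    linear_combination (-(s : ℂ) ^ n * weight b a s) * (m1 + m2 - m3 - m4) - 2 * (s : ℂ) ^ n * hden
      + 2 * (s : ℂ) ^ n * hexp
  -- on the imaginary axis, `2 Re (iT)` is minus twice the integrand of the `sin` half
  have r2 : ∀ s : ℝ, Complex.I * T (s * Complex.I) + (starRingEnd ℂ) (Complex.I * T (s * Complex.I))
      = -((-1) ^ j / Complex.I * ((s : ℂ) ^ n * Complex.exp (s * (Complex.I * a)) * (weight a b s : ℂ)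
        - (s : ℂ) ^ n * Complex.exp (s * -(Complex.I * a)) * (weight a b s : ℂ))) := by
    intro s
    have hw := weight_mul_cos (a := a) hb s
    have k1 : (Complex.cos (s * omg a b))⁻¹ = 2 * weight a b s * Complex.cos (s * omgc a b) :=
      inv_eq_of_mul_eq_one_right (by linear_combination hw)
    have q : (s : ℂ) * Complex.I * ω = s * omg a b * Complex.I := by rw [hω]; ring
    simp only [hT, q, Complex.cosh_mul_I, map_mul, map_neg, map_pow, map_ofNat, ← Complex.exp_conj,
      ← Complex.cos_conj, Complex.conj_ofReal, conj_omg, conj_omgc, k1, mul_pow, hIn, Complex.conj_I,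
      map_one, mul_neg, neg_neg]
    have m1 : Complex.exp (-(s * omg a b * Complex.I)) * (2 * Complex.cos (s * omgc a b))
        = Complex.exp (-(b * s)) + Complex.exp (-(s * (Complex.I * a))) := by
      rw [Complex.two_cos, mul_add, ← Complex.exp_add, ← Complex.exp_add]
      congr 2 <;> simp only [omg, omgc] <;> ring_nf <;> simp
    have m2 : Complex.exp (s * omgc a b * Complex.I) * (2 * Complex.cos (s * omg a b))
        = Complex.exp (s * (Complex.I * a)) + Complex.exp (-(b * s)) := by
      rw [Complex.two_cos, mul_add, ← Complex.exp_add, ← Complex.exp_add]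
      congr 2 <;> simp only [omg, omgc] <;> ring_nf <;> simp
    rw [div_eq_mul_inv, Complex.inv_I]
    linear_combination (-(-1) ^ j * (s : ℂ) ^ n * weight a b s * Complex.I) * (m1 - m2)
  have hconj : ∀ f : ℝ → ℂ, IntegrableOn f (Set.Ioi 0) →
      ∫ s in Set.Ioi (0:ℝ), (f s + (starRingEnd ℂ) (f s))
        = (∫ s in Set.Ioi (0:ℝ), f s) + (starRingEnd ℂ) (∫ s in Set.Ioi (0:ℝ), f s) := by
    intro f hf
    have hf' : IntegrableOn (fun s => (starRingEnd ℂ) (f s)) (Set.Ioi 0) := by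
      have := Complex.conjCLE.toContinuousLinearMap.integrable_comp hf
      simpa [IntegrableOn] using this
    rw [integral_add hf hf', integral_conj]
  have X := hconj _ i1
  have Y := hconj _ (i2.const_mul Complex.I)
  rw [integral_const_mul, ← i3, ← X] at Y
  simp only [r1, r2] at Y
  rw [integral_neg, integral_const_mul, integral_sub, integral_sub] at Y
  · unfold remF
    rw [hIn, hIn', hn1]
    have e : ∀ w : ℝ → ℝ, ∀ v : ℂ, lap w n v
      = ∫ s in Set.Ioi (0 : ℝ), (s : ℂ) ^ n * Complex.exp (s * v) * (w s : ℂ) := fun _ _ => rfl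
    simp only [← e] at Y
    linear_combination -Y / 2
  · exact lap_integrable (weightRem_decay ha hb) n (by simp; linarith)
  · exact lap_integrable (weight_decay ha hb) n (by simp; linarith)
  · exact lap_integrable (weight_decay hb ha) n (by simp; linarith)
  · exact lap_integrable (weight_decay hb ha) n (by simp; linarith)

/-- Near its pole `a` the function `F = genF a b 0` is `-1/v + r v + O(v³)` with `v = u - a`, so
that with `B = 6r` the poles of `F'² - F⁴ - B F²` cancel. -/
lemma exists_tendsto_ener {a b : ℝ} (ha : 0 < a) (hb : 0 < b) :
    ∃ B : ℝ, ∃ C : ℂ, Tendsto (ener a b B) (𝓝[rect a b] (a : ℂ)) (𝓝 C) := by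
  set r := remF a b 1 a with hr
  have hreal : ((r.re : ℝ) : ℂ) = r := by
    rw [← Complex.conj_eq_iff_re, hr, ← remF_conj, Complex.conj_ofReal]
  -- a neighbourhood of `a` on which the regular part is holomorphic
  have hU : ∀ᶠ u : ℂ in 𝓝 (a : ℂ), -a < u.re ∧ u.re < 2 * a ∧ |u.im| < b := by
    refine (Filter.Eventually.and ?_ (Filter.Eventually.and ?_ ?_))
    · exact (isOpen_lt continuous_const Complex.continuous_re).mem_nhds (by simp; linarith)
    · exact (isOpen_lt Complex.continuous_re continuous_const).mem_nhds (by simp; linarith)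
    · exact (isOpen_lt Complex.continuous_im.abs continuous_const).mem_nhds (by simpa)
  set g : ℂ → ℂ := fun u => remF a b 0 u - r * (u - a) with hg
  have hgd : ∀ᶠ u : ℂ in 𝓝 (a : ℂ), HasDerivAt g (remF a b 1 u - r) u := by
    filter_upwards [hU] with u hu
    have h1 := (hasDerivAt_remF ha hb 0 hu.1 hu.2.1 hu.2.2).sub
      (((hasDerivAt_id u).sub_const (a : ℂ)).const_mul r)
    exact h1.congr_deriv (by simp)
  have hgan : AnalyticAt ℂ g a :=
    Complex.analyticAt_iff_eventually_differentiableAt.2 (hgd.mono fun u hu => hu.differentiableAt)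
  have hga := hU.self_of_nhds
  have hord : (3 : ℕ) ≤ analyticOrderAt g a := by
    rw [natCast_le_analyticOrderAt_iff_iteratedDeriv_eq_zero hgan]
    intro i hi
    have hd1 : deriv g =ᶠ[𝓝 (a : ℂ)] fun u => remF a b 1 u - r := hgd.mono fun u hu => hu.deriv
    interval_cases i
    · have := remF_even_eq_zero ha hb 0
      simp only [mul_zero] at this
      simp [hg, this]
    · rw [iteratedDeriv_one, hgd.self_of_nhds.deriv, hr, sub_self]
    · rw [iteratedDeriv_succ, iteratedDeriv_one, hd1.deriv_eq]
      have := ((hasDerivAt_remF ha hb 1 hga.1 hga.2.1 hga.2.2).sub_const r).deriv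
      rw [this]
      exact remF_even_eq_zero ha hb 1
  obtain ⟨p, hp, hgp⟩ := (natCast_le_analyticOrderAt hgan).1 hord
  have h0 : ∀ᶠ u : ℂ in 𝓝 (a : ℂ), remF a b 0 u = r * (u - a) + (u - a) ^ 3 * p u := by
    filter_upwards [hgp] with u hu
    rw [smul_eq_mul] at hu
    linear_combination hu
  have h1 : ∀ᶠ u : ℂ in 𝓝 (a : ℂ),
      remF a b 1 u = r + 3 * (u - a) ^ 2 * p u + (u - a) ^ 3 * deriv p u := by
    filter_upwards [hgp.eventually_nhds, hgd, hp.eventually_analyticAt] with u hu hd hpu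
    have d1 := (((hasDerivAt_id u).sub_const (a : ℂ)).fun_pow 3).mul hpu.differentiableAt.hasDerivAt
    have d2 := hd.unique (d1.congr_of_eventuallyEq (hu.mono fun v hv => by
      rw [hv]; simp))
    simp only [id] at d2
    push_cast at d2
    linear_combination d2
  set E : ℂ → ℂ := fun u => 10 * p u + 2 * (u - a) * deriv p u
    + (r + 3 * (u - a) ^ 2 * p u + (u - a) ^ 3 * deriv p u) ^ 2
    - 6 * (r + (u - a) ^ 2 * p u) ^ 2 + 4 * (u - a) ^ 2 * (r + (u - a) ^ 2 * p u) ^ 3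
    - (u - a) ^ 4 * (r + (u - a) ^ 2 * p u) ^ 4 + 12 * r * (r + (u - a) ^ 2 * p u)
    - 6 * r * (u - a) ^ 2 * (r + (u - a) ^ 2 * p u) ^ 2 with hE
  have hEc : ContinuousAt E a := by
    have c1 := hp.continuousAt
    have c2 := hp.deriv.continuousAt
    simp only [hE]
    fun_prop
  refine ⟨6 * r.re, E a, (hEc.tendsto.mono_left nhdsWithin_le_nhds).congr' ?_⟩
  filter_upwards [nhdsWithin_le_nhds h0, nhdsWithin_le_nhds h1, self_mem_nhdsWithin] with u e0 e1 hu
  have hne : (a : ℂ) - u ≠ 0 := by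
    intro h
    have := congrArg Complex.re h
    have := (abs_lt.1 hu.1).2
    simp at *; linarith
  rw [ener, genF_zero_eq ha hb hu, genF_one_eq ha hb hu, e0, e1]
  push_cast
  rw [hreal]
  simp only [hE]
  obtain ⟨v, hv⟩ : ∃ v : ℂ, v = a - u := ⟨_, rfl⟩
  rw [← hv] at hne ⊢
  rw [show u - a = -v by rw [hv]; ring]
  field_simp
  ring

/-! ### A Liouville theorem on the rectangle -/

/-- The point `u` of the rectangle is equivalent, modulo the periods `a ± bi`, to one of the closed
diamond with vertices `±a, ±bi`. -/
lemma exists_mem_diamond {a b : ℝ} (ha : 0 < a) (hb : 0 < b) {G : ℂ → ℂ}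
    (he : ∀ u, G (-u) = G u)
    (h1 : ∀ u ∈ rect a b, u + (a + b * Complex.I) ∈ rect a b → G (u + (a + b * Complex.I)) = G u)
    (h2 : ∀ u ∈ rect a b, u + (a - b * Complex.I) ∈ rect a b → G (u + (a - b * Complex.I)) = G u)
    {u : ℂ} (hu : u ∈ rect a b) :
    ∃ v ∈ rect a b, b * |v.re| + a * |v.im| ≤ a * b ∧ G v = G u := by
  have key : ∀ u ∈ rect a b, 0 ≤ u.re →
      ∃ v ∈ rect a b, b * |v.re| + a * |v.im| ≤ a * b ∧ G v = G u := by
    intro u hu hx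
    by_cases hD : b * |u.re| + a * |u.im| ≤ a * b
    · exact ⟨u, hu, hD, rfl⟩
    push Not at hD
    have hx' := abs_of_nonneg hx
    have hre := hu.1
    have him := hu.2
    rw [hx'] at hre hD
    have hxpos : 0 < u.re := by
      rcases hx.lt_or_eq with h | h
      · exact h
      · rw [← h] at hD
        have := mul_lt_mul_of_pos_left him ha
        linarith
    rcases le_total 0 u.im with hy | hy
    · rw [abs_of_nonneg hy] at him hD
      have hypos : 0 < u.im := by
        rcases hy.lt_or_eq with h | h
        · exact h
        · rw [← h] at hD
          have := mul_lt_mul_of_pos_left hre hb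
          linarith
      have hr : (u - (a + b * Complex.I)).re = u.re - a := by simp
      have hi : (u - (a + b * Complex.I)).im = u.im - b := by simp
      have hm : u - (a + b * Complex.I) ∈ rect a b := by
        rw [mem_rect, hr, hi, abs_lt, abs_lt]; constructor <;> constructor <;> linarith
      refine ⟨_, hm, ?_, ?_⟩
      · rw [hr, hi, abs_of_neg (by linarith), abs_of_neg (by linarith)]
        linarith
      · rw [← h1 _ hm (by simpa using hu)]; simp
    · rw [abs_of_nonpos hy] at him hD
      have hyneg : u.im < 0 := by
        rcases hy.lt_or_eq with h | h
        · exact h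
        · rw [h] at hD
          have := mul_lt_mul_of_pos_left hre hb
          linarith
      have hr : (u - (a - b * Complex.I)).re = u.re - a := by simp
      have hi : (u - (a - b * Complex.I)).im = u.im + b := by simp
      have hm : u - (a - b * Complex.I) ∈ rect a b := by
        rw [mem_rect, hr, hi, abs_lt, abs_lt]; constructor <;> constructor <;> linarith
      refine ⟨_, hm, ?_, ?_⟩
      · rw [hr, hi, abs_of_neg (by linarith), abs_of_pos (by linarith)]
        linarith
      · rw [← h2 _ hm (by simpa using hu)]; simp
  rcases le_total 0 u.re with hx | hx
  · exact key u hu hx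
  · obtain ⟨v, hv, hv1, hv2⟩ := key (-u) (neg_mem_rect hu) (by simpa using hx)
    exact ⟨v, hv, hv1, by rw [hv2, he]⟩

/-- Smallness at the vertex `a` of the diamond propagates to the other three vertices. -/
lemma small_near_vertices {a b : ℝ} (ha : 0 < a) (hb : 0 < b) {G : ℂ → ℂ}
    (hc : ContinuousOn G (rect a b)) (he : ∀ u, G (-u) = G u)
    (h1 : ∀ u ∈ rect a b, u + (a + b * Complex.I) ∈ rect a b → G (u + (a + b * Complex.I)) = G u)
    (h2 : ∀ u ∈ rect a b, u + (a - b * Complex.I) ∈ rect a b → G (u + (a - b * Complex.I)) = G u)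
    (hl : Tendsto G (𝓝[rect a b] (a : ℂ)) (𝓝 0)) {ε : ℝ} (hε : 0 < ε) :
    ∃ δ > 0, ∀ u ∈ rect a b, (‖u - a‖ < δ ∨ ‖u + a‖ < δ ∨ ‖u - b * Complex.I‖ < δ
      ∨ ‖u + b * Complex.I‖ < δ) → ‖G u‖ ≤ ε := by
  obtain ⟨δ₀, hδ₀, hδ⟩ := (Metric.tendsto_nhdsWithin_nhds.1 hl) ε hε
  simp only [dist_eq_norm, sub_zero] at hδ
  set δ := min δ₀ (min a b) with hδdef
  have hδpos : 0 < δ := by positivity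
  have A : ∀ u ∈ rect a b, ‖u - a‖ < δ → ‖G u‖ ≤ ε := fun u hu h =>
    (hδ hu (h.trans_le (min_le_left _ _))).le
  have A' : ∀ u ∈ rect a b, ‖u + a‖ < δ → ‖G u‖ ≤ ε := fun u hu h => by
    rw [← he]
    refine A _ (neg_mem_rect hu) ?_
    rwa [← norm_neg, neg_sub, sub_neg_eq_add, add_comm]
  have hδa : δ ≤ a := (min_le_right _ _).trans (min_le_left _ _)
  have hδb : δ ≤ b := (min_le_right _ _).trans (min_le_right _ _)
  have Bp : ∀ u ∈ rect a b, u.re ≠ 0 → ‖u - b * Complex.I‖ < δ → ‖G u‖ ≤ ε := by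
    intro u hu hne h
    have hr : |u.re| < δ := by
      have := Complex.abs_re_le_norm (u - b * Complex.I)
      simp at this; linarith
    have hi : |u.im - b| < δ := by
      have := Complex.abs_im_le_norm (u - b * Complex.I)
      simp at this; linarith
    have hu2 := abs_lt.1 hu.2
    rw [abs_lt] at hr hi
    rcases lt_or_gt_of_ne hne with hneg | hpos
    · have hm : u + (a - b * Complex.I) ∈ rect a b := by
        rw [mem_rect]; simp [abs_lt]; refine ⟨⟨?_, ?_⟩, ?_, ?_⟩ <;> linarith
      rw [← h2 u hu hm]
      refine A _ hm ?_
      rwa [show u + (a - b * Complex.I) - a = u - b * Complex.I by ring]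
    · have hm : u - (a + b * Complex.I) ∈ rect a b := by
        rw [mem_rect]; simp [abs_lt]; refine ⟨⟨?_, ?_⟩, ?_, ?_⟩ <;> linarith
      have := h1 _ hm (by simpa using hu)
      rw [sub_add_cancel] at this
      rw [this]
      refine A' _ hm ?_
      rwa [show u - (a + b * Complex.I) + a = u - b * Complex.I by ring]
  have B : ∀ u ∈ rect a b, ‖u - b * Complex.I‖ < δ → ‖G u‖ ≤ ε := by
    intro u hu h
    by_cases hne : u.re = 0
    swap
    · exact Bp u hu hne h
    have hline : Tendsto (fun t : ℝ => u + (t : ℂ)) (𝓝[>] 0) (𝓝 u) := by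
      have : Tendsto (fun t : ℝ => u + (t : ℂ)) (𝓝 0) (𝓝 (u + ((0 : ℝ) : ℂ))) := by
        apply Continuous.tendsto; fun_prop
      rw [Complex.ofReal_zero, add_zero] at this
      exact this.mono_left nhdsWithin_le_nhds
    have hG : ContinuousAt G u := hc.continuousAt ((isOpen_rect a b).mem_nhds hu)
    refine le_of_tendsto ((hG.tendsto.comp hline).norm) ?_
    have o : IsOpen {v : ℂ | ‖v - b * Complex.I‖ < δ} := isOpen_lt (by fun_prop) continuous_const
    filter_upwards [hline.eventually ((isOpen_rect a b).mem_nhds hu),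
      hline.eventually (o.mem_nhds h), self_mem_nhdsWithin] with t ht1 ht2 ht3
    exact Bp _ ht1 (by simp [hne, (Set.mem_Ioi.1 ht3).ne']) ht2
  refine ⟨δ, hδpos, fun u hu h => ?_⟩
  rcases h with h | h | h | h
  · exact A u hu h
  · exact A' u hu h
  · exact B u hu h
  · rw [← he]
    refine B _ (neg_mem_rect hu) ?_
    rwa [← norm_neg, neg_sub, sub_neg_eq_add, add_comm]

lemma liouville_rect {a b : ℝ} (ha : 0 < a) (hb : 0 < b) {G : ℂ → ℂ}
    (hd : DifferentiableOn ℂ G (rect a b)) (he : ∀ u, G (-u) = G u)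
    (h1 : ∀ u ∈ rect a b, u + (a + b * Complex.I) ∈ rect a b → G (u + (a + b * Complex.I)) = G u)
    (h2 : ∀ u ∈ rect a b, u + (a - b * Complex.I) ∈ rect a b → G (u + (a - b * Complex.I)) = G u)
    (hl : Tendsto G (𝓝[rect a b] (a : ℂ)) (𝓝 0)) {u : ℂ} (hu : u ∈ rect a b) : G u = 0 := by
  by_contra hne
  obtain ⟨u₀, hu₀, hD₀, hG₀⟩ := exists_mem_diamond ha hb he h1 h2 hu
  have hpos : 0 < ‖G u₀‖ := by rw [hG₀]; exact norm_pos_iff.2 hne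
  obtain ⟨δ, hδ, hsmall⟩ := small_near_vertices ha hb hd.continuousOn he h1 h2 hl (half_pos hpos)
  set K : Set ℂ := {v | b * |v.re| + a * |v.im| ≤ a * b ∧ δ ≤ ‖v - a‖ ∧ δ ≤ ‖v + a‖
    ∧ δ ≤ ‖v - b * Complex.I‖ ∧ δ ≤ ‖v + b * Complex.I‖} with hK
  have hKc : IsClosed K := by
    have c1 : IsClosed {v : ℂ | b * |v.re| + a * |v.im| ≤ a * b} :=
      isClosed_le (by fun_prop) continuous_const
    have c2 : IsClosed {v : ℂ | δ ≤ ‖v - a‖} := isClosed_le continuous_const (by fun_prop)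
    have c3 : IsClosed {v : ℂ | δ ≤ ‖v + a‖} := isClosed_le continuous_const (by fun_prop)
    have c4 : IsClosed {v : ℂ | δ ≤ ‖v - b * Complex.I‖} :=
      isClosed_le continuous_const (by fun_prop)
    have c5 : IsClosed {v : ℂ | δ ≤ ‖v + b * Complex.I‖} :=
      isClosed_le continuous_const (by fun_prop)
    exact c1.inter (c2.inter (c3.inter (c4.inter c5)))
  have hbd : ∀ v : ℂ, b * |v.re| + a * |v.im| ≤ a * b → |v.re| ≤ a ∧ |v.im| ≤ b := by
    intro v hv
    have p1 : 0 ≤ a * |v.im| := by positivity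
    have p2 : 0 ≤ b * |v.re| := by positivity
    constructor
    · exact le_of_mul_le_mul_left (by linarith) hb
    · exact le_of_mul_le_mul_left (by linarith) ha
  have hKb : Bornology.IsBounded K := by
    refine (Metric.isBounded_closedBall (x := (0 : ℂ)) (r := a + b)).subset fun v hv => ?_
    rw [mem_closedBall_zero_iff]
    have := hbd v hv.1
    exact (Complex.norm_le_abs_re_add_abs_im v).trans (by linarith)
  have hKcomp : IsCompact K := Metric.isCompact_of_isClosed_isBounded hKc hKb
  have hKsub : K ⊆ rect a b := by
    rintro v ⟨hv, v1, v2, v3, v4⟩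
    obtain ⟨b1, b2⟩ := hbd v hv
    constructor
    · refine lt_of_le_of_ne b1 fun h => ?_
      rw [h] at hv
      have him : v.im = 0 := by
        have : a * |v.im| ≤ a * 0 := by linarith
        exact abs_nonpos_iff.1 (le_of_mul_le_mul_left this ha)
      rcases (abs_eq ha.le).1 h with h | h
      · have : v - a = 0 := Complex.ext (by simp [h]) (by simp [him])
        rw [this, norm_zero] at v1; linarith
      · have : v + a = 0 := Complex.ext (by simp [h]) (by simp [him])
        rw [this, norm_zero] at v2; linarith
    · refine lt_of_le_of_ne b2 fun h => ?_
      rw [h] at hv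
      have hre : v.re = 0 := by
        have : b * |v.re| ≤ b * 0 := by linarith
        exact abs_nonpos_iff.1 (le_of_mul_le_mul_left this hb)
      rcases (abs_eq hb.le).1 h with h | h
      · have : v - b * Complex.I = 0 := Complex.ext (by simp [hre]) (by simp [h])
        rw [this, norm_zero] at v3; linarith
      · have : v + b * Complex.I = 0 := Complex.ext (by simp [hre]) (by simp [h])
        rw [this, norm_zero] at v4; linarith
  have hdich : ∀ v ∈ rect a b, b * |v.re| + a * |v.im| ≤ a * b → v ∈ K ∨ ‖G v‖ ≤ ‖G u₀‖ / 2 := by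
    intro v hv hvD
    by_cases h : v ∈ K
    · exact Or.inl h
    · refine Or.inr (hsmall v hv ?_)
      by_contra hcon
      push Not at hcon
      exact h ⟨hvD, hcon⟩
  have hu₀K : u₀ ∈ K := (hdich u₀ hu₀ hD₀).resolve_right (by linarith)
  obtain ⟨m, hmK, hm⟩ := hKcomp.exists_isMaxOn ⟨u₀, hu₀K⟩ (hd.continuousOn.mono hKsub).norm
  have hmax : IsMaxOn (norm ∘ G) (rect a b) m := by
    intro v hv
    simp only [Set.mem_ofPred_eq, Function.comp]
    obtain ⟨v', hv', hvD, hvG⟩ := exists_mem_diamond ha hb he h1 h2 hv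
    rw [← hvG]
    rcases hdich v' hv' hvD with h | h
    · exact hm h
    · have : ‖G u₀‖ ≤ ‖G m‖ := hm hu₀K
      linarith
  have hconst := Complex.eqOn_of_isPreconnected_of_isMaxOn_norm (convex_rect a b).isPreconnected
    (isOpen_rect a b) hd (hKsub hmK) hmax
  have hcl : (a : ℂ) ∈ closure (rect a b) := by
    refine mem_closure_of_tendsto (f := fun t : ℝ => (t : ℂ)) (b := 𝓝[<] a) ?_ ?_
    · exact (Complex.continuous_ofReal.tendsto a).mono_left nhdsWithin_le_nhds
    · filter_upwards [Ioo_mem_nhdsLT ha] with t ht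
      rw [mem_rect]
      simp [abs_of_pos ht.1, ht.2, hb]
  have : (𝓝[rect a b] (a : ℂ)).NeBot := mem_closure_iff_nhdsWithin_neBot.1 hcl
  have hlim : Tendsto G (𝓝[rect a b] (a : ℂ)) (𝓝 (G m)) :=
    tendsto_const_nhds.congr' (by
      filter_upwards [self_mem_nhdsWithin] with v hv
      exact (hconst hv).symm)
  have hz := tendsto_nhds_unique hlim hl
  have : ‖G u₀‖ ≤ ‖G m‖ := hm hu₀K
  rw [hz, norm_zero] at this
  linarith

lemma genF_zero_zero (a b : ℝ) : genF a b 0 0 = 0 := by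
  have := genF_neg a b 0 0
  simp only [neg_zero, pow_zero, one_mul] at this
  exact self_eq_neg.1 this

/-- The first integral: `F = genF a b 0` satisfies `F'² = F⁴ + B F² + A` with `A = F'(0)²`. -/
lemma exists_first_integral {a b : ℝ} (ha : 0 < a) (hb : 0 < b) :
    ∃ B : ℝ, ∀ u ∈ rect a b, genF a b 1 u ^ 2
      = genF a b 0 u ^ 4 + B * genF a b 0 u ^ 2 + genF a b 1 0 ^ 2 := by
  obtain ⟨B, C, hB⟩ := exists_tendsto_ener ha hb
  refine ⟨B, fun u hu => ?_⟩
  have key : ∀ v ∈ rect a b, ener a b B v - C = 0 := fun v hv =>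
    liouville_rect ha hb (G := fun v => ener a b B v - C)
      ((ener_differentiableOn ha hb B).sub_const C) (fun v => by simp only [ener_neg])
      (fun v hv hv' => by simp only [ener_shift ha hb B hv hv'])
      (fun v hv hv' => by simp only [ener_shift' ha hb B hv hv'])
      (by simpa using hB.sub_const C) hv
  have k1 := key u hu
  have k0 := key 0 (zero_mem_rect ha hb)
  rw [ener] at k1 k0
  rw [genF_zero_zero] at k0
  linear_combination k1 - k0

/-! ### The half-periods as elliptic integrals -/

/-- `∫₀^∞ dt / √(t⁴ + B t² + A)`. -/
noncomputable def quarticInt (A B : ℝ) : ℝ :=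
  ∫ t in Set.Ioi (0 : ℝ), (√(t ^ 4 + B * t ^ 2 + A))⁻¹

/-- A solution of `φ'² = φ⁴ + Bφ² + c²` that starts at `0` with slope `c > 0` and blows up at `a`
increases all the way; the blow-up time is then the elliptic integral. -/
lemma blowup_time {a B c : ℝ} (ha : 0 < a) (hc : 0 < c) {φ φ' : ℝ → ℝ}
    (hφ : ∀ x ∈ Set.Ico 0 a, HasDerivAt φ (φ' x) x) (hφ' : ContinuousOn φ' (Set.Ico 0 a))
    (h0 : φ 0 = 0) (h0' : φ' 0 = c)
    (hode : ∀ x ∈ Set.Ico 0 a, φ' x ^ 2 = φ x ^ 4 + B * φ x ^ 2 + c ^ 2)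
    (hlim : Tendsto φ (𝓝[<] a) atTop) :
    (∀ t : ℝ, 0 < t ^ 4 + B * t ^ 2 + c ^ 2) ∧ a = quarticInt (c ^ 2) B := by
  have hφc : ContinuousOn φ (Set.Ico 0 a) := fun x hx => (hφ x hx).continuousAt.continuousWithinAt
  have hzero : (0 : ℝ) ∈ Set.Ico 0 a := ⟨le_rfl, ha⟩
  have hbig : ∀ x₀ ∈ Set.Ico 0 a, ∀ T, ∃ x ∈ Set.Ioo x₀ a, T < φ x := by
    intro x₀ hx₀ T
    have := (hlim.eventually (eventually_gt_atTop T)).and (Ioo_mem_nhdsLT hx₀.2)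
    obtain ⟨x, h1, h2⟩ := this.exists
    exact ⟨x, h2, h1⟩
  have hsurj : ∀ t, 0 < t → ∃ x ∈ Set.Ioo 0 a, φ x = t := by
    intro t ht
    obtain ⟨x, hx, hxt⟩ := hbig 0 hzero t
    have hsub : Set.Icc 0 x ⊆ Set.Ico 0 a := fun y hy => ⟨hy.1, hy.2.trans_lt hx.2⟩
    obtain ⟨y, hy, hyt⟩ := intermediate_value_Icc hx.1.le (hφc.mono hsub)
      (show t ∈ Set.Icc (φ 0) (φ x) by rw [h0]; exact ⟨ht.le, hxt.le⟩)
    refine ⟨y, ⟨lt_of_le_of_ne hy.1 ?_, hy.2.trans_lt hx.2⟩, hyt⟩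
    rintro rfl
    rw [h0] at hyt; linarith
  have hnonneg : ∀ t, 0 < t → 0 ≤ t ^ 4 + B * t ^ 2 + c ^ 2 := by
    intro t ht
    obtain ⟨x, hx, rfl⟩ := hsurj t ht
    rw [← hode x ⟨hx.1.le, hx.2⟩]; positivity
  have hposP : ∀ t, 0 < t → 0 < t ^ 4 + B * t ^ 2 + c ^ 2 := by
    intro t ht
    refine lt_of_le_of_ne (hnonneg t ht) fun heq => ?_
    -- a positive zero is a double zero, and a solution through it would be stationary
    have hBneg : B < 0 := by
      by_contra h
      push Not at h
      have : 0 < t ^ 4 + B * t ^ 2 + c ^ 2 := by positivity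
      linarith
    have hB2 : 0 ≤ c ^ 2 - B ^ 2 / 4 := by
      have hs : 0 < √(-B / 2) := Real.sqrt_pos.2 (by linarith)
      have h := hnonneg _ hs
      have hsq : √(-B / 2) ^ 2 = -B / 2 := Real.sq_sqrt (by linarith)
      rw [show √(-B / 2) ^ 4 = (√(-B / 2) ^ 2) ^ 2 by ring, hsq] at h
      linarith
    have hBt : B = -2 * t ^ 2 := by
      have h1 : (t ^ 2 + B / 2) ^ 2 = 0 :=
        le_antisymm (by linarith [show (t ^ 2 + B / 2) ^ 2 = t ^ 4 + B * t ^ 2 + B ^ 2 / 4 by ring])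
          (sq_nonneg _)
      have := pow_eq_zero_iff two_ne_zero |>.1 h1
      linarith
    have hc2 : c ^ 2 = t ^ 4 := by rw [hBt] at heq; linarith
    obtain ⟨x₀, hx₀, hxt⟩ := hsurj t ht
    obtain ⟨x₁, hx₁, hx₁t⟩ := hbig x₀ ⟨hx₀.1.le, hx₀.2⟩ t
    have hsub : Set.Icc x₀ x₁ ⊆ Set.Ico 0 a := fun y hy =>
      ⟨hx₀.1.le.trans hy.1, hy.2.trans_lt hx₁.2⟩
    obtain ⟨M, hM⟩ := isCompact_Icc.exists_bound_of_continuousOn (hφc.mono hsub)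
    have := eq_zero_of_abs_deriv_le_mul_abs_self_of_eq_zero_right (f := fun x => φ x - t) (f' := φ')
      (K := M + t) (a := x₀) (b := x₁) ((hφc.mono hsub).sub continuousOn_const)
      (fun x hx => ((hφ x (hsub ⟨hx.1, hx.2.le⟩)).sub_const t).hasDerivWithinAt)
      (by simp [hxt])
      (fun x hx => by
        have hx' : x ∈ Set.Icc x₀ x₁ := ⟨hx.1, hx.2.le⟩
        have e := hode x (hsub hx')
        rw [hBt, hc2] at e
        have e2 : ‖φ' x‖ = ‖φ x + t‖ * ‖φ x - t‖ := by
          rw [← norm_mul]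
          simp only [Real.norm_eq_abs]
          rw [← sq_eq_sq_iff_abs_eq_abs, e]; ring
        rw [e2]
        refine mul_le_mul_of_nonneg_right ?_ (norm_nonneg _)
        refine (norm_add_le _ _).trans ?_
        rw [Real.norm_of_nonneg ht.le]
        linarith [hM x hx'])
      x₁ ⟨hx₁.1.le, le_rfl⟩
    linarith
  have hposP' : ∀ t : ℝ, 0 < t ^ 4 + B * t ^ 2 + c ^ 2 := by
    intro t
    rcases lt_trichotomy t 0 with h | h | h
    · have := hposP (-t) (by linarith)
      simpa [Even.neg_pow (by decide : Even 4)] using this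
    · rw [h]; have := sq_pos_of_pos hc; norm_num; linarith
    · exact hposP t h
  refine ⟨hposP', ?_⟩
  have hne : ∀ x ∈ Set.Ico 0 a, φ' x ≠ 0 := by
    intro x hx h
    have := hode x hx
    rw [h] at this
    have := hposP' (φ x)
    linarith
  have hder : ∀ x ∈ Set.Ico 0 a, 0 < φ' x := by
    intro x hx
    by_contra hcon
    push Not at hcon
    have hsub : Set.Icc 0 x ⊆ Set.Ico 0 a := fun y hy => ⟨hy.1, hy.2.trans_lt hx.2⟩
    obtain ⟨y, hy, hy0⟩ := intermediate_value_Icc' hx.1 (hφ'.mono hsub)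
      (show (0 : ℝ) ∈ Set.Icc (φ' x) (φ' 0) by rw [h0']; exact ⟨hcon, hc.le⟩)
    exact hne y (hsub hy) hy0
  have hmono : StrictMonoOn φ (Set.Ico 0 a) :=
    strictMonoOn_of_deriv_pos (convex_Ico 0 a) hφc (fun x hx => by
      rw [interior_Ico] at hx
      have hx' : x ∈ Set.Ico 0 a := ⟨hx.1.le, hx.2⟩
      rw [(hφ x hx').deriv]; exact hder x hx')
  have hsubI : Set.Ioo 0 a ⊆ Set.Ico 0 a := Set.Ioo_subset_Ico_self
  have himg : φ '' Set.Ioo 0 a = Set.Ioi 0 := by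
    ext t
    constructor
    · rintro ⟨x, hx, rfl⟩
      have := hmono hzero (hsubI hx) hx.1
      rwa [h0] at this
    · intro ht
      exact hsurj t ht
  rw [quarticInt, ← himg, integral_image_eq_integral_abs_deriv_smul measurableSet_Ioo
    (fun x hx => (hφ x (hsubI hx)).hasDerivWithinAt) (hmono.injOn.mono hsubI)]
  rw [setIntegral_congr_fun (g := fun _ => (1 : ℝ)) measurableSet_Ioo]
  · simp [ha.le]
  · intro x hx
    have hx' := hder x (hsubI hx)
    simp only [smul_eq_mul]
    rw [← hode x (hsubI hx), Real.sqrt_sq hx'.le, abs_of_pos hx', mul_inv_cancel₀ hx'.ne']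

/-- The slope `F'(0)` of `F = genF a b 0`, as a real number. -/
noncomputable def slope0 (a b : ℝ) : ℝ :=
  (∫ s in Set.Ioi (0 : ℝ), s * weight a b s) + ∫ s in Set.Ioi (0 : ℝ), s * weight b a s

lemma genF_one_zero (a b : ℝ) : genF a b 1 0 = slope0 a b := by
  have := genF_zero_odd a b 0
  simpa [slope0] using this

lemma integral_weight_pos {a b : ℝ} (ha : 0 < a) (hb : 0 < b) :
    0 < ∫ s in Set.Ioi (0 : ℝ), s * weight b a s := by
  have hint : IntegrableOn (fun s : ℝ => s * weight b a s) (Set.Ioi 0) := by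
    have := (lap_integrable (weight_decay ha hb) 1 (u := 0) (by simpa)).re
    simpa [IntegrableOn] using this
  rw [integral_pos_iff_support_of_nonneg_ae _ hint]
  · rw [Measure.restrict_apply' measurableSet_Ioi]
    refine lt_of_lt_of_le ?_ (measure_mono (μ := volume) (s := Set.Ioi (0 : ℝ)) fun s hs => ?_)
    · simp
    · exact ⟨(mul_pos hs (weight_pos b ha s)).ne', hs⟩
  · filter_upwards [ae_restrict_mem measurableSet_Ioi] with s hs
    exact (mul_pos hs (weight_pos b ha s)).le

lemma slope0_pos {a b : ℝ} (ha : 0 < a) (hb : 0 < b) : 0 < slope0 a b :=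
  add_pos (integral_weight_pos hb ha) (integral_weight_pos ha hb)

lemma slope0_swap (a b : ℝ) : slope0 a b = slope0 b a := add_comm _ _

lemma genF_ofReal (a b : ℝ) (n : ℕ) (x : ℝ) : ((genF a b n x).re : ℂ) = genF a b n x := by
  rw [← Complex.conj_eq_iff_re, ← genF_conj, Complex.conj_ofReal]

lemma ofReal_mem_rect {a b x : ℝ} (hb : 0 < b) (hx : |x| < a) : (x : ℂ) ∈ rect a b := by
  rw [mem_rect]; simpa using ⟨hx, hb⟩

lemma halfPeriod_eq {a b B : ℝ} (ha : 0 < a) (hb : 0 < b)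
    (hB : ∀ u ∈ rect a b, genF a b 1 u ^ 2
      = genF a b 0 u ^ 4 + B * genF a b 0 u ^ 2 + (slope0 a b : ℂ) ^ 2) :
    (∀ t : ℝ, 0 < t ^ 4 + B * t ^ 2 + slope0 a b ^ 2) ∧ a = quarticInt (slope0 a b ^ 2) B := by
  have hmem : ∀ x ∈ Set.Ico 0 a, (x : ℂ) ∈ rect a b := fun x hx =>
    ofReal_mem_rect hb (by rw [abs_of_nonneg hx.1]; exact hx.2)
  have hder : ∀ n, ∀ x ∈ Set.Ico 0 a,
      HasDerivAt (fun x : ℝ => (genF a b n x).re) (genF a b (n + 1) x).re x := fun n x hx =>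
    (hasDerivAt_genF ha hb n (hmem x hx)).real_of_complex
  refine blowup_time (φ := fun x => (genF a b 0 x).re) (φ' := fun x => (genF a b 1 x).re) ha
    (slope0_pos ha hb) (hder 0)
    (fun x hx => (hder 1 x hx).continuousAt.continuousWithinAt)
    (by simp [genF_zero_zero]) (by simp [genF_one_zero]) ?_ ?_
  · intro x hx
    have := hB x (hmem x hx)
    rw [← genF_ofReal a b 1, ← genF_ofReal a b 0] at this
    exact_mod_cast this
  · have e : ∀ᶠ x : ℝ in 𝓝[<] a, (a - x)⁻¹ + (remF a b 0 x).re = (genF a b 0 x).re := by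
      filter_upwards [Ioo_mem_nhdsLT ha] with x hx
      rw [genF_zero_eq ha hb (hmem x ⟨hx.1.le, hx.2⟩), Complex.add_re, one_div]
      congr 1
      rw [← Complex.ofReal_sub, ← Complex.ofReal_inv, Complex.ofReal_re]
    refine Tendsto.congr' e ?_
    have hrem : ContinuousAt (fun x : ℝ => (remF a b 0 x).re) a :=
      (hasDerivAt_remF ha hb 0 (u := (a : ℂ)) (by simp; linarith) (by simp; linarith)
        (by simpa)).real_of_complex.continuousAt
    refine Tendsto.atTop_add ?_ (hrem.tendsto.mono_left nhdsWithin_le_nhds)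
    refine tendsto_inv_nhdsGT_zero.comp ?_
    refine tendsto_nhdsWithin_iff.2 ⟨?_, ?_⟩
    · have : Tendsto (fun x : ℝ => a - x) (𝓝 a) (𝓝 (a - a)) := by
        apply Continuous.tendsto; fun_prop
      rw [sub_self] at this
      exact this.mono_left nhdsWithin_le_nhds
    · filter_upwards [self_mem_nhdsWithin] with x hx
      exact Set.mem_Ioi.2 (sub_pos.2 (Set.mem_Iio.1 hx))

/-- Both half-periods are given by the quartic of the first integral; passing from `a` to `b`, that
is, replacing `u` by `iu`, changes the sign of `B`. -/
lemma exists_half_periods {a b : ℝ} (ha : 0 < a) (hb : 0 < b) :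
    ∃ B : ℝ, (∀ u ∈ rect a b, genF a b 1 u ^ 2
        = genF a b 0 u ^ 4 + B * genF a b 0 u ^ 2 + (slope0 a b : ℂ) ^ 2) ∧
      (∀ t : ℝ, 0 < t ^ 4 + B * t ^ 2 + slope0 a b ^ 2) ∧
      (∀ t : ℝ, 0 < t ^ 4 + -B * t ^ 2 + slope0 a b ^ 2) ∧
      a = quarticInt (slope0 a b ^ 2) B ∧ b = quarticInt (slope0 a b ^ 2) (-B) := by
  obtain ⟨B, hB⟩ := exists_first_integral ha hb
  rw [genF_one_zero] at hB
  have hB' : ∀ u ∈ rect b a, genF b a 1 u ^ 2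
      = genF b a 0 u ^ 4 + ((-B : ℝ) : ℂ) * genF b a 0 u ^ 2 + (slope0 b a : ℂ) ^ 2 := by
    intro u hu
    have hm : Complex.I * u ∈ rect a b := by
      rw [mem_rect]; simpa using ⟨hu.2, hu.1⟩
    have := hB _ hm
    rw [genF_rot_zero, genF_rot_one, mul_pow, mul_pow, Complex.I_sq, Complex.I_pow_four] at this
    rw [this, slope0_swap]
    push_cast
    ring
  obtain ⟨p1, e1⟩ := halfPeriod_eq ha hb hB
  obtain ⟨p2, e2⟩ := halfPeriod_eq hb ha hB'
  rw [slope0_swap] at p2 e2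
  exact ⟨B, hB, p1, p2, e1, e2⟩

/-! ### Identification with the complete elliptic integrals -/

lemma one_sub_sq_sin_pos {k : ℝ} (hk : k ∈ Set.Ioo (0 : ℝ) 1) (θ : ℝ) :
    0 < 1 - k ^ 2 * Real.sin θ ^ 2 := by
  have h1 : k ^ 2 < 1 := by
    have := hk.1; have := hk.2; nlinarith
  have h2 : Real.sin θ ^ 2 ≤ 1 := Real.sin_sq_le_one θ
  have := mul_le_mul_of_nonneg_left h2 (sq_nonneg k)
  linarith

lemma ellipticK_integrand_continuous {k : ℝ} (hk : k ∈ Set.Ioo (0 : ℝ) 1) :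
    Continuous fun θ : ℝ => (1 - k ^ 2 * Real.sin θ ^ 2) ^ (-(1 / 2) : ℝ) :=
  Continuous.rpow_const (by fun_prop) fun θ => Or.inl (one_sub_sq_sin_pos hk θ).ne'

lemma ellipticK_pos {k : ℝ} (hk : k ∈ Set.Ioo (0 : ℝ) 1) : 0 < ellipticK k :=
  intervalIntegral.intervalIntegral_pos_of_pos
    ((ellipticK_integrand_continuous hk).intervalIntegrable _ _)
    (fun θ => Real.rpow_pos_of_pos (one_sub_sq_sin_pos hk θ) _) (by positivity)

lemma tan_image : Real.tan '' Set.Ioo 0 (π / 2) = Set.Ioi 0 := by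
  ext t
  constructor
  · rintro ⟨x, hx, rfl⟩
    exact Real.tan_pos_of_pos_of_lt_pi_div_two hx.1 hx.2
  · intro ht
    exact ⟨Real.arctan t, ⟨Real.arctan_pos.2 ht, Real.arctan_lt_pi_div_two t⟩, Real.tan_arctan t⟩

/-- `K(k)` in algebraic form, by the half-angle substitution `t = tan(θ/2)`. -/
lemma ellipticK_eq_quarticInt {k : ℝ} (hk : k ∈ Set.Ioo (0 : ℝ) 1) :
    ellipticK k = quarticInt 1 (2 * (1 - 2 * k ^ 2)) := by
  set f : ℝ → ℝ := fun θ => (1 - k ^ 2 * Real.sin θ ^ 2) ^ (-(1 / 2) : ℝ) with hf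
  have hfc : Continuous f := ellipticK_integrand_continuous hk
  have hcos : ∀ x ∈ Set.Ioo 0 (π / 2), 0 < Real.cos x := fun x hx =>
    Real.cos_pos_of_mem_Ioo ⟨by linarith [hx.1, Real.pi_pos], hx.2⟩
  have h1 : quarticInt 1 (2 * (1 - 2 * k ^ 2)) = ∫ x in (0:ℝ)..(π / 2), f (2 * x) := by
    rw [quarticInt, ← tan_image, integral_image_eq_integral_abs_deriv_smul measurableSet_Ioo
      (fun x hx => (Real.hasDerivAt_tan (hcos x hx).ne').hasDerivWithinAt)
      (Real.injOn_tan.mono (Set.Ioo_subset_Ioo_left (by linarith [Real.pi_pos]))),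
      intervalIntegral.integral_of_le (by positivity), integral_Ioc_eq_integral_Ioo]
    refine setIntegral_congr_fun measurableSet_Ioo fun x hx => ?_
    have hc := hcos x hx
    have hpos := one_sub_sq_sin_pos hk (2 * x)
    have e : Real.tan x ^ 4 + 2 * (1 - 2 * k ^ 2) * Real.tan x ^ 2 + 1
        = (1 - k ^ 2 * Real.sin (2 * x) ^ 2) * (1 / Real.cos x ^ 2) ^ 2 := by
      rw [Real.tan_eq_sin_div_cos, Real.sin_two_mul]
      have hs := Real.sin_sq_add_cos_sq x
      field_simp
      linear_combination (Real.sin x ^ 2 + Real.cos x ^ 2 + 1) * hs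
    simp only [smul_eq_mul, hf]
    rw [e, Real.sqrt_mul hpos.le, Real.sqrt_sq (by positivity), abs_of_pos (by positivity),
      Real.rpow_neg hpos.le, ← Real.sqrt_eq_rpow]
    have := Real.sqrt_pos.2 hpos
    field_simp
  have h2 : ∫ x in (0:ℝ)..(π / 2), f (2 * x) = 2⁻¹ * ∫ x in (0:ℝ)..π, f x := by
    rw [intervalIntegral.integral_comp_mul_left f two_ne_zero]
    simp [mul_div_cancel₀]
  have h3 : ∫ x in (π / 2)..π, f x = ∫ x in (0:ℝ)..(π / 2), f x := by
    have := intervalIntegral.integral_comp_sub_left (a := 0) (b := π / 2) f π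
    rw [sub_zero, show π - π / 2 = π / 2 by ring] at this
    rw [← this]
    simp [hf]
  have h4 := intervalIntegral.integral_add_adjacent_intervals
    (hfc.intervalIntegrable 0 (π / 2)) (hfc.intervalIntegrable (μ := volume) (π / 2) π)
  rw [h1, h2, ← h4, h3, ellipticK]
  ring

lemma quarticInt_lt {A B A' B' : ℝ} (hA : A ≤ A') (hB : B ≤ B') (hne : A ≠ A' ∨ B ≠ B')
    (hP : ∀ t : ℝ, 0 < t ^ 4 + B * t ^ 2 + A) (h1 : quarticInt A B ≠ 0)
    (h2 : quarticInt A' B' ≠ 0) : quarticInt A' B' < quarticInt A B := by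
  have i1 : IntegrableOn (fun t : ℝ => (√(t ^ 4 + B * t ^ 2 + A))⁻¹) (Set.Ioi 0) :=
    not_imp_comm.1 integral_undef h1
  have i2 : IntegrableOn (fun t : ℝ => (√(t ^ 4 + B' * t ^ 2 + A'))⁻¹) (Set.Ioi 0) :=
    not_imp_comm.1 integral_undef h2
  have hlt : ∀ t ∈ Set.Ioi (0 : ℝ), 0 < (√(t ^ 4 + B * t ^ 2 + A))⁻¹
      - (√(t ^ 4 + B' * t ^ 2 + A'))⁻¹ := by
    intro t ht
    have ht2 : 0 < t ^ 2 := pow_pos ht 2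
    have h : t ^ 4 + B * t ^ 2 + A < t ^ 4 + B' * t ^ 2 + A' := by
      have := mul_le_mul_of_nonneg_right hB ht2.le
      rcases hne with h | h
      · have := lt_of_le_of_ne hA h
        linarith
      · have := mul_lt_mul_of_pos_right (lt_of_le_of_ne hB h) ht2
        linarith
    have hs := Real.sqrt_lt_sqrt (hP t).le h
    have hs0 := Real.sqrt_pos.2 (hP t)
    exact sub_pos.2 (inv_strictAnti₀ hs0 hs)
  have i3 : IntegrableOn (fun t : ℝ => (√(t ^ 4 + B * t ^ 2 + A))⁻¹
      - (√(t ^ 4 + B' * t ^ 2 + A'))⁻¹) (Set.Ioi 0) := i1.sub i2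
  rw [← sub_pos, quarticInt, quarticInt, ← integral_sub i1 i2,
    integral_pos_iff_support_of_nonneg_ae _ i3]
  · rw [Measure.restrict_apply' measurableSet_Ioi]
    refine lt_of_lt_of_le ?_ (measure_mono (μ := volume) (s := Set.Ioi (0 : ℝ)) fun s hs => ?_)
    · simp
    · exact ⟨(hlt s hs).ne', hs⟩
  · filter_upwards [ae_restrict_mem measurableSet_Ioi] with s hs
    exact (hlt s hs).le

/-- The two half-periods determine the quartic, by monotonicity of the elliptic integral in its
coefficients. -/
lemma quartic_unique {A B A' B' : ℝ}
    (hP1 : ∀ t : ℝ, 0 < t ^ 4 + B * t ^ 2 + A) (hP2 : ∀ t : ℝ, 0 < t ^ 4 + -B * t ^ 2 + A)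
    (hQ1 : ∀ t : ℝ, 0 < t ^ 4 + B' * t ^ 2 + A') (hQ2 : ∀ t : ℝ, 0 < t ^ 4 + -B' * t ^ 2 + A')
    (h1 : quarticInt A B = quarticInt A' B') (h2 : quarticInt A (-B) = quarticInt A' (-B'))
    (n1 : quarticInt A B ≠ 0) (n2 : quarticInt A (-B) ≠ 0) : A = A' ∧ B = B' := by
  by_contra hcon
  have hne : A ≠ A' ∨ B ≠ B' := by
    by_contra h
    push Not at h
    exact hcon h
  have hne' : A' ≠ A ∨ B' ≠ B := hne.imp Ne.symm Ne.symm
  have n1' := h1 ▸ n1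
  have n2' := h2 ▸ n2
  rcases le_total A A' with hA | hA <;> rcases le_total B B' with hB | hB
  · exact (quarticInt_lt hA hB hne hP1 n1 n1').ne' h1
  · exact (quarticInt_lt hA (neg_le_neg hB) (by simpa using hne) hP2 n2 n2').ne' h2
  · exact (quarticInt_lt hA (neg_le_neg hB) (by simpa using hne') hQ2 n2' n2).ne h2
  · exact (quarticInt_lt hA hB hne' hQ1 n1' n1).ne h1

/-- For `a = K(k)`, `b = K(k')` the quartic of the first integral is
`t⁴ + 2(1 - 2k²)t² + 1`. -/
lemma first_integral_ellipticK {k : ℝ} (hk : k ∈ Set.Ioo (0 : ℝ) 1) :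
    genF (ellipticK k) (ellipticK (√(1 - k ^ 2))) 1 0 = 1 ∧
    ∀ u ∈ rect (ellipticK k) (ellipticK (√(1 - k ^ 2))),
      genF (ellipticK k) (ellipticK (√(1 - k ^ 2))) 1 u ^ 2
        = genF (ellipticK k) (ellipticK (√(1 - k ^ 2))) 0 u ^ 4
          + ((2 * (1 - 2 * k ^ 2) : ℝ) : ℂ)
            * genF (ellipticK k) (ellipticK (√(1 - k ^ 2))) 0 u ^ 2 + 1 := by
  have hk2 : 0 < k ^ 2 ∧ k ^ 2 < 1 := ⟨pow_pos hk.1 2, by have := hk.1; have := hk.2; nlinarith⟩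
  have hk' : √(1 - k ^ 2) ∈ Set.Ioo (0 : ℝ) 1 :=
    ⟨Real.sqrt_pos.2 (by linarith), by rw [Real.sqrt_lt' one_pos]; linarith⟩
  have hsq : √(1 - k ^ 2) ^ 2 = 1 - k ^ 2 := Real.sq_sqrt (by linarith)
  have ea := ellipticK_eq_quarticInt hk
  have eb := ellipticK_eq_quarticInt hk'
  rw [hsq, show 2 * (1 - 2 * (1 - k ^ 2)) = -(2 * (1 - 2 * k ^ 2)) by ring] at eb
  have ha := ellipticK_pos hk
  have hb := ellipticK_pos hk'
  set a := ellipticK k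
  set b := ellipticK (√(1 - k ^ 2))
  obtain ⟨B, hB, p1, p2, e1, e2⟩ := exists_half_periods ha hb
  have hpos : ∀ β : ℝ, |β| < 2 → ∀ t : ℝ, 0 < t ^ 4 + β * t ^ 2 + 1 := by
    intro β hβ t
    rw [abs_lt] at hβ
    nlinarith [sq_nonneg (t ^ 2 + β / 2)]
  have hβ : |2 * (1 - 2 * k ^ 2)| < 2 := by rw [abs_lt]; constructor <;> linarith
  obtain ⟨hA, hBeq⟩ := quartic_unique p1 p2 (hpos _ hβ) (hpos _ (by rwa [abs_neg]))
    (e1.symm.trans ea) (e2.symm.trans eb) (by rw [← e1]; exact ha.ne') (by rw [← e2]; exact hb.ne')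
  have hc := slope0_pos ha hb
  have hc1 : slope0 a b = 1 := (pow_eq_one_iff_of_nonneg hc.le two_ne_zero).1 hA
  rw [hc1, hBeq] at hB
  refine ⟨by rw [genF_one_zero, hc1]; simp, fun u hu => ?_⟩
  rw [hB u hu]
  simp

/-! ### Derivatives at the origin and moments -/

open Polynomial in
/-- If `F'² = F⁴ + B F² + 1`, then `F⁽²ᵐ⁾ = derivPoly B m (F)`. -/
noncomputable def derivPoly {R : Type*} [CommRing R] (B : R) : ℕ → Polynomial R
  | 0 => X
  | m + 1 => derivative (derivative (derivPoly B m)) * (X ^ 4 + C B * X ^ 2 + 1)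
      + derivative (derivPoly B m) * (2 * X ^ 3 + C B * X)

lemma derivPoly_map {R S : Type*} [CommRing R] [CommRing S] (f : R →+* S) (B : R) (m : ℕ) :
    (derivPoly B m).map f = derivPoly (f B) m := by
  induction m with
  | zero => simp [derivPoly]
  | succ m ih => simp [derivPoly, ← ih, Polynomial.derivative_map]

lemma derivPoly_one {R : Type*} [CommRing R] (B : R) :
    (Polynomial.derivative (derivPoly B 1)).eval 0 = B := by
  simp [derivPoly]

lemma derivPoly_two {R : Type*} [CommRing R] (B : R) :
    (Polynomial.derivative (derivPoly B 2)).eval 0 = 12 + B ^ 2 := by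
  simp [derivPoly]
  ring

lemma genF_odd_zero {a b : ℝ} (ha : 0 < a) (hb : 0 < b) {B : ℂ} (h1 : genF a b 1 0 = 1)
    (hB : ∀ u ∈ rect a b, genF a b 1 u ^ 2 = genF a b 0 u ^ 4 + B * genF a b 0 u ^ 2 + 1) (m : ℕ) :
    genF a b (2 * m + 1) 0 = (Polynomial.derivative (derivPoly B m)).eval 0 := by
  -- dividing by `F'` is only possible where it does not vanish, which suffices near `0`
  set U : Set ℂ := rect a b ∩ {u | genF a b 1 u ≠ 0} with hU
  have hUo : IsOpen U := by
    have hc : ContinuousOn (genF a b 1) (rect a b) := fun u hu =>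
      (hasDerivAt_genF ha hb 1 hu).continuousAt.continuousWithinAt
    exact hc.isOpen_inter_preimage (isOpen_rect a b) isOpen_ne
  have h0U : (0 : ℂ) ∈ U := ⟨zero_mem_rect ha hb, by simp [h1]⟩
  have h2 : ∀ u ∈ U, genF a b 2 u = 2 * genF a b 0 u ^ 3 + B * genF a b 0 u := by
    intro u hu
    have d0 := hasDerivAt_genF ha hb 0 hu.1
    have d1 := hasDerivAt_genF ha hb 1 hu.1
    have e1 := d1.fun_pow 2
    have e2 := ((d0.fun_pow 4).add ((d0.fun_pow 2).const_mul B)).add_const (1 : ℂ)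
    have e3 := e1.unique (e2.congr_of_eventuallyEq (by
      filter_upwards [(isOpen_rect a b).mem_nhds hu.1] with v hv
      rw [hB v hv]; rfl))
    refine mul_left_cancel₀ hu.2 ?_
    norm_num at e3
    linear_combination e3 / 2
  have hodd : ∀ m, (∀ u ∈ U, genF a b (2 * m) u = (derivPoly B m).eval (genF a b 0 u)) →
      ∀ u ∈ U, genF a b (2 * m + 1) u
        = (Polynomial.derivative (derivPoly B m)).eval (genF a b 0 u) * genF a b 1 u := by
    intro m ih u hu
    have d0 := hasDerivAt_genF ha hb 0 hu.1
    have e1 := ((derivPoly B m).hasDerivAt (genF a b 0 u)).comp u d0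
    exact (hasDerivAt_genF ha hb (2 * m) hu.1).unique (e1.congr_of_eventuallyEq (by
      filter_upwards [hUo.mem_nhds hu] with v hv
      exact ih v hv))
  have heven : ∀ m, ∀ u ∈ U, genF a b (2 * m) u = (derivPoly B m).eval (genF a b 0 u) := by
    intro m
    induction m with
    | zero => intro u hu; simp [derivPoly]
    | succ m ih =>
      intro u hu
      have d0 := hasDerivAt_genF ha hb 0 hu.1
      have d1 := hasDerivAt_genF ha hb 1 hu.1
      have e1 := (((Polynomial.derivative (derivPoly B m)).hasDerivAt (genF a b 0 u)).comp u d0).mul d1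
      have e2 := (hasDerivAt_genF ha hb (2 * m + 1) hu.1).unique (e1.congr_of_eventuallyEq (by
        filter_upwards [hUo.mem_nhds hu] with v hv
        exact hodd m ih v hv))
      rw [show 2 * (m + 1) = 2 * m + 1 + 1 by ring, e2]
      simp only [Function.comp, derivPoly, zero_add, Nat.reduceAdd]
      rw [h2 u hu]
      simp
      linear_combination
        (Polynomial.derivative (Polynomial.derivative (derivPoly B m))).eval (genF a b 0 u)
          * hB u hu.1
  rw [hodd m (heven m) 0 h0U, genF_zero_zero, h1, mul_one]

/-- The substitution `x = s²`. -/
lemma integral_moment (p q : ℝ) (n : ℕ) :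
    (∫ x in Set.Ioi (0 : ℝ), x ^ n / (Real.cos (p * √x) + Real.cosh (q * √x)))
      = 2 * ∫ s in Set.Ioi (0 : ℝ), s ^ (2 * n + 1) * weight p q s := by
  rw [← integral_comp_rpow_Ioi_of_pos (p := 2) two_pos, ← integral_const_mul]
  refine setIntegral_congr_fun measurableSet_Ioi fun s hs => ?_
  have hs0 : (0 : ℝ) ≤ s := le_of_lt hs
  simp only [smul_eq_mul, Real.rpow_two, weight]
  rw [Real.sqrt_sq hs0, show (2 : ℝ) - 1 = 1 by norm_num, Real.rpow_one, div_eq_mul_inv]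
  ring

lemma Iplus_eq (k : ℝ) (n : ℕ) :
    ((Iplus k n : ℝ) : ℂ)
      = (-1) ^ n * genF (ellipticK k) (ellipticK (√(1 - k ^ 2))) (2 * n + 1) 0 := by
  have h : ((-1 : ℝ) ^ n) * (-1) ^ n = 1 := by rw [← mul_pow]; simp
  have e : ∀ s : ℝ, s ^ n / (Real.cosh (ellipticK k * √s) + Real.cos (ellipticK (√(1 - k ^ 2)) * √s))
      = s ^ n / (Real.cos (ellipticK (√(1 - k ^ 2)) * √s) + Real.cosh (ellipticK k * √s)) :=
    fun s => by rw [add_comm]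
  rw [genF_zero_odd, Iplus, integral_moment]
  simp only [e]
  rw [integral_moment]
  rw [show ((-1 : ℂ) ^ n) = (((-1 : ℝ) ^ n : ℝ) : ℂ) by push_cast; rfl, ← Complex.ofReal_mul]
  congr 1
  linear_combination (-∫ s in Set.Ioi (0 : ℝ), s ^ (2 * n + 1)
    * weight (ellipticK k) (ellipticK (√(1 - k ^ 2))) s) * h

/-- Every moment is, up to sign, a universal integer polynomial in `2(1 - 2k²)`. -/
lemma Iplus_eq_derivPoly {k : ℝ} (hk : k ∈ Set.Ioo (0 : ℝ) 1) (n : ℕ) :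
    Iplus k n = (-1) ^ n * (Polynomial.derivative (derivPoly (2 * (1 - 2 * k ^ 2)) n)).eval 0 := by
  have hk' : √(1 - k ^ 2) ∈ Set.Ioo (0 : ℝ) 1 := by
    have := hk.1
    have := hk.2
    exact ⟨Real.sqrt_pos.2 (by nlinarith), by rw [Real.sqrt_lt' one_pos]; nlinarith⟩
  obtain ⟨h1, hB⟩ := first_integral_ellipticK hk
  have h := Iplus_eq k n
  rw [genF_odd_zero (ellipticK_pos hk) (ellipticK_pos hk') h1 hB n] at h
  have hmap := derivPoly_map Complex.ofRealHom (2 * (1 - 2 * k ^ 2)) n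
  rw [show ((2 * (1 - 2 * k ^ 2) : ℝ) : ℂ) = Complex.ofRealHom (2 * (1 - 2 * k ^ 2)) from rfl,
    ← hmap, Polynomial.derivative_map, ← map_zero Complex.ofRealHom, Polynomial.eval_map_apply] at h
  apply Complex.ofReal_injective
  rw [h]
  simp

end Kuznetsov

theorem Iplus_values_and_rationality (k : ℝ) (hk : k ∈ Set.Ioo (0 : ℝ) 1) :
    Iplus k 1 = -2 * (1 - 2 * k ^ 2) ∧
    Iplus k 2 = 16 * (1 - k ^ 2 + k ^ 4) ∧
    ((∃ r : ℚ, (r : ℝ) = k ^ 2) → ∀ n : ℕ, ∃ r : ℚ, (r : ℝ) = Iplus k n) := by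
  refine ⟨?_, ?_, ?_⟩
  · rw [Kuznetsov.Iplus_eq_derivPoly hk, Kuznetsov.derivPoly_one]; ring
  · rw [Kuznetsov.Iplus_eq_derivPoly hk, Kuznetsov.derivPoly_two]; ring
  · rintro ⟨r, hr⟩ n
    refine ⟨(-1) ^ n * (Polynomial.derivative
      (Kuznetsov.derivPoly (2 * (1 - 2 * r)) n)).eval 0, ?_⟩
    have hmap := Kuznetsov.derivPoly_map (Rat.castHom ℝ) (2 * (1 - 2 * r)) n
    rw [Kuznetsov.Iplus_eq_derivPoly hk, ← hr,
      show (2 * (1 - 2 * (r : ℝ))) = Rat.castHom ℝ (2 * (1 - 2 * r)) by simp,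
      ← hmap, Polynomial.derivative_map, ← map_zero (Rat.castHom ℝ), Polynomial.eval_map_apply]
    simp
end

section
/- Let k ∈ (0,1) and let p ≥ 1 be an integer. Then Kuznetsov's moment integral I_{p−1}^+ has the Lambert series representation I_{p−1}^+ = (π/K)^{2p} (−(1/2)E_{2p−1}(0) + 2 Σ_{n≥1} n^{2p−1} q^n/(1 + (−q)^n)), where q = e^{−πK'/K}. -/
/-!
After the substitution `x = (πy/K)²`, with `b = πK'/K` and `m = 2p - 1`, the claim becomes

  `∫ y^m / (cosh by + cos πy) - (-1)^p ∫ y^m / (cosh πy + cos by)`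
    `= (2^{2p} - 1) B_{2p} / (2p) + 2 ∑ n^m q^n / (1 + (-q)^n)`,  `q = e^{-b}`,

both integrals being over `(0, ∞)` (`real_moment_identity`). It is proved for every `b > 0`; no
property of the elliptic integrals other than positivity enters.

Put `c = b + πi` and `fermi c x = 1 / (1 + e^{cx})`. At integers `(-1)^n fermi c n` is exactly the
Lambert term `q^n / (1 + (-q)^n)`. Poisson summation for `x^m fermi c x e^{πix}` on the half line
therefore writes the Lambert series as the sum, over all odd multiples `t` of `π`, of the Laplace
transforms `fermiLaplace m c (it)` (`hasSum_poisson`; two integrations by parts give the decay it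
needs).

Group the frequencies `±(2j+1)π` and let `A` be the term at `+(2j+1)π` (`pair_eq`).

* The term at `-(2j+1)π` minus `conj A` involves `fermi c - fermi (conj c)`, which is a multiple of
  `sin πx / (cosh bx + cos πx)`. The sine telescopes against `e^{(2j+1)πix}`, leaving
  `g_j - g_{j+1}`, where `g_j` (`oscMoment`) is the first integral with an extra factor `e^{2πijx}`
  and tends to zero by the Riemann–Lebesgue lemma.
* Expanding in a geometric series shows that `fermiLaplace m` is homogeneous of degree `-2p`, so
  multiplying both arguments by `-i` costs a factor `(-1)^p` (`fermiLaplace_rotate`). Hence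
  `A + conj A` involves `fermi (π + bi) + fermi (π - bi) = 1 - sinh πx / (cosh πx + cos bx)`. The
  hyperbolic sine telescopes against `e^{-(2j+1)πx}`, leaving `h_j - h_{j+1}`, where `h_j`
  (`dampedMoment`) is the second integral with an extra factor `e^{-2πjx}`; the constant `1`
  contributes `m! / ((2j+1)π)^{2p}`.

Summing over `j` leaves `g_0` and `h_0`, the two integrals, together with the sum of the
`(2j+1)^{-2p}`, which Euler's formula for `ζ(2p)` turns into the Bernoulli number.
-/

open MeasureTheory Real

namespace KuznetsovMoment

open Filter Topology Set

/-! ### Fermi functions and the hyperbolic-trigonometric kernel -/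

/-- The Fermi-type function `1 / (1 + e^{cx})`. It is used for `0 < c.re`, where the denominator
never vanishes on `ℝ`. -/
noncomputable def fermi (c : ℂ) (x : ℝ) : ℂ := 1 / (1 + Complex.exp (c * x))

/-- The kernel `1 / (cosh βx + cos γx)`, into which both integrands of `Iplus` turn after the
substitution `x = (πy/K)²`. -/
noncomputable def kern (β γ x : ℝ) : ℝ := 1 / (Real.cosh (β * x) + Real.cos (γ * x))

/-- The Laplace transform at `s` of `x ↦ x ^ m * fermi c x` on the half line, `0 ≤ s.re`. -/
noncomputable def fermiLaplace (m : ℕ) (c s : ℂ) : ℂ :=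
  ∫ x in Ioi (0 : ℝ), (x : ℂ) ^ m * fermi c x * Complex.exp (-(s * x))

/-- The modulus of `e^{cx}` is `1` only at `x = 0`, where `1 + e^{cx} = 2`. -/
lemma one_add_exp_ne_zero {c : ℂ} (hc : 0 < c.re) (x : ℝ) : 1 + Complex.exp (c * x) ≠ 0 := by
  intro h
  have h1 : Complex.exp (c * x) = -1 := by linear_combination h
  have h2 : Real.exp (c.re * x) = 1 := by
    have := congrArg norm h1
    simpa [Complex.norm_exp] using this
  have h3 : x = 0 := by
    have := Real.exp_eq_one_iff _ |>.1 h2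
    rcases mul_eq_zero.1 this with h | h
    · exact absurd h hc.ne'
    · exact h
  subst h3
  norm_num at h1

lemma continuous_fermi {c : ℂ} (hc : 0 < c.re) : Continuous (fermi c) := by
  unfold fermi
  exact continuous_const.div (by fun_prop) (one_add_exp_ne_zero hc)

lemma tendsto_exp_neg_mul {c : ℂ} (hc : 0 < c.re) :
    Tendsto (fun x : ℝ => Complex.exp (-(c * x))) atTop (𝓝 0) := by
  rw [tendsto_zero_iff_norm_tendsto_zero]
  have : (fun x : ℝ => ‖Complex.exp (-(c * x))‖) = fun x : ℝ => Real.exp (-(c.re * x)) := by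
    ext x; simp [Complex.norm_exp]
  rw [this]
  exact Real.tendsto_exp_neg_atTop_nhds_zero.comp (tendsto_id.const_mul_atTop hc)

/-- `fermi c x * e^{cx} = 1 / (1 + e^{-cx})` is continuous on `[0, ∞)` with limit `1`, hence
bounded. -/
lemma exists_bound_fermi {c : ℂ} (hc : 0 < c.re) :
    ∃ C : ℝ, 0 ≤ C ∧ ∀ x : ℝ, 0 ≤ x → ‖fermi c x‖ ≤ C * Real.exp (-(c.re * x)) := by
  have key : ∀ x : ℝ, fermi c x * Complex.exp (c * x) = 1 / (1 + Complex.exp (-(c * x))) := by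
    intro x
    have h1 := one_add_exp_ne_zero hc x
    have h2 : Complex.exp (c * x) ≠ 0 := Complex.exp_ne_zero _
    have h3 : 1 + Complex.exp (-(c * x)) ≠ 0 := by
      rw [Complex.exp_neg, show 1 + (Complex.exp (c * x))⁻¹
        = (1 + Complex.exp (c * x)) / Complex.exp (c * x) by field_simp; ring]
      exact div_ne_zero h1 h2
    rw [fermi, eq_div_iff h3, Complex.exp_neg]
    field_simp
    ring
  have hlim : Tendsto (fun x : ℝ => ‖fermi c x * Complex.exp (c * x)‖) atTop (𝓝 1) := by
    have h := ((tendsto_exp_neg_mul hc).const_add 1)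
    have h' := ((tendsto_const_nhds (x := (1 : ℂ))).div h (by norm_num)).norm
    simp only [key]
    simpa using h'
  have hev : ∀ᶠ x : ℝ in atTop, ‖fermi c x * Complex.exp (c * x)‖ ≤ 2 :=
    (hlim.eventually_lt_const (by norm_num : (1 : ℝ) < 2)).mono fun _ h => h.le
  obtain ⟨R, hR⟩ := eventually_atTop.1 hev
  have hcont : Continuous (fun x : ℝ => ‖fermi c x * Complex.exp (c * x)‖) :=
    ((continuous_fermi hc).mul (by fun_prop)).norm
  obtain ⟨C, hC⟩ := (isCompact_Icc (a := (0 : ℝ)) (b := R)).bddAbove_image hcont.continuousOn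
  refine ⟨max C 2, le_max_of_le_right (by norm_num), fun x hx => ?_⟩
  have hb : ‖fermi c x * Complex.exp (c * x)‖ ≤ max C 2 := by
    by_cases h : x ≤ R
    · exact le_max_of_le_left (hC ⟨x, ⟨hx, h⟩, rfl⟩)
    · exact le_max_of_le_right (hR x (not_le.1 h).le)
  rw [norm_mul, Complex.norm_exp] at hb
  have hre : (c * x).re = c.re * x := by simp
  rw [hre] at hb
  rw [Real.exp_neg, ← div_eq_mul_inv, le_div_iff₀ (Real.exp_pos _)]
  exact hb

lemma integrableOn_pow_mul_exp (k : ℕ) {δ : ℝ} (hδ : 0 < δ) :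
    IntegrableOn (fun x : ℝ => x ^ k * Real.exp (-(δ * x))) (Ioi 0) := by
  have := integrableOn_rpow_mul_exp_neg_mul_rpow (p := 1) (s := k) (b := δ)
    (by have : (0 : ℝ) ≤ k := k.cast_nonneg
        linarith) one_pos hδ
  simpa using this

lemma integrableOn_pow_mul {u : ℝ → ℂ} (hu : Continuous u) {C δ : ℝ} (hδ : 0 < δ)
    (h : ∀ x : ℝ, 0 ≤ x → ‖u x‖ ≤ C * Real.exp (-(δ * x))) (k : ℕ) :
    IntegrableOn (fun x : ℝ => (x : ℂ) ^ k * u x) (Ioi 0) := by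
  refine Integrable.mono' ((integrableOn_pow_mul_exp k hδ).const_mul C)
    (by fun_prop) ?_
  filter_upwards [ae_restrict_mem measurableSet_Ioi] with x hx
  have hx0 : (0 : ℝ) < x := hx
  rw [norm_mul, norm_pow, Complex.norm_real, Real.norm_of_nonneg hx0.le]
  calc x ^ k * ‖u x‖ ≤ x ^ k * (C * Real.exp (-(δ * x))) := by
        gcongr; exact h x hx0.le
    _ = _ := by ring

lemma tendsto_pow_mul {u : ℝ → ℂ} {C δ : ℝ} (hδ : 0 < δ)
    (h : ∀ x : ℝ, 0 ≤ x → ‖u x‖ ≤ C * Real.exp (-(δ * x))) (k : ℕ) :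
    Tendsto (fun x : ℝ => (x : ℂ) ^ k * u x) atTop (𝓝 0) := by
  have h1 : Tendsto (fun x : ℝ => C * (x ^ k * Real.exp (-δ * x))) atTop (𝓝 0) := by
    have := (tendsto_rpow_mul_exp_neg_mul_atTop_nhds_zero k δ hδ).const_mul C
    simpa using this
  refine squeeze_zero_norm' ?_ h1
  filter_upwards [eventually_gt_atTop 0] with x hx
  rw [norm_mul, norm_pow, Complex.norm_real, Real.norm_of_nonneg hx.le]
  calc x ^ k * ‖u x‖ ≤ x ^ k * (C * Real.exp (-(δ * x))) := by
        gcongr; exact h x hx.le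
    _ = _ := by rw [neg_mul]; ring

lemma norm_exp_neg_mul_le {s : ℂ} (hs : 0 ≤ s.re) {x : ℝ} (hx : 0 ≤ x) :
    ‖Complex.exp (-(s * x))‖ ≤ 1 := by
  rw [Complex.norm_exp]
  simpa using mul_nonneg hs hx

lemma integrableOn_fermiLaplace (m : ℕ) {c s : ℂ} (hc : 0 < c.re) (hs : 0 ≤ s.re) :
    IntegrableOn (fun x : ℝ => (x : ℂ) ^ m * fermi c x * Complex.exp (-(s * x))) (Ioi 0) := by
  obtain ⟨C, hC0, hC⟩ := exists_bound_fermi hc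
  have := integrableOn_pow_mul (u := fun x => fermi c x * Complex.exp (-(s * x))) (C := C)
    ((continuous_fermi hc).mul (by fun_prop)) hc (fun x hx => by
      rw [norm_mul]
      calc _ ≤ (C * Real.exp (-(c.re * x))) * 1 := by
            gcongr
            · exact hC x hx
            · exact norm_exp_neg_mul_le hs hx
        _ = _ := mul_one _) m
  simpa only [mul_assoc] using this

/-- The product of two conjugate Fermi denominators is, up to `2 e^{βx}`, the denominator of
`kern β γ x`. -/
lemma fermi_mul_conj (β γ x : ℝ) :
    (1 + Complex.exp ((β + γ * Complex.I) * x)) * (1 + Complex.exp ((β - γ * Complex.I) * x)) =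
      2 * Complex.exp (β * x) * (Real.cosh (β * x) + Real.cos (γ * x) : ℝ) := by
  push_cast
  have e1 : ((β : ℂ) + γ * Complex.I) * x = β * x + γ * x * Complex.I := by ring
  have e2 : ((β : ℂ) - γ * Complex.I) * x = β * x + -(γ * x * Complex.I) := by ring
  have e3 : -((γ : ℂ) * x) * Complex.I = -(γ * x * Complex.I) := by ring
  rw [Complex.cosh, Complex.cos, e1, e2, e3, Complex.exp_add, Complex.exp_add,
    Complex.exp_neg, Complex.exp_neg]
  have h1 := Complex.exp_ne_zero (β * x)
  have h2 := Complex.exp_ne_zero (γ * x * Complex.I)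
  field_simp
  ring

lemma kern_eq {β γ : ℝ} (hβ : 0 < β) (x : ℝ) :
    (kern β γ x : ℂ) = 2 * Complex.exp (β * x) * fermi (β + γ * Complex.I) x * fermi (β - γ * Complex.I) x := by
  have h := fermi_mul_conj β γ x
  have h1 := one_add_exp_ne_zero (c := β + γ * Complex.I) (by simpa) x
  have h2 := one_add_exp_ne_zero (c := β - γ * Complex.I) (by simpa) x
  have h3 := Complex.exp_ne_zero (β * x)
  have h4 : ((Real.cosh (β * x) + Real.cos (γ * x) : ℝ) : ℂ) ≠ 0 := by
    intro h0
    rw [h0, mul_zero] at h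
    exact (mul_ne_zero h1 h2) h
  rw [kern, fermi, fermi, Complex.ofReal_div, Complex.ofReal_one]
  generalize Complex.exp ((β + γ * Complex.I) * x) = A at *
  generalize Complex.exp ((β - γ * Complex.I) * x) = B at *
  generalize Complex.exp (β * x) = E at *
  generalize ((Real.cosh (β * x) + Real.cos (γ * x) : ℝ) : ℂ) = S at *
  field_simp
  linear_combination h

lemma conj_fermi (c : ℂ) (x : ℝ) : (starRingEnd ℂ) (fermi c x) = fermi ((starRingEnd ℂ) c) x := by
  simp [fermi, ← Complex.exp_conj]

/-- Passing from `c` to its conjugate changes `fermi c` by a sine times the kernel; the sine is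
what makes the oscillatory moments telescope. -/
lemma fermi_sub {β γ : ℝ} (hβ : 0 < β) (x : ℝ) :
    fermi (β + γ * Complex.I) x - fermi (β - γ * Complex.I) x
      = -Complex.I * Complex.sin (γ * x) * kern β γ x := by
  rw [kern_eq hβ]
  have h1 := one_add_exp_ne_zero (c := β + γ * Complex.I) (by simpa) x
  have h2 := one_add_exp_ne_zero (c := β - γ * Complex.I) (by simpa) x
  have e1 : ((β : ℂ) + γ * Complex.I) * x = β * x + γ * x * Complex.I := by ring
  have e2 : ((β : ℂ) - γ * Complex.I) * x = β * x + -(γ * x) * Complex.I := by ring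
  rw [fermi, fermi]
  rw [e1, Complex.exp_add] at h1 ⊢
  rw [e2, Complex.exp_add] at h2 ⊢
  rw [Complex.sin]
  generalize Complex.exp (γ * x * Complex.I) = A at *
  generalize Complex.exp (-(γ * x) * Complex.I) = B at *
  generalize Complex.exp (β * x) = E at *
  field_simp
  linear_combination (E * B - E * A) * Complex.I_sq

/-- The sum of conjugate Fermi functions is `1` minus a hyperbolic sine times the kernel; the
hyperbolic sine is what makes the damped moments telescope. -/
lemma fermi_add {β γ : ℝ} (hβ : 0 < β) (x : ℝ) :
    fermi (β + γ * Complex.I) x + fermi (β - γ * Complex.I) x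
      = 1 - Complex.sinh (β * x) * kern β γ x := by
  rw [kern_eq hβ]
  have h1 := one_add_exp_ne_zero (c := β + γ * Complex.I) (by simpa) x
  have h2 := one_add_exp_ne_zero (c := β - γ * Complex.I) (by simpa) x
  have h3 := Complex.exp_ne_zero (β * x)
  have h4 := Complex.exp_ne_zero (γ * x * Complex.I)
  have e1 : ((β : ℂ) + γ * Complex.I) * x = β * x + γ * x * Complex.I := by ring
  have e2 : ((β : ℂ) - γ * Complex.I) * x = β * x + -(γ * x * Complex.I) := by ring
  have h5 : Complex.exp (γ * x * Complex.I) * Complex.exp (-(γ * x * Complex.I)) = 1 := by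
    rw [← Complex.exp_add]; simp
  have h6 : Complex.exp (β * x) * Complex.exp (-(β * x)) = 1 := by
    rw [← Complex.exp_add]; simp
  rw [fermi, fermi]
  rw [e1, Complex.exp_add] at h1 ⊢
  rw [e2, Complex.exp_add] at h2 ⊢
  rw [Complex.sinh]
  generalize Complex.exp (γ * x * Complex.I) = A at *
  generalize Complex.exp (-(γ * x * Complex.I)) = B at *
  generalize Complex.exp (β * x) = E at *
  generalize Complex.exp (-(β * x)) = F at *
  field_simp
  linear_combination (-E ^ 2) * h5 + (-1) * h6

lemma continuous_kern {β γ : ℝ} (hβ : 0 < β) : Continuous (fun x => (kern β γ x : ℂ)) := by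
  simp only [kern_eq hβ]
  have h1 := continuous_fermi (c := β + γ * Complex.I) (by simpa)
  have h2 := continuous_fermi (c := β - γ * Complex.I) (by simpa)
  fun_prop

lemma exists_bound_kern {β γ : ℝ} (hβ : 0 < β) :
    ∃ C : ℝ, 0 ≤ C ∧ ∀ x : ℝ, 0 ≤ x → ‖(kern β γ x : ℂ)‖ ≤ C * Real.exp (-(β * x)) := by
  obtain ⟨C1, h01, h1⟩ := exists_bound_fermi (c := β + γ * Complex.I) (by simpa)
  obtain ⟨C2, h02, h2⟩ := exists_bound_fermi (c := β - γ * Complex.I) (by simpa)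
  refine ⟨2 * C1 * C2, by positivity, fun x hx => ?_⟩
  have h1 := h1 x hx
  have h2 := h2 x hx
  simp only [Complex.add_re, Complex.sub_re, Complex.ofReal_re, Complex.re_ofReal_mul,
    Complex.I_re, mul_zero, add_zero, sub_zero] at h1 h2
  rw [kern_eq hβ, norm_mul, norm_mul, norm_mul, Complex.norm_exp]
  have : ((β : ℂ) * x).re = β * x := by simp
  rw [this]
  calc _ ≤ ‖(2 : ℂ)‖ * Real.exp (β * x) * (C1 * Real.exp (-(β * x))) * (C2 * Real.exp (-(β * x))) := by
        gcongr
    _ = _ := by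
        rw [Real.exp_neg]
        have := Real.exp_ne_zero (β * x)
        simp
        field_simp

lemma integrableOn_kern {β γ : ℝ} (hβ : 0 < β) (m : ℕ) :
    IntegrableOn (fun x : ℝ => (x : ℂ) ^ m * (kern β γ x : ℂ)) (Ioi 0) := by
  obtain ⟨C, -, h⟩ := exists_bound_kern (γ := γ) hβ
  exact integrableOn_pow_mul (continuous_kern hβ) hβ h m

/-! ### Series expansion and rotation of the Laplace transform -/

lemma integral_pow_mul_exp {s : ℂ} (hs : 0 < s.re) (m : ℕ) :
    ∫ x in Ioi (0 : ℝ), (x : ℂ) ^ m * Complex.exp (-(s * x)) = m.factorial / s ^ (m + 1) := by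
  have hs0 : s ≠ 0 := by rintro rfl; simp at hs
  have hb : ∀ x : ℝ, 0 ≤ x → ‖Complex.exp (-(s * x))‖ ≤ 1 * Real.exp (-(s.re * x)) := by
    intro x _
    simp [Complex.norm_exp]
  have hcont : Continuous fun x : ℝ => Complex.exp (-(s * x)) := by fun_prop
  induction m with
  | zero =>
    have := integral_exp_mul_complex_Ioi (a := -s) (by simpa) 0
    simpa [neg_mul] using this
  | succ m ih =>
    have hv : ∀ x : ℝ, HasDerivAt (fun x : ℝ => -(Complex.exp (-(s * x)) / s))
        (Complex.exp (-(s * x))) x := by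
      intro x
      have h1 : HasDerivAt (fun x : ℝ => -(s * (x : ℂ))) (-(s * 1)) x :=
        ((Complex.ofRealCLM.hasDerivAt (x := x)).const_mul s).neg
      have h2 := (h1.cexp.div_const s).neg
      refine h2.congr_deriv ?_
      rw [mul_one, mul_neg, neg_div, neg_neg, mul_div_cancel_right₀ _ hs0]
    have hu : ∀ x : ℝ, HasDerivAt (fun x : ℝ => (x : ℂ) ^ (m + 1)) ((m + 1 : ℕ) * (x : ℂ) ^ m) x := by
      intro x
      have := (Complex.ofRealCLM.hasDerivAt (x := x)).fun_pow (m + 1)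
      exact this.congr_deriv (by simp)
    have key := integral_Ioi_mul_deriv_eq_deriv_mul (a := (0 : ℝ)) (a' := (0 : ℂ)) (b' := 0)
      (u := fun x : ℝ => (x : ℂ) ^ (m + 1)) (v := fun x : ℝ => -(Complex.exp (-(s * x)) / s))
      (u' := fun x : ℝ => (m + 1 : ℕ) * (x : ℂ) ^ m) (v' := fun x : ℝ => Complex.exp (-(s * x)))
      (fun x _ => hu x) (fun x _ => hv x)
      (integrableOn_pow_mul hcont hs hb (m + 1))
      (by
        have := (integrableOn_pow_mul hcont hs hb m).const_mul (-((m + 1 : ℕ) : ℂ) / s)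
        refine IntegrableOn.congr_fun this (fun x _ => ?_) measurableSet_Ioi
        simp only [Pi.mul_apply]
        ring)
      (by
        have hc : Continuous ((fun x : ℝ => (x : ℂ) ^ (m + 1)) *
            fun x : ℝ => -(Complex.exp (-(s * x)) / s)) := by fun_prop
        have := (hc.tendsto 0).mono_left (nhdsWithin_le_nhds (s := Ioi 0))
        simpa using this)
      (by
        have := (tendsto_pow_mul hs hb (m + 1)).const_mul (-1 / s)
        rw [mul_zero] at this
        refine this.congr (fun x => ?_)
        simp only [Pi.mul_apply]
        ring)
    rw [key]
    have : ∀ x : ℝ, ((m + 1 : ℕ) : ℂ) * (x : ℂ) ^ m * -(Complex.exp (-(s * x)) / s)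
        = -((m + 1 : ℕ) : ℂ) / s * ((x : ℂ) ^ m * Complex.exp (-(s * x))) := by
      intro x; ring
    simp only [this]
    rw [integral_const_mul, ih, Nat.factorial_succ]
    push_cast
    field_simp
    ring

lemma integral_pow_mul_exp_real {r : ℝ} (hr : 0 < r) (m : ℕ) :
    ∫ x in Ioi (0 : ℝ), x ^ m * Real.exp (-(r * x)) = m.factorial / r ^ (m + 1) := by
  have := integral_pow_mul_exp (s := r) (by simpa) m
  rw [← Complex.ofReal_inj, ← integral_complex_ofReal]
  push_cast
  exact this

/-- Termwise integration of the geometric series `fermi c x = ∑ (-1) ^ k e^{-(k+1)cx}`. For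
`1 ≤ m` the integrated series converges absolutely, even on the boundary `s.re = 0`. -/
lemma hasSum_fermiLaplace {m : ℕ} (hm : 1 ≤ m) {c s : ℂ} (hc : 0 < c.re) (hs : 0 ≤ s.re) :
    HasSum (fun k : ℕ => (-1) ^ k * (m.factorial / ((k + 1) * c + s) ^ (m + 1)))
      (fermiLaplace m c s) := by
  set F : ℕ → ℝ → ℂ := fun k x => (-1) ^ k * ((x : ℂ) ^ m * Complex.exp (-(((k + 1) * c + s) * x)))
    with hF
  have hre : ∀ k : ℕ, 0 < ((k + 1) * c + s).re := by
    intro k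
    have : (((k : ℂ) + 1) * c + s).re = (k + 1) * c.re + s.re := by simp
    rw [this]; positivity
  have hint : ∀ k, IntegrableOn (F k) (Ioi 0) := by
    intro k
    refine (integrableOn_pow_mul (u := fun x : ℝ => Complex.exp (-(((k + 1) * c + s) * x)))
      (C := 1) (by fun_prop) (hre k) ?_ m).const_mul _
    intro x _
    rw [Complex.norm_exp, one_mul]
    apply le_of_eq
    congr 1
    rw [Complex.neg_re, Complex.re_mul_ofReal]
  have hnorm : ∀ k, ∫ x in Ioi (0 : ℝ), ‖F k x‖ = m.factorial / ((k + 1) * c.re + s.re) ^ (m + 1) := by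
    intro k
    have hpos : 0 < (k + 1) * c.re + s.re := by positivity
    rw [← integral_pow_mul_exp_real hpos m]
    refine setIntegral_congr_fun measurableSet_Ioi (fun x hx => ?_)
    have hx0 : (0 : ℝ) < x := hx
    simp only [hF, norm_mul, norm_pow, norm_neg, norm_one, one_pow, one_mul, Complex.norm_real,
      Real.norm_of_nonneg hx0.le, Complex.norm_exp]
    congr 2
    rw [Complex.neg_re, Complex.re_mul_ofReal]
    simp
  have hsum : Summable fun k => ∫ x in Ioi (0 : ℝ), ‖F k x‖ := by
    simp only [hnorm]
    have h1 : Summable fun k : ℕ => (m.factorial / c.re ^ (m + 1)) * (1 / ((k + 1 : ℕ) : ℝ) ^ (m + 1)) :=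
      ((summable_nat_add_iff 1).2
        (Real.summable_one_div_nat_pow.2 (by omega : 1 < m + 1))).mul_left _
    refine Summable.of_nonneg_of_le (fun k => by positivity) (fun k => ?_) h1
    rw [div_mul_div_comm, mul_one, ← mul_pow]
    push_cast
    gcongr
    nlinarith
  have := hasSum_integral_of_summable_integral_norm hint hsum
  have hterms : (fun k : ℕ => (-1) ^ k * ((m.factorial : ℂ) / ((k + 1) * c + s) ^ (m + 1)))
      = fun k => ∫ x in Ioi (0 : ℝ), F k x := by
    ext k
    rw [hF, integral_const_mul, integral_pow_mul_exp (hre k)]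
  have hval : fermiLaplace m c s = ∫ x in Ioi (0 : ℝ), ∑' k, F k x := by
    rw [fermiLaplace]
    refine setIntegral_congr_fun measurableSet_Ioi (fun x hx => ?_)
    have hx0 : (0 : ℝ) < x := hx
    have hlt : ‖-Complex.exp (-(c * x))‖ < 1 := by
      rw [norm_neg, Complex.norm_exp, Real.exp_lt_one_iff, Complex.neg_re, Complex.re_mul_ofReal]
      nlinarith [mul_pos hc hx0]
    have hg := (hasSum_geometric_of_norm_lt_one hlt).mul_left
      ((x : ℂ) ^ m * Complex.exp (-(s * x)) * Complex.exp (-(c * x)))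
    have hterm : ∀ k : ℕ, (x : ℂ) ^ m * Complex.exp (-(s * x)) * Complex.exp (-(c * x)) *
        (-Complex.exp (-(c * x))) ^ k = F k x := by
      intro k
      rw [hF, neg_pow, ← Complex.exp_nat_mul]
      have : Complex.exp (-((((k : ℂ) + 1) * c + s) * x)) = Complex.exp (-(s * x)) *
          Complex.exp (-(c * x)) * Complex.exp (k * -(c * x)) := by
        rw [← Complex.exp_add, ← Complex.exp_add]; congr 1; ring
      simp only [this]
      ring
    simp only [hterm] at hg
    rw [hg.tsum_eq, fermi]
    have h1 := one_add_exp_ne_zero hc x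
    have h2 := Complex.exp_ne_zero (c * x)
    rw [Complex.exp_neg (c * x), sub_neg_eq_add]
    generalize Complex.exp (c * x) = E at *
    have h3 : 1 + E⁻¹ ≠ 0 := by
      rw [show 1 + E⁻¹ = (1 + E) / E by field_simp; ring]
      exact div_ne_zero h1 h2
    have h4 : E + 1 ≠ 0 := by rwa [add_comm]
    field_simp
    ring
  rw [hterms, hval]
  exact this

/-- Rotation by a right angle: the terms of the series for `fermiLaplace (2p-1)` are homogeneous
of degree `-2p` in `(c, s)`, and `(-i)^{2p} = (-1)^p`. The hypotheses keep both `(c, s)` and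
`(-ic, -is)` in the region where the integral equals the series. -/
lemma fermiLaplace_rotate {p : ℕ} (hp : 1 ≤ p) {c s : ℂ} (hc : 0 < c.re) (hc' : 0 < c.im)
    (hs : 0 ≤ s.re) (hs' : 0 ≤ s.im) :
    fermiLaplace (2 * p - 1) c s =
      (-1) ^ p * fermiLaplace (2 * p - 1) (-Complex.I * c) (-Complex.I * s) := by
  have h1 := hasSum_fermiLaplace (m := 2 * p - 1) (by omega) hc hs
  have h2 := (hasSum_fermiLaplace (m := 2 * p - 1) (c := -Complex.I * c) (s := -Complex.I * s)
    (by omega) (by simpa) (by simpa)).mul_left ((-1) ^ p)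
  refine h1.unique (h2.congr_fun ?_)
  intro k
  have e : ((k : ℂ) + 1) * (-Complex.I * c) + -Complex.I * s = -Complex.I * ((k + 1) * c + s) := by
    ring
  have e2 : 2 * p - 1 + 1 = 2 * p := by omega
  have e3 : (-Complex.I) ^ (2 * p) = (-1) ^ p := by
    rw [pow_mul, neg_sq, Complex.I_sq]
  have e4 : ((-1 : ℂ) ^ p) * (-1) ^ p = 1 := by rw [← mul_pow]; simp
  have e5 : ((-1 : ℂ) ^ p) ≠ 0 := by simp
  rw [e, e2, mul_pow, e3]
  field_simp

/-! ### Decay on the imaginary axis -/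

lemma integral_by_parts {u u' : ℝ → ℂ} (hu : ∀ x, HasDerivAt u (u' x) x)
    (hi : IntegrableOn u (Ioi 0)) (hi' : IntegrableOn u' (Ioi 0)) (ht : Tendsto u atTop (𝓝 0))
    {s : ℂ} (hs0 : s ≠ 0) (hs : 0 ≤ s.re) :
    ∫ x in Ioi (0 : ℝ), u x * Complex.exp (-(s * x)) =
      (u 0 + ∫ x in Ioi (0 : ℝ), u' x * Complex.exp (-(s * x))) / s := by
  have hv : ∀ x : ℝ, HasDerivAt (fun x : ℝ => -(Complex.exp (-(s * x)) / s))
      (Complex.exp (-(s * x))) x := by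
    intro x
    have h1 : HasDerivAt (fun x : ℝ => -(s * (x : ℂ))) (-(s * 1)) x :=
      ((Complex.ofRealCLM.hasDerivAt (x := x)).const_mul s).neg
    have h2 := (h1.cexp.div_const s).neg
    refine h2.congr_deriv ?_
    rw [mul_one, mul_neg, neg_div, neg_neg, mul_div_cancel_right₀ _ hs0]
  have hbd : ∀ᵐ (x : ℝ) ∂(volume.restrict (Ioi (0 : ℝ))), ‖Complex.exp (-(s * x))‖ ≤ 1 := by
    filter_upwards [ae_restrict_mem measurableSet_Ioi] with x hx
    exact norm_exp_neg_mul_le hs (le_of_lt hx)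
  have hmeas : AEStronglyMeasurable (fun x : ℝ => Complex.exp (-(s * x)))
      (volume.restrict (Ioi (0 : ℝ))) := by fun_prop
  have huc : Continuous u := continuous_iff_continuousAt.2 fun x => (hu x).continuousAt
  have hint : IntegrableOn (fun x : ℝ => u x * Complex.exp (-(s * x))) (Ioi 0) :=
    Integrable.mul_bdd (c := 1) hi hmeas hbd
  have hint' : IntegrableOn (fun x : ℝ => u' x * Complex.exp (-(s * x))) (Ioi 0) :=
    Integrable.mul_bdd (c := 1) hi' hmeas hbd
  have key := integral_Ioi_mul_deriv_eq_deriv_mul (a := (0 : ℝ)) (a' := -(u 0 / s)) (b' := 0)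
      (u := u) (v := fun x : ℝ => -(Complex.exp (-(s * x)) / s))
      (u' := u') (v' := fun x : ℝ => Complex.exp (-(s * x)))
      (fun x _ => hu x) (fun x _ => hv x) hint
      (by
        refine IntegrableOn.congr_fun (hint'.const_mul (-1 / s)) (fun x _ => ?_) measurableSet_Ioi
        simp only [Pi.mul_apply]
        ring)
      (by
        have hc : Continuous (u * fun x : ℝ => -(Complex.exp (-(s * x)) / s)) :=
          huc.mul (by fun_prop)
        have := (hc.tendsto 0).mono_left (nhdsWithin_le_nhds (s := Ioi 0))
        simpa [div_eq_mul_inv] using this)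
      (by
        refine squeeze_zero_norm' (a := fun x => ‖u x‖ * ‖s‖⁻¹) ?_ ?_
        · filter_upwards [eventually_ge_atTop 0] with x hx
          rw [Pi.mul_apply, norm_mul, norm_neg, norm_div, div_eq_mul_inv]
          have := norm_exp_neg_mul_le hs hx
          gcongr
          exact mul_le_of_le_one_left (by positivity) this
        · simpa using ht.norm.mul_const ‖s‖⁻¹)
  rw [key]
  have : ∀ x : ℝ, u' x * -(Complex.exp (-(s * x)) / s)
      = -1 / s * (u' x * Complex.exp (-(s * x))) := by
    intro x; ring
  simp only [this]
  rw [integral_const_mul]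
  ring

lemma hasDerivAt_fermi {c : ℂ} (hc : 0 < c.re) (x : ℝ) :
    HasDerivAt (fermi c) (-c * (fermi c x * (1 - fermi c x))) x := by
  have h0 := one_add_exp_ne_zero hc x
  have h1 : HasDerivAt (fun x : ℝ => c * (x : ℂ)) (c * 1) x :=
    (Complex.ofRealCLM.hasDerivAt (x := x)).const_mul c
  have h2 := (hasDerivAt_const x (1 : ℂ)).div (h1.cexp.const_add 1) h0
  refine h2.congr_deriv ?_
  rw [fermi]
  generalize Complex.exp (c * x) = E at *
  field_simp
  ring

/-- Every derivative of `fermi c` has the form `fermi c * P (fermi c)` with `P` a polynomial, so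
this gives the exponential decay of the derivatives. -/
lemma exists_bound_mul_fermi {c : ℂ} (hc : 0 < c.re) {P : ℂ → ℂ} (hP : Continuous P) :
    ∃ C : ℝ, ∀ x : ℝ, 0 ≤ x → ‖fermi c x * P (fermi c x)‖ ≤ C * Real.exp (-(c.re * x)) := by
  obtain ⟨C, hC0, hC⟩ := exists_bound_fermi hc
  obtain ⟨B, hB⟩ := (isCompact_closedBall (0 : ℂ) C).bddAbove_image (hP.norm.continuousOn)
  refine ⟨C * B, fun x hx => ?_⟩
  have h1 : ‖fermi c x‖ ≤ C := (hC x hx).trans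
    (mul_le_of_le_one_right hC0 (Real.exp_le_one_iff.2 (by nlinarith [mul_nonneg hc.le hx])))
  have h2 : ‖P (fermi c x)‖ ≤ B := hB ⟨fermi c x, by simpa using h1, rfl⟩
  rw [norm_mul]
  calc _ ≤ (C * Real.exp (-(c.re * x))) * B := by
        gcongr
        exact hC x hx
    _ = _ := by ring

/-- Two integrations by parts. The first boundary term vanishes because `1 ≤ m`. -/
lemma exists_decay_fermiLaplace {m : ℕ} (hm : 1 ≤ m) {c : ℂ} (hc : 0 < c.re) :
    ∃ C : ℝ, ∀ t : ℝ, t ≠ 0 → ‖fermiLaplace m c (t * Complex.I)‖ ≤ C / t ^ 2 := by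
  set f := fermi c with hf
  have hfc : Continuous f := continuous_fermi hc
  have hint : ∀ {P : ℂ → ℂ} (_ : Continuous P) (k : ℕ),
      IntegrableOn (fun x : ℝ => (x : ℂ) ^ k * (f x * P (f x))) (Ioi 0) := by
    intro P hP k
    obtain ⟨C, hC⟩ := exists_bound_mul_fermi hc hP
    exact integrableOn_pow_mul (u := fun x => f x * P (f x)) (by fun_prop) hc hC k
  have hlim : ∀ {P : ℂ → ℂ} (_ : Continuous P) (k : ℕ),
      Tendsto (fun x : ℝ => (x : ℂ) ^ k * (f x * P (f x))) atTop (𝓝 0) := by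
    intro P hP k
    obtain ⟨C, hC⟩ := exists_bound_mul_fermi hc hP
    exact tendsto_pow_mul (u := fun x => f x * P (f x)) hc hC k
  have hpow : ∀ (k : ℕ) (x : ℝ), HasDerivAt (fun x : ℝ => (x : ℂ) ^ k) (k * (x : ℂ) ^ (k - 1)) x := by
    intro k x
    have := (Complex.ofRealCLM.hasDerivAt (x := x)).fun_pow k
    exact this.congr_deriv (by simp)
  have hfd : ∀ x, HasDerivAt f (-c * (f x * (1 - f x))) x := hasDerivAt_fermi hc
  set u0 : ℝ → ℂ := fun x => (x : ℂ) ^ m * f x with hu0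
  set u1 : ℝ → ℂ := fun x => m * (x : ℂ) ^ (m - 1) * f x + (x : ℂ) ^ m * (-c * (f x * (1 - f x)))
    with hu1
  set u2 : ℝ → ℂ := fun x => m * (((m - 1 : ℕ) : ℂ) * (x : ℂ) ^ (m - 1 - 1)) * f x
    + m * (x : ℂ) ^ (m - 1) * (-c * (f x * (1 - f x)))
    + (m * (x : ℂ) ^ (m - 1) * (-c * (f x * (1 - f x)))
      + (x : ℂ) ^ m * (c ^ 2 * (f x * (1 - f x) * (1 - 2 * f x)))) with hu2
  have d1 : ∀ x, HasDerivAt u0 (u1 x) x := fun x => (hpow m x).mul (hfd x)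
  have d2 : ∀ x, HasDerivAt u1 (u2 x) x := by
    intro x
    have e1 : HasDerivAt (fun x : ℝ => -c * (f x * (1 - f x)))
        (c ^ 2 * (f x * (1 - f x) * (1 - 2 * f x))) x := by
      have := ((hfd x).mul ((hfd x).const_sub 1)).const_mul (-c)
      refine this.congr_deriv ?_
      ring
    exact (((hpow (m - 1) x).const_mul (m : ℂ)).mul (hfd x)).add ((hpow m x).mul e1)
  have i0 : IntegrableOn u0 (Ioi 0) := by
    refine (hint (P := fun _ => 1) continuous_const m).congr_fun (fun x _ => ?_) measurableSet_Ioi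
    simp [hu0]
  have i1 : IntegrableOn u1 (Ioi 0) := by
    have a := (hint (P := fun _ => 1) continuous_const (m - 1)).const_mul (m : ℂ)
    have b := (hint (P := fun z => 1 - z) (by fun_prop) m).const_mul (-c)
    refine IntegrableOn.congr_fun (a.add b) (fun x _ => ?_) measurableSet_Ioi
    simp only [hu1, Pi.add_apply]
    ring
  have i2 : IntegrableOn u2 (Ioi 0) := by
    have a := (hint (P := fun _ => 1) continuous_const (m - 1 - 1)).const_mul
      ((m : ℂ) * ((m - 1 : ℕ) : ℂ))
    have b := (hint (P := fun z => 1 - z) (by fun_prop) (m - 1)).const_mul (2 * m * -c)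
    have d := (hint (P := fun z => (1 - z) * (1 - 2 * z)) (by fun_prop) m).const_mul (c ^ 2)
    refine IntegrableOn.congr_fun ((a.add b).add d) (fun x _ => ?_) measurableSet_Ioi
    simp only [hu2, Pi.add_apply]
    ring
  have t0 : Tendsto u0 atTop (𝓝 0) := by
    refine (hlim (P := fun _ => 1) continuous_const m).congr (fun x => ?_)
    simp [hu0]
  have t1 : Tendsto u1 atTop (𝓝 0) := by
    have a := (hlim (P := fun _ => 1) continuous_const (m - 1)).const_mul (m : ℂ)
    have b := (hlim (P := fun z => 1 - z) (by fun_prop) m).const_mul (-c)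
    have ab := a.add b
    rw [mul_zero, mul_zero, add_zero] at ab
    refine ab.congr (fun x => ?_)
    simp only [hu1]
    ring
  refine ⟨‖u1 0‖ + ∫ x in Ioi (0 : ℝ), ‖u2 x‖, fun t ht => ?_⟩
  have hs0 : (t : ℂ) * Complex.I ≠ 0 := by simp [ht]
  have hs : 0 ≤ ((t : ℂ) * Complex.I).re := by simp
  have h00 : u0 0 = 0 := by
    simp only [hu0, Complex.ofReal_zero]
    rw [zero_pow (by omega), zero_mul]
  have e : fermiLaplace m c (t * Complex.I) =
      (u1 0 + ∫ x in Ioi (0 : ℝ), u2 x * Complex.exp (-(t * Complex.I * x)))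
        / (t * Complex.I) / (t * Complex.I) := by
    have := integral_by_parts d1 i0 i1 t0 hs0 hs
    rw [integral_by_parts d2 i1 i2 t1 hs0 hs, h00, zero_add] at this
    exact this
  rw [e, norm_div, norm_div, norm_mul, Complex.norm_I, mul_one, Complex.norm_real, div_div,
    ← sq, Real.norm_eq_abs, sq_abs]
  gcongr
  refine (norm_add_le _ _).trans ?_
  gcongr
  refine norm_integral_le_of_norm_le i2.norm ?_
  filter_upwards [ae_restrict_mem measurableSet_Ioi] with x hx
  rw [norm_mul]
  exact mul_le_of_le_one_right (norm_nonneg _) (norm_exp_neg_mul_le hs (le_of_lt hx))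

/-! ### Poisson summation -/

/-- The function `x ^ m * fermi c x * e^{πix}` for `x > 0`, extended by zero (for `1 ≤ m`). Writing
it with `max x 0` makes its continuity on `ℝ` plain; the factor `e^{πix}` produces the
alternating signs at the integers and shifts the frequencies to odd multiples of `π`. -/
noncomputable def halfLine (m : ℕ) (c : ℂ) (x : ℝ) : ℂ :=
  ((max x 0 : ℝ) : ℂ) ^ m * fermi c x * Complex.exp (π * x * Complex.I)

lemma fourier_halfLine {m : ℕ} (hm : 1 ≤ m) (c : ℂ) (ξ : ℝ) :
    FourierTransform.fourier (halfLine m c) ξ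
      = fermiLaplace m c (((2 * ξ - 1) * π : ℝ) * Complex.I) := by
  rw [Real.fourier_real_eq_integral_exp_smul, fermiLaplace, ← integral_indicator measurableSet_Ioi]
  refine integral_congr_ae (Eventually.of_forall fun x => ?_)
  simp only [smul_eq_mul, halfLine]
  by_cases hx : x ∈ Ioi (0 : ℝ)
  · rw [indicator_of_mem hx, max_eq_left (le_of_lt hx)]
    have : Complex.exp (-(((2 * ξ - 1) * π : ℝ) * Complex.I * x))
        = Complex.exp ((-2 * π * x * ξ : ℝ) * Complex.I) * Complex.exp (π * x * Complex.I) := by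
      rw [← Complex.exp_add]
      congr 1
      push_cast
      ring
    rw [this]
    ring
  · rw [indicator_of_notMem hx, max_eq_right (not_lt.1 hx), Complex.ofReal_zero,
      zero_pow (by omega)]
    ring

/-- Poisson summation for `halfLine m c`. -/
lemma hasSum_poisson {m : ℕ} (hm : 1 ≤ m) {c : ℂ} (hc : 0 < c.re) :
    HasSum (fun n : ℤ => fermiLaplace m c (((2 * n + 1) * π : ℝ) * Complex.I))
      (∑' k : ℕ, ((k : ℂ) + 1) ^ m * (-1) ^ (k + 1) * fermi c (k + 1)) := by
  obtain ⟨C, hC⟩ := exists_decay_fermiLaplace hm hc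
  have hC0 : 0 ≤ C := by simpa using (norm_nonneg _).trans (hC 1 one_ne_zero)
  have hcont : Continuous (halfLine m c) := by
    have := continuous_fermi hc
    unfold halfLine
    fun_prop
  have hO : halfLine m c =O[cocompact ℝ] fun x => |x| ^ (-2 : ℝ) := by
    rw [_root_.cocompact_eq_atBot_atTop, Asymptotics.isBigO_sup]
    constructor
    · refine Asymptotics.IsBigO.of_bound 0 ?_
      filter_upwards [eventually_le_atBot 0] with x hx
      rw [halfLine, max_eq_right hx, Complex.ofReal_zero, zero_pow (by omega)]
      simp
    · obtain ⟨D, hD0, hD⟩ := exists_bound_fermi hc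
      have hlim := (tendsto_pow_mul hc hD (m + 2)).norm
      rw [norm_zero] at hlim
      refine Asymptotics.IsBigO.of_bound 1 ?_
      filter_upwards [eventually_gt_atTop 0, hlim.eventually_lt_const one_pos] with x hx h
      rw [abs_of_pos hx, halfLine, max_eq_left hx.le, one_mul, norm_mul, Complex.norm_exp,
        Real.rpow_neg hx.le, Real.rpow_two, Real.norm_of_nonneg (by positivity)]
      have e : ((π : ℂ) * x * Complex.I).re = 0 := by simp
      rw [e, Real.exp_zero, mul_one, ← one_div, le_div_iff₀ (by positivity)]
      refine le_trans (le_of_eq ?_) h.le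
      rw [norm_mul, norm_mul, norm_pow, norm_pow, Complex.norm_real, Real.norm_of_nonneg hx.le]
      ring
  have hFO : FourierTransform.fourier (halfLine m c) =O[cocompact ℝ] fun x => |x| ^ (-2 : ℝ) := by
    refine Asymptotics.IsBigO.of_bound C ?_
    have hev : ∀ᶠ x : ℝ in cocompact ℝ, 1 ≤ ‖x‖ :=
      (tendsto_norm_cocompact_atTop (E := ℝ)).eventually_ge_atTop 1
    filter_upwards [hev] with x hx
    rw [Real.norm_eq_abs] at hx
    have habs : |x| ≤ |(2 * x - 1) * π| := by
      have h1 : |x| ≤ |2 * x - 1| := by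
        have := abs_sub_abs_le_abs_sub (2 * x) 1
        rw [abs_mul, abs_two, abs_one] at this
        linarith
      rw [abs_mul, abs_of_pos Real.pi_pos]
      nlinarith [Real.pi_gt_three, abs_nonneg x, abs_nonneg (2 * x - 1)]
    have hne : (2 * x - 1) * π ≠ 0 := by
      intro h
      rw [h, abs_zero] at habs
      linarith
    rw [fourier_halfLine hm]
    refine (hC _ hne).trans ?_
    rw [Real.rpow_neg (abs_nonneg _), Real.rpow_two, Real.norm_of_nonneg (by positivity),
      div_eq_mul_inv]
    rw [← sq_abs ((2 * x - 1) * π)]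
    gcongr
  have hP := Real.tsum_eq_tsum_fourier_of_rpow_decay hcont one_lt_two hO hFO 0
  have hsum : Summable fun n : ℤ => fermiLaplace m c (((2 * n + 1) * π : ℝ) * Complex.I) := by
    have hinj : Function.Injective fun n : ℤ => 2 * n + 1 := fun a b h => by
      simp only at h; omega
    have h1 := ((Real.summable_one_div_int_pow.2 one_lt_two).comp_injective hinj).mul_left (C / π ^ 2)
    refine Summable.of_norm_bounded h1 (fun n => ?_)
    have hne : ((2 * n + 1 : ℤ) : ℝ) ≠ 0 := by
      exact_mod_cast (by omega : 2 * n + 1 ≠ 0)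
    push_cast at hne
    refine (hC _ (mul_ne_zero hne Real.pi_ne_zero)).trans (le_of_eq ?_)
    simp only [Function.comp_apply]
    push_cast
    field_simp
  -- The frequency `n + 1` of `halfLine` corresponds to `(2n + 1)π`.
  have hshift : ∑' n : ℤ, fermiLaplace m c (((2 * n + 1) * π : ℝ) * Complex.I)
      = ∑' n : ℤ, FourierTransform.fourier (halfLine m c) n := by
    rw [← (Equiv.addRight (1 : ℤ)).tsum_eq
      (fun n : ℤ => FourierTransform.fourier (halfLine m c) n)]
    refine tsum_congr fun n => ?_
    rw [fourier_halfLine hm]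
    congr 3
    simp
    ring
  have hleft : ∑' k : ℕ, ((k : ℂ) + 1) ^ m * (-1) ^ (k + 1) * fermi c (k + 1)
      = ∑' n : ℤ, halfLine m c n := by
    have hinj : Function.Injective fun k : ℕ => (k : ℤ) + 1 := fun a b h => by
      simp only at h; omega
    rw [← hinj.tsum_eq (f := fun n : ℤ => halfLine m c n)]
    · refine tsum_congr fun k => ?_
      have hpos : (0 : ℝ) ≤ ((k + 1 : ℤ) : ℝ) := by positivity
      have hexp : Complex.exp (π * ((k + 1 : ℤ) : ℝ) * Complex.I) = (-1) ^ (k + 1) := by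
        rw [← Complex.exp_pi_mul_I, ← Complex.exp_nat_mul]
        congr 1
        push_cast
        ring
      rw [halfLine, max_eq_left hpos, hexp]
      push_cast
      ring
    · intro n hn
      rw [Function.mem_support] at hn
      have : 0 < n := by
        by_contra h
        apply hn
        have h' : (n : ℝ) ≤ 0 := by exact_mod_cast not_lt.1 h
        rw [halfLine, max_eq_right h', Complex.ofReal_zero, zero_pow (by omega)]
        simp
      exact ⟨(n - 1).toNat, by simp only; omega⟩
  have heq : ∑' k : ℕ, ((k : ℂ) + 1) ^ m * (-1) ^ (k + 1) * fermi c (k + 1)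
      = ∑' n : ℤ, fermiLaplace m c (((2 * n + 1) * π : ℝ) * Complex.I) := by
    rw [hleft, hshift]
    simpa using hP
  rw [heq]
  exact hsum.hasSum

/-! ### Telescoping moments -/

lemma conj_fermiLaplace (m : ℕ) (c s : ℂ) :
    (starRingEnd ℂ) (fermiLaplace m c s)
      = fermiLaplace m ((starRingEnd ℂ) c) ((starRingEnd ℂ) s) := by
  rw [fermiLaplace, fermiLaplace, ← integral_conj]
  refine integral_congr_ae (Eventually.of_forall fun x => ?_)
  simp [conj_fermi, ← Complex.exp_conj]

/-- The moment of `kern b π` against the character `e^{2πijx}`. -/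
noncomputable def oscMoment (m : ℕ) (b : ℝ) (j : ℕ) : ℂ :=
  ∫ x in Ioi (0 : ℝ), (x : ℂ) ^ m * kern b π x * Complex.exp (-((-(2 * π * j) * Complex.I) * x))

/-- The moment of `kern π b` against the damping factor `e^{-2πjx}`. -/
noncomputable def dampedMoment (m : ℕ) (b : ℝ) (j : ℕ) : ℂ :=
  ∫ x in Ioi (0 : ℝ), (x : ℂ) ^ m * kern π b x * Complex.exp (-((2 * π * j) * x))

lemma integrableOn_kern_mul_exp {β γ : ℝ} (hβ : 0 < β) (m : ℕ) {s : ℂ} (hs : 0 ≤ s.re) :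
    IntegrableOn (fun x : ℝ => (x : ℂ) ^ m * kern β γ x * Complex.exp (-(s * x))) (Ioi 0) := by
  refine Integrable.mul_bdd (c := 1) (integrableOn_kern hβ m) (by fun_prop) ?_
  filter_upwards [ae_restrict_mem measurableSet_Ioi] with x hx
  exact norm_exp_neg_mul_le hs (le_of_lt hx)

/-- Since `2 sin(πx) e^{(2j+1)πix}` is `-i (e^{2πi(j+1)x} - e^{2πijx})`, the correction between `c`
and its conjugate is a difference of consecutive oscillatory moments. -/
lemma osc_telescope {b : ℝ} (hb : 0 < b) (m j : ℕ) :
    2 * (fermiLaplace m (b + π * Complex.I) (-((2 * j + 1) * π * Complex.I))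
        - fermiLaplace m (b - π * Complex.I) (-((2 * j + 1) * π * Complex.I)))
      = oscMoment m b j - oscMoment m b (j + 1) := by
  have hs : 0 ≤ (-((2 * j + 1) * π * Complex.I) : ℂ).re := by simp
  have hi1 := integrableOn_fermiLaplace m (c := b + π * Complex.I) (by simpa) hs
  have hi2 := integrableOn_fermiLaplace m (c := b - π * Complex.I) (by simpa) hs
  rw [fermiLaplace, fermiLaplace, ← integral_sub hi1 hi2, ← integral_const_mul, oscMoment,
    oscMoment, ← integral_sub (integrableOn_kern_mul_exp hb m (by simp))
      (integrableOn_kern_mul_exp hb m (by simp))]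
  refine integral_congr_ae (Eventually.of_forall fun x => ?_)
  simp only
  have h := fermi_sub (γ := π) hb x
  have e0 : Complex.exp (-(-((2 * j + 1) * π * Complex.I) * x))
      = Complex.exp (-((-(2 * π * j) * Complex.I) * x)) * Complex.exp (π * x * Complex.I) := by
    rw [← Complex.exp_add]; congr 1; ring
  have e1 : Complex.exp (-((-(2 * π * (j + 1 : ℕ)) * Complex.I) * x))
      = Complex.exp (-((-(2 * π * j) * Complex.I) * x)) *
        (Complex.exp (π * x * Complex.I) * Complex.exp (π * x * Complex.I)) := by
    rw [← Complex.exp_add, ← Complex.exp_add]; congr 1; push_cast; ring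
  have e2 : Complex.exp (-(π * x) * Complex.I) * Complex.exp (π * x * Complex.I) = 1 := by
    rw [← Complex.exp_add]; simp
  rw [e0, e1]
  rw [Complex.sin] at h
  generalize Complex.exp (-((-(2 * π * j) * Complex.I) * x)) = X at *
  generalize Complex.exp (π * x * Complex.I) = A at *
  generalize Complex.exp (-(π * x) * Complex.I) = B at *
  linear_combination 2 * (x : ℂ) ^ m * X * A * h
    + (x : ℂ) ^ m * (kern b π x) * X * e2
    - (x : ℂ) ^ m * (kern b π x) * X * (B - A) * A * Complex.I_sq

/-- Since `2 sinh(πx) e^{-(2j+1)πx} = e^{-2πjx} - e^{-2π(j+1)x}`, the hyperbolic-sine part of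
`fermi_add` is a difference of consecutive damped moments; the constant `1` integrates to
`m! / ((2j+1)π)^{m+1}`. -/
lemma damped_telescope (b : ℝ) (m j : ℕ) :
    2 * (fermiLaplace m (π + b * Complex.I) ((2 * j + 1) * π)
        + fermiLaplace m (π - b * Complex.I) ((2 * j + 1) * π))
      = 2 * (m.factorial / ((2 * j + 1) * π) ^ (m + 1))
        - (dampedMoment m b j - dampedMoment m b (j + 1)) := by
  have hpi := Real.pi_pos
  have hs : 0 < ((2 * j + 1) * π : ℂ).re := by
    have : ((2 * j + 1) * π : ℂ).re = (2 * j + 1) * π := by simp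
    rw [this]; positivity
  have hi1 := integrableOn_fermiLaplace m (c := π + b * Complex.I) (by simpa) hs.le
  have hi2 := integrableOn_fermiLaplace m (c := π - b * Complex.I) (by simpa) hs.le
  have hj : ∀ j : ℕ, 0 ≤ (2 * π * j : ℂ).re := by
    intro j
    have : (2 * π * j : ℂ).re = 2 * π * j := by simp
    rw [this]; positivity
  have hi3 : IntegrableOn (fun x : ℝ => (x : ℂ) ^ m * Complex.exp (-((2 * j + 1) * π * x))) (Ioi 0) := by
    refine integrableOn_pow_mul (u := fun x : ℝ => Complex.exp (-((2 * j + 1) * π * x)))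
      (C := 1) (by fun_prop) hs ?_ m
    intro x _
    rw [Complex.norm_exp, one_mul, Complex.neg_re, Complex.re_mul_ofReal]
  have hd := integrableOn_kern_mul_exp (γ := b) hpi m (hj j)
  have hd' := integrableOn_kern_mul_exp (γ := b) hpi m (hj (j + 1))
  have hdd : IntegrableOn (fun x : ℝ => (x : ℂ) ^ m * kern π b x * Complex.exp (-((2 * π * j) * x))
      - (x : ℂ) ^ m * kern π b x * Complex.exp (-((2 * π * (j + 1 : ℕ)) * x))) (Ioi 0) :=
    hd.sub hd'
  rw [← integral_pow_mul_exp hs, fermiLaplace, fermiLaplace, ← integral_add hi1 hi2,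
    ← integral_const_mul, dampedMoment, dampedMoment, ← integral_sub hd hd',
    ← integral_const_mul, ← integral_sub (hi3.const_mul 2) hdd]
  refine integral_congr_ae (Eventually.of_forall fun x => ?_)
  simp only
  have h := fermi_add (γ := b) hpi x
  have e0 : Complex.exp (-((2 * j + 1) * π * x))
      = Complex.exp (-((2 * π * j) * x)) * Complex.exp (-(π * x)) := by
    rw [← Complex.exp_add]; congr 1; ring
  have e1 : Complex.exp (-((2 * π * (j + 1 : ℕ)) * x))
      = Complex.exp (-((2 * π * j) * x)) * (Complex.exp (-(π * x)) * Complex.exp (-(π * x))) := by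
    rw [← Complex.exp_add, ← Complex.exp_add]; congr 1; push_cast; ring
  have e2 : Complex.exp (π * x) * Complex.exp (-(π * x)) = 1 := by
    rw [← Complex.exp_add]; simp
  rw [e0, e1]
  rw [Complex.sinh] at h
  generalize Complex.exp (-((2 * π * j) * x)) = X at *
  generalize Complex.exp (π * x) = A at *
  generalize Complex.exp (-(π * x)) = B at *
  linear_combination 2 * (x : ℂ) ^ m * X * B * h - (x : ℂ) ^ m * (kern π b x) * X * e2

/-- The Riemann–Lebesgue lemma. -/
lemma tendsto_oscMoment (m : ℕ) (b : ℝ) : Tendsto (oscMoment m b) atTop (𝓝 0) := by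
  have h := Real.tendsto_integral_exp_smul_cocompact
    ((Ioi (0 : ℝ)).indicator fun x : ℝ => (x : ℂ) ^ m * (kern b π x : ℂ))
  have hn : Tendsto (fun j : ℕ => -(j : ℝ)) atTop (cocompact ℝ) := by
    rw [_root_.cocompact_eq_atBot_atTop]
    exact (tendsto_neg_atTop_atBot.comp tendsto_natCast_atTop_atTop).mono_right le_sup_left
  refine (h.comp hn).congr (fun j => ?_)
  simp only [Function.comp_apply]
  rw [oscMoment, ← integral_indicator measurableSet_Ioi]
  refine integral_congr_ae (Eventually.of_forall fun x => ?_)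
  simp only
  by_cases hx : x ∈ Ioi (0 : ℝ)
  · rw [indicator_of_mem hx, indicator_of_mem hx, Circle.smul_def, Real.fourierChar_apply,
      smul_eq_mul, mul_comm]
    congr 2
    push_cast
    ring
  · rw [indicator_of_notMem hx, indicator_of_notMem hx, smul_zero]

lemma tendsto_dampedMoment (m : ℕ) (b : ℝ) : Tendsto (dampedMoment m b) atTop (𝓝 0) := by
  have hpi := Real.pi_pos
  have hcont := continuous_kern (γ := b) hpi
  have h := tendsto_integral_of_dominated_convergence (μ := volume.restrict (Ioi (0 : ℝ)))
    (F := fun (j : ℕ) (x : ℝ) => (x : ℂ) ^ m * kern π b x * Complex.exp (-((2 * π * j) * x)))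
    (f := fun _ => 0) (fun x : ℝ => ‖(x : ℂ) ^ m * (kern π b x : ℂ)‖)
    (fun j => by fun_prop) (integrableOn_kern hpi m).norm ?_ ?_
  · rw [integral_zero] at h
    exact h
  · intro j
    filter_upwards [ae_restrict_mem measurableSet_Ioi] with x hx
    rw [norm_mul]
    refine mul_le_of_le_one_right (norm_nonneg _) (norm_exp_neg_mul_le ?_ (le_of_lt hx))
    have : (2 * π * j : ℂ).re = 2 * π * j := by simp
    rw [this]; positivity
  · filter_upwards [ae_restrict_mem measurableSet_Ioi] with x hx
    have hx0 : (0 : ℝ) < x := hx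
    have h1 := (tendsto_exp_neg_mul (c := ((2 * π * x : ℝ) : ℂ))
      (by rw [Complex.ofReal_re]; positivity)).comp tendsto_natCast_atTop_atTop
    have h2 := h1.const_mul ((x : ℂ) ^ m * (kern π b x : ℂ))
    rw [mul_zero] at h2
    refine h2.congr (fun j => ?_)
    simp only [Function.comp_apply]
    congr 2
    push_cast
    ring

/-- The odd part of Euler's evaluation of `ζ(2p)`. -/
lemma hasSum_odd {p : ℕ} (hp : 1 ≤ p) :
    HasSum (fun j : ℕ => 1 / (2 * (j : ℝ) + 1) ^ (2 * p))
      ((-1) ^ (p + 1) * (2 ^ (2 * p) - 1) * π ^ (2 * p) * (bernoulli (2 * p) : ℝ)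
        / (2 * (2 * p).factorial)) := by
  have h := hasSum_zeta_nat (k := p) (by omega)
  have heven := h.mul_left (1 / 2 ^ (2 * p))
  have hs : Summable fun j : ℕ => 1 / (2 * (j : ℝ) + 1) ^ (2 * p) := by
    have hinj : Function.Injective fun j : ℕ => 2 * j + 1 := fun a b h => by
      simp only at h; omega
    refine (h.summable.comp_injective hinj).congr (fun j => ?_)
    simp
  have hall := HasSum.even_add_odd (f := fun n : ℕ => 1 / (n : ℝ) ^ (2 * p))
    (heven.congr_fun (fun j => by push_cast; rw [mul_pow, div_mul_div_comm, one_mul]))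
    (hs.hasSum.congr_fun (fun j => by push_cast; rfl))
  have := h.unique hall
  have hval : ∑' j : ℕ, 1 / (2 * (j : ℝ) + 1) ^ (2 * p) =
      ((-1) ^ (p + 1) * (2 ^ (2 * p) - 1) * π ^ (2 * p) * (bernoulli (2 * p) : ℝ)
        / (2 * (2 * p).factorial)) := by
    rw [← sub_eq_iff_eq_add'] at this
    rw [← this]
    have e : (2 : ℝ) ^ (2 * p) = 2 * 2 ^ (2 * p - 1) := by
      rw [← pow_succ']; congr 1; omega
    have h2 : (2 : ℝ) ^ (2 * p - 1) ≠ 0 := by positivity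
    have h3 : ((2 * p).factorial : ℝ) ≠ 0 := by positivity
    rw [e]
    field_simp
  rw [← hval]
  exact hs.hasSum

/-! ### The moment identity -/

/-- The pair of Poisson terms at the frequencies `±(2j+1)π`. Write `A` for the term at `+(2j+1)π`.
Rotation turns `A + conj A` into the sum treated by `damped_telescope`, while the term at
`-(2j+1)π` minus `conj A` is the difference treated by `osc_telescope`. -/
lemma pair_eq {p : ℕ} (hp : 1 ≤ p) {b : ℝ} (hb : 0 < b) (j : ℕ) :
    2 * (fermiLaplace (2 * p - 1) (b + π * Complex.I) ((2 * j + 1) * π * Complex.I)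
        + fermiLaplace (2 * p - 1) (b + π * Complex.I) (-((2 * j + 1) * π * Complex.I)))
      = (oscMoment (2 * p - 1) b j - oscMoment (2 * p - 1) b (j + 1))
        + (-1) ^ p * (2 * ((2 * p - 1).factorial / ((2 * j + 1) * π) ^ (2 * p))
          - (dampedMoment (2 * p - 1) b j - dampedMoment (2 * p - 1) b (j + 1))) := by
  have hpi := Real.pi_pos
  have h1 := osc_telescope hb (2 * p - 1) j
  have h2 := damped_telescope b (2 * p - 1) j
  rw [show 2 * p - 1 + 1 = 2 * p by omega] at h2
  have him : ((2 * j + 1) * π * Complex.I : ℂ).im = (2 * j + 1) * π := by simp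
  have h3 : fermiLaplace (2 * p - 1) (b + π * Complex.I) ((2 * j + 1) * π * Complex.I)
      = (-1) ^ p * fermiLaplace (2 * p - 1) (π - b * Complex.I) ((2 * j + 1) * π) := by
    rw [fermiLaplace_rotate hp (by simpa) (by simpa) (by simp) (by rw [him]; positivity)]
    congr 2
    · linear_combination (-(π : ℂ)) * Complex.I_sq
    · linear_combination (-((2 * j + 1) * π : ℂ)) * Complex.I_sq
  -- Conjugate of `h3`, used to remove the conjugate of the Poisson term.
  have h4 := congrArg (starRingEnd ℂ) h3
  simp only [conj_fermiLaplace, map_add, map_mul, map_sub, map_pow, map_neg, map_one, Complex.conj_I,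
    Complex.conj_ofReal, Complex.conj_natCast, map_ofNat] at h4
  simp only [mul_neg, sub_neg_eq_add, ← sub_eq_add_neg] at h4
  rw [h3]
  linear_combination h1 + (-1) ^ p * h2 + 2 * h4

/-- Summation of `pair_eq` over `j`: both telescoping sums reduce to their `j = 0` terms, and the
remaining sum over odd integers is evaluated by `hasSum_odd`. -/
lemma moment_identity {p : ℕ} (hp : 1 ≤ p) {b : ℝ} (hb : 0 < b) :
    oscMoment (2 * p - 1) b 0 - (-1) ^ p * dampedMoment (2 * p - 1) b 0
      = (((2 ^ (2 * p) - 1) * (bernoulli (2 * p) : ℝ) / (2 * p) : ℝ) : ℂ)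
        + 2 * ∑' k : ℕ, ((k : ℂ) + 1) ^ (2 * p - 1) * (-1) ^ (k + 1)
          * fermi (b + π * Complex.I) (k + 1) := by
  have hP := (hasSum_poisson (m := 2 * p - 1) (c := b + π * Complex.I) (by omega)
    (by simpa)).nat_add_neg_add_one
  set T := ∑' k : ℕ, ((k : ℂ) + 1) ^ (2 * p - 1) * (-1) ^ (k + 1)
          * fermi (b + π * Complex.I) (k + 1) with hT
  set Z : ℝ := (-1) ^ (p + 1) * (2 ^ (2 * p) - 1) * π ^ (2 * p) * (bernoulli (2 * p) : ℝ)
        / (2 * (2 * p).factorial) with hZ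
  have hO : HasSum (fun j : ℕ => ((1 / (2 * (j : ℝ) + 1) ^ (2 * p) : ℝ) : ℂ)) (Z : ℂ) :=
    Complex.hasSum_ofReal.mpr (hasSum_odd hp)
  have h2 := (hO.mul_left ((-1) ^ p * (2 * ((2 * p - 1).factorial / (π : ℂ) ^ (2 * p))))).tendsto_sum_nat
  have h1 := (hP.mul_left 2).tendsto_sum_nat
  have hg := tendsto_oscMoment (2 * p - 1) b
  have hh := tendsto_dampedMoment (2 * p - 1) b
  have h3 : Tendsto (fun n : ℕ => (oscMoment (2 * p - 1) b 0 - oscMoment (2 * p - 1) b n)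
      - (-1) ^ p * (dampedMoment (2 * p - 1) b 0 - dampedMoment (2 * p - 1) b n)) atTop
      (𝓝 ((oscMoment (2 * p - 1) b 0 - 0) - (-1) ^ p * (dampedMoment (2 * p - 1) b 0 - 0))) :=
    (tendsto_const_nhds.sub hg).sub ((tendsto_const_nhds.sub hh).const_mul _)
  have h4 := tendsto_nhds_unique (h1.congr (fun n => ?_)) (h3.add h2)
  · rw [sub_zero, sub_zero] at h4
    have hfac : ((2 * p).factorial : ℝ) = 2 * p * (2 * p - 1).factorial := by
      have := Nat.mul_factorial_pred (n := 2 * p) (by omega)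
      rw [← this]; push_cast; ring
    have hz : ((-1) ^ p * (2 * ((2 * p - 1).factorial / (π : ℝ) ^ (2 * p)))) * Z
        = - ((2 ^ (2 * p) - 1) * (bernoulli (2 * p) : ℝ) / (2 * p)) := by
      rw [hZ, hfac]
      have hp0 : (p : ℝ) ≠ 0 := by exact_mod_cast (by omega : p ≠ 0)
      have hf0 : ((2 * p - 1).factorial : ℝ) ≠ 0 := by positivity
      have hpi := Real.pi_ne_zero
      have hs : ((-1 : ℝ) ^ p) * (-1) ^ p = 1 := by
        rw [← mul_pow]; simp
      field_simp
      rw [pow_succ]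
      linear_combination (-1 : ℝ) * (2 ^ (2 * p) - 1) * (bernoulli (2 * p) : ℝ) * hs
    have hz' := congrArg (fun r : ℝ => (r : ℂ)) hz
    push_cast at hz' h4 ⊢
    linear_combination -h4 - hz'
  · rw [← Finset.sum_range_sub', ← Finset.sum_range_sub', Finset.mul_sum, ← Finset.sum_sub_distrib,
      ← Finset.sum_add_distrib]
    refine Finset.sum_congr rfl fun j _ => ?_
    have h := pair_eq hp hb j
    have e1 : ((((2 * ((j : ℤ) : ℝ) + 1) * π : ℝ) : ℂ)) * Complex.I
        = (2 * j + 1) * π * Complex.I := by push_cast; ring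
    have e2 : ((((2 * ((-((j : ℤ) + 1) : ℤ) : ℝ) + 1) * π : ℝ) : ℂ)) * Complex.I
        = -((2 * j + 1) * π * Complex.I) := by push_cast; ring
    rw [e1, e2, h]
    push_cast
    rw [mul_pow]
    have hpi : (π : ℂ) ≠ 0 := by exact_mod_cast Real.pi_ne_zero
    have hj0 : (2 * j + 1 : ℂ) ≠ 0 := by exact_mod_cast (by omega : 2 * j + 1 ≠ 0)
    field_simp
    ring

/-! ### Real form, change of variables and positivity -/

lemma oscMoment_zero (m : ℕ) (b : ℝ) :
    oscMoment m b 0 = ((∫ x in Ioi (0 : ℝ), x ^ m * kern b π x : ℝ) : ℂ) := by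
  rw [oscMoment, ← integral_complex_ofReal]
  refine integral_congr_ae (Eventually.of_forall fun x => ?_)
  simp

lemma dampedMoment_zero (m : ℕ) (b : ℝ) :
    dampedMoment m b 0 = ((∫ x in Ioi (0 : ℝ), x ^ m * kern π b x : ℝ) : ℂ) := by
  rw [dampedMoment, ← integral_complex_ofReal]
  refine integral_congr_ae (Eventually.of_forall fun x => ?_)
  simp

/-- At integers `e^{(b+πi)n} = (-1)^n e^{bn}`, so the Fermi function becomes the Lambert term with
`q = e^{-b}`. -/
lemma fermi_at_nat {b : ℝ} (hb : 0 < b) (n : ℕ) :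
    (-1) ^ n * fermi (b + π * Complex.I) n
      = ((Real.exp (-b) ^ n / (1 + (-Real.exp (-b)) ^ n) : ℝ) : ℂ) := by
  have h1 := one_add_exp_ne_zero (c := b + π * Complex.I) (by simpa) n
  have e : Complex.exp ((b + π * Complex.I) * (n : ℝ)) = Complex.exp b ^ n * (-1) ^ n := by
    rw [← Complex.exp_pi_mul_I, ← mul_pow, ← Complex.exp_add, ← Complex.exp_nat_mul]
    congr 1; push_cast; ring
  have e2 : Complex.exp (-b) ^ n * Complex.exp b ^ n = 1 := by
    rw [← mul_pow, ← Complex.exp_add]; simp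
  have e3 : ((-1 : ℂ) ^ n) * (-1) ^ n = 1 := by
    rw [← mul_pow]; simp
  rw [e] at h1
  rw [fermi, e]
  push_cast
  rw [neg_pow (Complex.exp (-b))]
  generalize Complex.exp (-b) ^ n = Q at *
  generalize Complex.exp b ^ n = R at *
  generalize (-1 : ℂ) ^ n = S at *
  have h2 : 1 + S * Q ≠ 0 := by
    intro h
    apply h1
    linear_combination S * R * h - R * Q * e3 - e2
  rw [mul_one_div, div_eq_div_iff h1 h2]
  linear_combination Q * e3 - S * e2

lemma real_moment_identity {p : ℕ} (hp : 1 ≤ p) {b : ℝ} (hb : 0 < b) :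
    (∫ x in Ioi (0 : ℝ), x ^ (2 * p - 1) * kern b π x)
        - (-1) ^ p * ∫ x in Ioi (0 : ℝ), x ^ (2 * p - 1) * kern π b x
      = (2 ^ (2 * p) - 1) * (bernoulli (2 * p) : ℝ) / (2 * p)
        + 2 * ∑' n : ℕ, ((n : ℝ) + 1) ^ (2 * p - 1) * Real.exp (-b) ^ (n + 1)
          / (1 + (-Real.exp (-b)) ^ (n + 1)) := by
  have h := moment_identity hp hb
  rw [oscMoment_zero, dampedMoment_zero] at h
  have hT : ∑' k : ℕ, ((k : ℂ) + 1) ^ (2 * p - 1) * (-1) ^ (k + 1)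
          * fermi (b + π * Complex.I) (k + 1)
      = ((∑' n : ℕ, ((n : ℝ) + 1) ^ (2 * p - 1) * Real.exp (-b) ^ (n + 1)
          / (1 + (-Real.exp (-b)) ^ (n + 1)) : ℝ) : ℂ) := by
    rw [Complex.ofReal_tsum]
    refine tsum_congr fun k => ?_
    have := fermi_at_nat hb (k + 1)
    push_cast at this ⊢
    rw [mul_assoc, this, mul_div_assoc]
  rw [hT] at h
  exact_mod_cast h

/-- The substitution `x = (ay)²`. No integrability of `f` is needed, since both changes of
variables hold unconditionally for the Bochner integral. -/
lemma integral_sq_subst {a : ℝ} (ha : 0 < a) {p : ℕ} (hp : 1 ≤ p) (f : ℝ → ℝ) :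
    (1 / 2) * ∫ x in Ioi (0 : ℝ), x ^ (p - 1) * f (√x)
      = a ^ (2 * p) * ∫ y in Ioi (0 : ℝ), y ^ (2 * p - 1) * f (a * y) := by
  have h1 := integral_comp_rpow_Ioi_of_pos (g := fun x : ℝ => x ^ (p - 1) * f (√x))
    (p := 2) (by norm_num)
  have h2 := integral_comp_mul_left_Ioi (fun y : ℝ => y ^ (2 * p - 1) * f y) 0 ha
  rw [mul_zero] at h2
  have h3 : ∫ y in Ioi (0 : ℝ), (a * y) ^ (2 * p - 1) * f (a * y)
      = a ^ (2 * p - 1) * ∫ y in Ioi (0 : ℝ), y ^ (2 * p - 1) * f (a * y) := by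
    rw [← integral_const_mul]
    refine integral_congr_ae (Eventually.of_forall fun y => ?_)
    simp only
    ring
  have h4 : ∫ x in Ioi (0 : ℝ), (2 * x ^ ((2 : ℝ) - 1)) • ((x ^ (2 : ℝ)) ^ (p - 1) * f (√(x ^ (2 : ℝ))))
      = 2 * ∫ y in Ioi (0 : ℝ), y ^ (2 * p - 1) * f y := by
    rw [← integral_const_mul]
    refine setIntegral_congr_fun measurableSet_Ioi fun x hx => ?_
    have hx0 : (0 : ℝ) < x := hx
    have e1 : x ^ ((2 : ℝ) - 1) = x := by norm_num
    have e2 : x ^ (2 * p - 1) = x * (x ^ 2) ^ (p - 1) := by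
      rw [← pow_mul, ← pow_succ']; congr 1; omega
    simp only [smul_eq_mul]
    rw [e1, Real.rpow_two, Real.sqrt_sq hx0.le, e2]
    ring
  rw [← h1, h4]
  rw [h3, smul_eq_mul] at h2
  have e : a ^ (2 * p) = a * a ^ (2 * p - 1) := by
    rw [← pow_succ']; congr 1; omega
  rw [e, mul_assoc, h2]
  field_simp

lemma ellipticK_pos {k : ℝ} (hk0 : 0 ≤ k) (hk : k < 1) : 0 < ellipticK k := by
  have hpos : ∀ θ : ℝ, 0 < 1 - k ^ 2 * Real.sin θ ^ 2 := by
    intro θ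
    have h1 : k ^ 2 < 1 := by nlinarith
    have h2 := Real.sin_sq_le_one θ
    nlinarith [sq_nonneg (Real.sin θ), sq_nonneg k]
  refine intervalIntegral.intervalIntegral_pos_of_pos ?_ (fun θ => Real.rpow_pos_of_pos (hpos θ) _)
    (by positivity)
  refine Continuous.intervalIntegrable ?_ _ _
  exact Continuous.rpow_const (by fun_prop) (fun θ => Or.inl (hpos θ).ne')

end KuznetsovMoment

theorem Iplus_lambert_series (k : ℝ) (hk : k ∈ Set.Ioo (0 : ℝ) 1) (p : ℕ) (hp : 1 ≤ p) :
    Iplus k (p - 1) =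
      (π / ellipticK k) ^ (2 * p) *
        (-(1 / 2) * ((-((2 ^ (2 * p) - 1) * bernoulli (2 * p)) / p : ℚ) : ℝ) +
          2 * ∑' n : ℕ, ((n : ℝ) + 1) ^ (2 * p - 1) *
            Real.exp (-(π * ellipticK (Real.sqrt (1 - k ^ 2)) / ellipticK k)) ^ (n + 1) /
              (1 + (-Real.exp (-(π * ellipticK (Real.sqrt (1 - k ^ 2)) / ellipticK k))) ^ (n + 1))) := by
  obtain ⟨hk0, hk1⟩ := hk
  have hK : 0 < ellipticK k := KuznetsovMoment.ellipticK_pos hk0.le hk1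
  have hK' : 0 < ellipticK (Real.sqrt (1 - k ^ 2)) := by
    refine KuznetsovMoment.ellipticK_pos (Real.sqrt_nonneg _) ?_
    rw [Real.sqrt_lt' one_pos]
    nlinarith
  rw [Iplus]
  -- Only the positivity of `K` and `K'` matters from here on.
  generalize ellipticK k = K at *
  generalize ellipticK (Real.sqrt (1 - k ^ 2)) = K' at *
  have ha : 0 < π / K := div_pos Real.pi_pos hK
  have hb : 0 < π * K' / K := by positivity
  have e1 : ∀ y : ℝ, K * (π / K * y) = π * y := fun y => by field_simp
  have e2 : ∀ y : ℝ, K' * (π / K * y) = π * K' / K * y := fun y => by ring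
  have h1 := KuznetsovMoment.integral_sq_subst ha hp
    (fun t => 1 / (Real.cos (K * t) + Real.cosh (K' * t)))
  have h2 := KuznetsovMoment.integral_sq_subst ha hp
    (fun t => 1 / (Real.cosh (K * t) + Real.cos (K' * t)))
  have h := KuznetsovMoment.real_moment_identity hp hb
  simp only [e1, e2, mul_one_div] at h1 h2
  simp only [KuznetsovMoment.kern, mul_one_div] at h
  simp only [add_comm (Real.cos (π * _))] at h1
  have hs : (-1 : ℝ) ^ p = -(-1) ^ (p - 1) := by
    obtain ⟨r, rfl⟩ := Nat.exists_eq_add_of_le hp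
    rw [Nat.add_sub_cancel_left, pow_add]
    ring
  have hE : -(1 / 2) * ((-((2 ^ (2 * p) - 1) * bernoulli (2 * p)) / p : ℚ) : ℝ)
      = (2 ^ (2 * p) - 1) * (bernoulli (2 * p) : ℝ) / (2 * p) := by
    push_cast
    field_simp
  rw [hE, ← h, hs]
  linear_combination h1 + (-1) ^ (p - 1) * h2
end
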